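/- arXiv:1312.5401 — 2 statements merged into one kernel-verified Lean document; each statement's English description precedes it below -/
import Mathlib

section
/- Let M be a 3-connected matroid such that |E(M)| >= 4 and M is neither a wheel nor a whirl, and let (e_1, ..., e_n) be a fan of M. If X ⊆ {e_1, ..., e_n} is a 3-separating set of M with |X| >= 3, then there are integers 1 <= x < y <= n such that X = {e_x, e_{x+1}, ..., e_y}. -/
/-!
Let `F` be the fan and `lam` the connectivity function `λ_M`, which is submodular, and at least
`2` on every set that has at least two elements inside and two outside. Uncrossing consecutive
fan triples shows that every interval of `F` is 3-separating (`fan_lam`).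

Suppose that at least two elements lie outside `F` (`interval_of_two_outside`). If the set of
positions of `X` is not an interval, it has three successive members `i < j < k` that are not
consecutive integers. Uncrossing `X` with the interval from `i` to `k` gives
`lam M {e i, e j, e k} ≤ 2`, so this triple is a triangle or a triad (`TT_of_lam`). That is
impossible (`no_gap_triple`): either an end of the interval lies both in the closure and in the
coclosure of the rest of it, which yields a 2-separation, or the triple meets a fan triple of
the other kind in the single element `e j`, against orthogonality.

Suppose that at most one element lies outside `F`. If there is one, appending it gives a longer
fan (`fan_extend`), so it may be assumed that `F` is the whole ground set. The two triples that
wrap around the end of `F` have intervals of `F` as complements, so they are triangles or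
triads, and orthogonality forces `F` to have even length and the alternation to continue
cyclically (`fan_cyclic`). A matroid covered by such a cyclic chain is a wheel or a whirl
(`wheel_or_whirl`): orthogonality with the triads shows that each circuit contains the rim or
two spokes together with a rim arc between them, and the triangles make these sets dependent
(for the rim, after a spoke is added). So `M` would be a wheel or a whirl.

Lemmas whose names start with `TT` concern `TriOrTriad`.
-/

open Matroid Set

universe u

variable {α : Type u}

namespace PaperDefs

/-- Deletion of a set of elements from a matroid. -/
def mdel (M : Matroid α) (D : Set α) : Matroid α := M ↾ (M.E \ D)

/-- Contraction of a set of elements in a matroid. -/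
def mcon (M : Matroid α) (C : Set α) : Matroid α := (mdel M✶ C)✶

/-- A circuit: a minimal dependent set. -/
def IsCircuit (M : Matroid α) (C : Set α) : Prop :=
  M.Dep C ∧ ∀ X, X ⊂ C → M.Indep X

/-- A triangle: a 3-element circuit. -/
def IsTriangle (M : Matroid α) (T : Set α) : Prop :=
  IsCircuit M T ∧ T.encard = 3

/-- A triad: a 3-element cocircuit. -/
def IsTriad (M : Matroid α) (T : Set α) : Prop := IsTriangle M✶ T

/-- The (extended natural number) rank of a set in a matroid: the supremum of the
cardinalities of its independent subsets. -/
noncomputable def erk (M : Matroid α) (X : Set α) : ℕ∞ :=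
  ⨆ I ∈ {I : Set α | M.Indep I ∧ I ⊆ X}, I.encard

/-- Two elements are connected if they are equal or lie in a common circuit. -/
def ConnTo (M : Matroid α) (e f : α) : Prop :=
  (e = f ∧ e ∈ M.E) ∨ ∃ C, IsCircuit M C ∧ e ∈ C ∧ f ∈ C

/-- A matroid is connected if its ground set is nonempty and every two of its elements
are connected. -/
def Conn (M : Matroid α) : Prop :=
  M.E.Nonempty ∧ ∀ e ∈ M.E, ∀ f ∈ M.E, ConnTo M e f

/-- A 2-separation of a matroid: a partition `(X, Y)` of the ground set with both sides
of size at least two and `r(X) + r(Y) - r(M) ≤ 1`. -/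
def TwoSep (M : Matroid α) (X Y : Set α) : Prop :=
  X ∪ Y = M.E ∧ Disjoint X Y ∧ 2 ≤ X.encard ∧ 2 ≤ Y.encard ∧
    erk M X + erk M Y ≤ erk M M.E + 1

/-- A matroid is 3-connected if it is connected and has no 2-separation. -/
def ThreeConn (M : Matroid α) : Prop :=
  Conn M ∧ ∀ X Y, ¬ TwoSep M X Y

/-- A matroid is 3-connected up to series and parallel sets if it is connected and, for
every 2-separation `(X, Y)`, `min {r X, r Y} = 1` or `min {r✶ X, r✶ Y} = 1`. -/
def ThreeConnUpToSP (M : Matroid α) : Prop :=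
  Conn M ∧ ∀ X Y, TwoSep M X Y →
    min (erk M X) (erk M Y) = 1 ∨ min (erk M✶ X) (erk M✶ Y) = 1

/-- `N` is a minor of `M`: it is obtained from `M` by contracting a set `C` and deleting
a disjoint set `D`. -/
def IsMinor (N M : Matroid α) : Prop :=
  ∃ C D, C ⊆ M.E ∧ D ⊆ M.E ∧ Disjoint C D ∧ N = mdel (mcon M C) D

/-- `M` is isomorphic to `N`: there is a bijection between the ground sets under which
independence corresponds. -/
def IsoTo (M N : Matroid α) : Prop :=
  ∃ f : α → α, Set.BijOn f M.E N.E ∧ ∀ I, I ⊆ M.E → (M.Indep I ↔ N.Indep (f '' I))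

/-- The cyclic interval `{i, i+1, ..., j-1}` in `ZMod r`. -/
def cycArc (r : ℕ) (i j : ZMod r) : Set (ZMod r) :=
  {k | ∃ m : ℕ, m < (j - i).val ∧ k = i + (m : ZMod r)}

/-- `M` is (isomorphic to) a rank-`r` wheel for some `r ≥ 2`, i.e. the cycle matroid of
the wheel graph with `r` spokes: there is a labelling of the ground set by spokes `s i`
and rim elements `w i` so that the circuits of `M` are precisely the rim together with
the sets consisting of two spokes and the rim elements of one of the two arcs joining
them. -/
def IsWheel (M : Matroid α) : Prop :=
  ∃ r : ℕ, 2 ≤ r ∧ ∃ s w : ZMod r → α,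
    Function.Injective (Sum.elim s w) ∧
    M.E = Set.range s ∪ Set.range w ∧
    ∀ C, IsCircuit M C ↔
      (C = Set.range w ∨
        ∃ i j : ZMod r, i ≠ j ∧ C = {s i, s j} ∪ w '' cycArc r i j)

/-- `M` is (isomorphic to) a rank-`r` whirl for some `r ≥ 2`: obtained from the rank-`r`
wheel by relaxing the rim circuit; its circuits are the two-spokes-plus-arc circuits of
the wheel together with the sets consisting of the whole rim and a single spoke. -/
def IsWhirl (M : Matroid α) : Prop :=
  ∃ r : ℕ, 2 ≤ r ∧ ∃ s w : ZMod r → α,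
    Function.Injective (Sum.elim s w) ∧
    M.E = Set.range s ∪ Set.range w ∧
    ∀ C, IsCircuit M C ↔
      ((∃ i : ZMod r, C = insert (s i) (Set.range w)) ∨
        ∃ i j : ZMod r, i ≠ j ∧ C = {s i, s j} ∪ w '' cycArc r i j)

/-- A triangle if `b = true`, a triad if `b = false`. -/
def TriOrTriad (M : Matroid α) (b : Bool) (T : Set α) : Prop :=
  cond b (IsTriangle M T) (IsTriad M T)

/-- The alternation pattern of a fan, recorded as a list: position `i` (zero-based)
carries a spoke element iff `fanBool b i = true`, where `b` records whether the first
triple of the fan is a triangle. -/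
def fanBool (b : Bool) (i : ℕ) : Bool := if i % 2 = 0 then b else !b

/-- `F` is a fan of `M` whose first triple is a triangle if `b = true` (so that the
first element is a spoke element) and a triad if `b = false`: a list of at least three
distinct elements of the ground set in which every three consecutive elements form
alternately triangles and triads. -/
def IsFanWith (M : Matroid α) (b : Bool) (F : List α) : Prop :=
  3 ≤ F.length ∧ F.Nodup ∧ (∀ x ∈ F, x ∈ M.E) ∧
  ∀ (l₁ : List α) (x y z : α) (l₂ : List α), F = l₁ ++ x :: y :: z :: l₂ →
    TriOrTriad M (fanBool b l₁.length) {x, y, z}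

/-- `F` is a fan of `M`. -/
def IsFan (M : Matroid α) (F : List α) : Prop := ∃ b, IsFanWith M b F

/-- `F` is consistent with `F'`: `F` is a (not necessarily contiguous) subsequence of
`F'` or of its reversal. -/
def Consistent (F F' : List α) : Prop := F.Sublist F' ∨ F.Sublist F'.reverse

/-- A finite family of lists is pairwise disjoint. -/
def PairwiseDisjointLists (𝓕 : Finset (List α)) : Prop :=
  ∀ F ∈ 𝓕, ∀ G ∈ 𝓕, F ≠ G → ∀ x ∈ F, x ∉ G

/-- `𝓕` is a covering family of `M'` relative to `N` and `FN`: a family of pairwise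
disjoint fans of `M'`, of the same size as `FN`, such that every fan of `FN` is
consistent with a member of `𝓕` and every element of `E(M') - E(N)` lies in a member
of `𝓕`. -/
def CoveringFamily (N : Matroid α) (FN : Finset (List α)) (M' : Matroid α)
    (𝓕 : Finset (List α)) : Prop :=
  (∀ F ∈ 𝓕, IsFan M' F) ∧ PairwiseDisjointLists 𝓕 ∧ 𝓕.card = FN.card ∧
  (∀ F ∈ FN, ∃ F' ∈ 𝓕, Consistent F F') ∧
  (∀ x ∈ M'.E \ N.E, ∃ F ∈ 𝓕, x ∈ F)

/-- `M` is obtained from `M'` by a fan-lengthening move on the fan `F₀` of `M'`,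
producing the fan `F` of `M`: either `M' = M \ e₁` where `e₁` is a terminal spoke
element of `F`, or `M' = M / e₁` where `e₁` is a terminal rim element of `F`, or
(when `F` has at least five elements) `M' = M / eᵢ \ eᵢ₊₁` for a rim element `eᵢ`
of `F` with `1 ≤ i ≤ n - 1`; in each case `M` and `M'` are 3-connected and `F₀` is
the corresponding shortened fan. -/
def FanLengthen (M' M : Matroid α) (F₀ F : List α) : Prop :=
  ThreeConn M ∧ 4 ≤ F.length ∧ IsFan M' F₀ ∧
  ∃ b, IsFanWith M b F ∧
    ((∃ e F', F = e :: F' ∧ b = true ∧ M' = mdel M {e} ∧ ThreeConn M' ∧ F₀ = F') ∨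
     (∃ e F', F = e :: F' ∧ b = false ∧ M' = mcon M {e} ∧ ThreeConn M' ∧ F₀ = F') ∨
     (5 ≤ F.length ∧ ∃ (l₁ : List α) (x y : α) (l₂ : List α),
        F = l₁ ++ x :: y :: l₂ ∧ fanBool b l₁.length = false ∧
        M' = mdel (mcon M {x}) {y} ∧ ThreeConn M' ∧ F₀ = l₁ ++ l₂))

/-- The fan-extensions of `N` relative to the family `FN` of fans of `N`: the smallest
collection of matroids containing `N` and closed under fan-lengthening moves performed
on fans belonging to covering families. -/
inductive FanExt (N : Matroid α) (FN : Finset (List α)) : Matroid α → Prop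
  | base : FanExt N FN N
  | step (M' M : Matroid α) (𝓕 : Finset (List α)) (F₀ F : List α) :
      FanExt N FN M' → CoveringFamily N FN M' 𝓕 → F₀ ∈ 𝓕 →
      FanLengthen M' M F₀ F → FanExt N FN M

/-- The covering family `𝓕` of `M` admits a fan-shortening move: there are a matroid
`M'` having `N` as a minor and a fan `F₀` of `M'` such that `M` is obtained from `M'`
by a fan-lengthening move on `F₀` producing a fan that belongs to `𝓕`. -/
def AdmitsFanShortening (N M : Matroid α) (𝓕 : Finset (List α)) : Prop :=
  ∃ (M' : Matroid α) (F₀ F : List α), IsMinor N M' ∧ F ∈ 𝓕 ∧ FanLengthen M' M F₀ F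

/-- The alternation pattern of a fan presented as a function with one-based indices:
position `i` carries a spoke element iff `posBool b i = true`, where `b` records
whether the first triple of the fan is a triangle. -/
def posBool (b : Bool) (i : ℕ) : Bool := if i % 2 = 1 then b else !b

/-- `(e 1, ..., e n)` is a fan of `M` whose first triple is a triangle if `b = true`
(so that `e 1` is a spoke element) and a triad if `b = false`: at least three distinct
elements of the ground set in which every three consecutive elements form alternately
triangles and triads. -/
def IsFanFun (M : Matroid α) (b : Bool) (n : ℕ) (e : ℕ → α) : Prop :=
  3 ≤ n ∧ (∀ i j, 1 ≤ i → i ≤ n → 1 ≤ j → j ≤ n → e i = e j → i = j) ∧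
  (∀ i, 1 ≤ i → i ≤ n → e i ∈ M.E) ∧
  ∀ i, 1 ≤ i → i + 2 ≤ n → TriOrTriad M (posBool b i) {e i, e (i+1), e (i+2)}

/-- The set of elements of the fan `(e 1, ..., e n)`. -/
def fanSet (n : ℕ) (e : ℕ → α) : Set α := {a | ∃ i, 1 ≤ i ∧ i ≤ n ∧ a = e i}

/-- The set of rim elements of the fan `(e 1, ..., e n)` with alternation pattern `b`. -/
def rimSet (b : Bool) (n : ℕ) (e : ℕ → α) : Set α :=
  {a | ∃ i, 1 ≤ i ∧ i ≤ n ∧ posBool b i = false ∧ a = e i}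

/-- `M` is representable over the field `𝔽`. -/
def RepOver (M : Matroid α) (𝔽 : Type*) [Field 𝔽] : Prop :=
  ∃ f : α → (α → 𝔽),
    ∀ I : Set α, I ⊆ M.E → (M.Indep I ↔ LinearIndependent 𝔽 (fun x : I => f (x : α)))

/-- `M` has a minor isomorphic to a member of `𝓢`. -/
def HasSMinor (𝓢 : Set (Matroid α)) (M : Matroid α) : Prop :=
  ∃ S ∈ 𝓢, ∃ N, IsMinor N M ∧ IsoTo N S

/-- `M` is `𝓢`-fragile: for every element `e` of `M`, at least one of `M \ e` and
`M / e` has no `𝓢`-minor. -/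
def SFragile (𝓢 : Set (Matroid α)) (M : Matroid α) : Prop :=
  ∀ e ∈ M.E, ¬ HasSMinor 𝓢 (mdel M {e}) ∨ ¬ HasSMinor 𝓢 (mcon M {e})

end PaperDefs

open PaperDefs


namespace FanSep

/-! ### Rank and connectivity -/

/-- The rank of `X` as an integer. Meaningful for matroids of finite rank only: an infinite
rank is sent to `0`. -/
noncomputable def rkZ (M : Matroid α) (X : Set α) : ℤ := ((M.eRk X).toNat : ℤ)

/-- The connectivity function `λ_M(A) = r(A) + r(E - A) - r(M)`. -/
noncomputable def lam (M : Matroid α) (A : Set α) : ℤ :=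
  rkZ M A + rkZ M (M.E \ A) - rkZ M M.E

lemma erk_eq (M : Matroid α) (X : Set α) : erk M X = M.eRk X := by
  apply le_antisymm
  · simp only [erk, iSup_le_iff]
    intro I hI
    exact hI.1.encard_le_eRk_of_subset hI.2
  · obtain ⟨I, hIX, hI, hc⟩ := Matroid.le_eRk_iff.1 (le_refl (M.eRk X))
    rw [← hc]
    exact le_iSup₂_of_le I ⟨hI, hIX⟩ le_rfl

lemma circuit_iff (M : Matroid α) (C : Set α) : PaperDefs.IsCircuit M C ↔ M.IsCircuit C :=
  Matroid.isCircuit_iff_forall_ssubset.symm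

lemma coe_rkZ (M : Matroid α) [M.RankFinite] (X : Set α) :
    ((M.eRk X).toNat : ℕ∞) = M.eRk X :=
  ENat.natCast_toNat (Matroid.eRk_ne_top_iff.2 (M.isRkFinite_set X))

lemma rkZ_le_iff (M : Matroid α) [M.RankFinite] {X Y : Set α} :
    rkZ M X ≤ rkZ M Y ↔ M.eRk X ≤ M.eRk Y := by
  rw [← coe_rkZ M X, ← coe_rkZ M Y]
  simp [rkZ]

lemma rkZ_le_natCast_iff (M : Matroid α) [M.RankFinite] {X : Set α} {k : ℕ} :
    rkZ M X ≤ k ↔ M.eRk X ≤ k := by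
  rw [← coe_rkZ M X]
  simp [rkZ]

lemma rkZ_mono (M : Matroid α) [M.RankFinite] {X Y : Set α} (h : X ⊆ Y) :
    rkZ M X ≤ rkZ M Y :=
  (rkZ_le_iff M).2 (M.eRk_mono h)

lemma rkZ_submod (M : Matroid α) [M.RankFinite] (X Y : Set α) :
    rkZ M (X ∩ Y) + rkZ M (X ∪ Y) ≤ rkZ M X + rkZ M Y := by
  have h := M.eRk_inter_add_eRk_union_le X Y
  rw [← coe_rkZ M X, ← coe_rkZ M Y, ← coe_rkZ M (X ∩ Y), ← coe_rkZ M (X ∪ Y)] at h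
  simp only [rkZ]
  exact_mod_cast h

lemma rkZ_le_of_encard (M : Matroid α) [M.RankFinite] {X : Set α} {k : ℕ} (h : X.encard ≤ k) :
    rkZ M X ≤ k :=
  (rkZ_le_natCast_iff M).2 ((M.eRk_le_encard X).trans h)

lemma lam_submod (M : Matroid α) [M.RankFinite] (A B : Set α) :
    lam M (A ∩ B) + lam M (A ∪ B) ≤ lam M A + lam M B := by
  have h1 := rkZ_submod M A B
  have h2 := rkZ_submod M (M.E \ A) (M.E \ B)
  rw [← sdiff_inter, sdiff_inter_sdiff] at h2
  simp only [lam]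
  linarith

lemma lam_le_of_encard (M : Matroid α) [M.RankFinite] {A : Set α} {k : ℕ} (h : A.encard ≤ k) :
    lam M A ≤ k := by
  have h1 := rkZ_le_of_encard M h
  have h2 := rkZ_mono M (sdiff_subset : M.E \ A ⊆ M.E)
  simp only [lam]; linarith

lemma lam_le_of_encard_compl (M : Matroid α) [M.RankFinite] {A : Set α} {k : ℕ}
    (hA : A ⊆ M.E) (h : (M.E \ A).encard ≤ k) : lam M A ≤ k := by
  have h1 := rkZ_le_of_encard M h
  have h2 := rkZ_mono M hA
  simp only [lam]; linarith

lemma lam_compl (M : Matroid α) {A : Set α} (hA : A ⊆ M.E) : lam M (M.E \ A) = lam M A := by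
  simp only [lam, Set.sdiff_sdiff_cancel_left hA]; ring

/-- With the `ℕ∞`-valued rank, every partition of a matroid of infinite rank satisfies the
inequality in `TwoSep`, so 3-connectivity forces finite rank. -/
lemma rankFinite_of_threeConn {M : Matroid α} (h3 : ThreeConn M) (h4 : 4 ≤ M.E.encard) :
    M.RankFinite := by
  rw [← Matroid.eRank_ne_top_iff, Matroid.eRank_def]
  intro htop
  obtain ⟨A, hA, hA2⟩ := Set.exists_subset_encard_eq (k := 2) (s := M.E) (le_trans (by norm_num) h4)
  refine h3.2 A (M.E \ A) ⟨union_sdiff_cancel hA, disjoint_sdiff_right, hA2.ge, ?_, ?_⟩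
  · have := encard_sdiff_add_encard_of_subset hA
    rw [hA2] at this
    rw [← this] at h4
    have h4' : (2 : ℕ∞) + 2 ≤ (M.E \ A).encard + 2 := le_trans (by norm_num) h4
    exact (ENat.add_le_add_iff_right (by simp)).1 h4'
  · simp [erk_eq, htop]

lemma two_le_lam {M : Matroid α} [M.RankFinite] (h3 : ThreeConn M) {A : Set α} (hA : A ⊆ M.E)
    (h1 : 2 ≤ A.encard) (h2 : 2 ≤ (M.E \ A).encard) : 2 ≤ lam M A := by
  have h := h3.2 A (M.E \ A)
  by_contra hlt
  refine h ⟨union_sdiff_cancel hA, disjoint_sdiff_right, h1, h2, ?_⟩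
  simp only [erk_eq]
  rw [← coe_rkZ M A, ← coe_rkZ M M.E, ← coe_rkZ M (M.E \ A)]
  simp only [lam, rkZ] at hlt
  norm_cast
  omega

/-! ### Triangles and triads -/

lemma encard_sdiff_elem {T : Set α} {x : α} (hc : T.encard = 3) (hx : x ∈ T) :
    (T \ {x}).encard = 2 := by
  rw [encard_sdiff_singleton_of_mem hx, hc]
  rfl

lemma triangle_iff (M : Matroid α) [M.RankFinite] {T : Set α} (hT : T ⊆ M.E)
    (h3 : T.encard = 3) :
    IsTriangle M T ↔ rkZ M T ≤ 2 ∧ ∀ x ∈ T, 2 ≤ rkZ M (T \ {x}) := by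
  have hfin : T.Finite := finite_of_encard_eq_coe h3
  have hcard : ∀ x ∈ T, (T \ {x}).encard = 2 := fun x hx => encard_sdiff_elem h3 hx
  rw [IsTriangle, circuit_iff, and_iff_left h3,
    Matroid.isCircuit_iff_dep_forall_sdiff_singleton_indep]
  refine and_congr ?_ (forall₂_congr fun x hx => ?_)
  · rw [← Matroid.eRk_lt_encard_iff_dep hT, h3, ← coe_rkZ]
    simp only [rkZ]
    norm_cast
    omega
  · rw [Matroid.indep_iff_eRk_eq_encard, hcard x hx]
    have h := rkZ_le_of_encard M (k := 2) (hcard x hx).le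
    rw [← coe_rkZ]
    simp only [rkZ] at *
    norm_cast at *
    omega

lemma triad_iff (M : Matroid α) [M.RankFinite] {T : Set α} (hT : T ⊆ M.E)
    (h3 : T.encard = 3) :
    IsTriad M T ↔ rkZ M (M.E \ T) + 1 ≤ rkZ M M.E ∧
      ∀ x ∈ T, rkZ M M.E ≤ rkZ M (M.E \ (T \ {x})) := by
  rw [IsTriad, IsTriangle, circuit_iff, and_iff_left h3,
    Matroid.isCircuit_iff_dep_forall_sdiff_singleton_indep]
  refine and_congr ?_ (forall₂_congr fun x hx => ?_)
  · rw [← Matroid.not_indep_iff (by simpa using hT), ← Matroid.coindep_def,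
      Matroid.coindep_iff_compl_spanning hT, Matroid.spanning_iff_eRk_le sdiff_subset,
      Matroid.eRank_def, ← rkZ_le_iff]
    omega
  · rw [← Matroid.coindep_def, Matroid.coindep_iff_compl_spanning (sdiff_subset.trans hT),
      Matroid.spanning_iff_eRk_le sdiff_subset, Matroid.eRank_def, ← rkZ_le_iff]

lemma TT_subset {M : Matroid α} {t : Bool} {T : Set α} (h : TriOrTriad M t T) : T ⊆ M.E := by
  cases t
  · exact ((circuit_iff _ _).1 h.1).subset_ground
  · exact ((circuit_iff _ _).1 h.1).subset_ground

lemma TT_card {M : Matroid α} {t : Bool} {T : Set α} (h : TriOrTriad M t T) : T.encard = 3 := by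
  cases t <;> exact h.2

lemma TT_lam {M : Matroid α} [M.RankFinite] {t : Bool} {T : Set α} (h : TriOrTriad M t T) :
    lam M T ≤ 2 := by
  have hE := TT_subset h
  have hc := TT_card h
  have h1 := rkZ_mono M (sdiff_subset : M.E \ T ⊆ M.E)
  have h2 := rkZ_le_of_encard M (k := 3) hc.le
  cases t
  · have := ((triad_iff M hE hc).1 h).1
    simp only [lam]; push_cast at h2; linarith
  · have := ((triangle_iff M hE hc).1 h).1
    simp only [lam]; linarith

/-- Orthogonality: a triangle and a triad do not meet in exactly one element. -/
lemma TT_orth {M : Matroid α} {t : Bool} {T₁ T₂ : Set α} {x : α} (h1 : TriOrTriad M t T₁)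
    (h2 : TriOrTriad M (!t) T₂) : T₁ ∩ T₂ ≠ {x} := by
  cases t
  · rw [inter_comm]
    exact ((circuit_iff _ _).1 h2.1).inter_isCocircuit_ne_singleton ((circuit_iff _ _).1 h1.1)
  · exact ((circuit_iff _ _).1 h1.1).inter_isCocircuit_ne_singleton ((circuit_iff _ _).1 h2.1)

/-- An element that lies in a triangle and in a triad inside `insert x A` is in the closure and
in the coclosure of `A`, so adding it to `A` lowers the connectivity. -/
lemma lam_drop {M : Matroid α} [M.RankFinite] {t : Bool} {T₁ T₂ A : Set α} {x : α}
    (h1 : TriOrTriad M t T₁) (h2 : TriOrTriad M (!t) T₂) (hx1 : x ∈ T₁) (hx2 : x ∈ T₂)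
    (hT1 : T₁ ⊆ insert x A) (hT2 : T₂ ⊆ insert x A) (hxA : x ∉ A) :
    lam M (insert x A) + 1 ≤ lam M A := by
  wlog ht : t = true generalizing t T₁ T₂
  · have htf : t = false := by simpa using ht
    subst htf
    exact this h2 h1 hx2 hx1 hT2 hT1 rfl
  subst ht
  have hxE : x ∈ M.E := TT_subset h1 hx1
  have e1 : rkZ M (insert x A) ≤ rkZ M A := by
    rw [rkZ_le_iff]
    have hcl : x ∈ M.closure A := by
      refine M.closure_subset_closure ?_
        (((circuit_iff _ _).1 h1.1).mem_closure_sdiff_singleton_of_mem hx1)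
      intro y hy
      exact (hT1 hy.1).resolve_left hy.2
    rw [← M.eRk_closure_eq (insert x A), Matroid.closure_insert_eq_of_mem_closure hcl,
      M.eRk_closure_eq]
  obtain ⟨k1, k2⟩ := (triad_iff M (TT_subset h2) (TT_card h2)).1 h2
  have k2 := k2 x hx2
  have sm := rkZ_submod M (M.E \ A) (M.E \ T₂)
  have hi : (M.E \ A) ∩ (M.E \ T₂) = M.E \ insert x A := by
    ext y
    constructor
    · rintro ⟨⟨a, b⟩, c, d⟩
      refine ⟨a, ?_⟩
      rintro (rfl | h)
      · exact d hx2
      · exact b h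
    · rintro ⟨a, b⟩
      exact ⟨⟨a, fun h => b (.inr h)⟩, a, fun h => b (hT2 h)⟩
  have hu : (M.E \ A) ∪ (M.E \ T₂) = M.E \ (T₂ \ {x}) := by
    ext y
    constructor
    · rintro (⟨a, b⟩ | ⟨a, b⟩)
      · exact ⟨a, fun h => b ((hT2 h.1).resolve_left h.2)⟩
      · exact ⟨a, fun h => b h.1⟩
    · rintro ⟨a, b⟩
      by_cases hy : y = x
      · subst hy; exact .inl ⟨a, hxA⟩
      · exact .inr ⟨a, fun h => b ⟨h, hy⟩⟩
  rw [hi, hu] at sm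
  simp only [lam]
  linarith

/-- A 3-element set with `λ ≤ 2` is a triangle or a triad, and both if `λ ≤ 1`. -/
lemma TT_of_lam {M : Matroid α} [M.RankFinite] (h3 : ThreeConn M) (h4 : 4 ≤ M.E.encard)
    {T : Set α} (hT : T ⊆ M.E) (hc : T.encard = 3) :
    (lam M T ≤ 2 → ∃ t, TriOrTriad M t T) ∧ (lam M T ≤ 1 → ∀ t, TriOrTriad M t T) := by
  have hcard : ∀ x ∈ T, (T \ {x}).encard = 2 := fun x hx => encard_sdiff_elem hc hx
  have hpair : ∀ x ∈ T, 2 ≤ rkZ M (T \ {x}) ∧ rkZ M M.E ≤ rkZ M (M.E \ (T \ {x})) := by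
    intro x hx
    have hs : T \ {x} ⊆ M.E := sdiff_subset.trans hT
    have hl := two_le_lam h3 hs (hcard x hx).ge (by
      have := encard_sdiff_add_encard_of_subset hs
      rw [hcard x hx] at this
      rw [← this] at h4
      have h4' : (2 : ℕ∞) + 2 ≤ (M.E \ (T \ {x})).encard + 2 := le_trans (by norm_num) h4
      exact (ENat.add_le_add_iff_right (by simp)).1 h4')
    have a := rkZ_mono M (sdiff_subset : M.E \ (T \ {x}) ⊆ M.E)
    have b := rkZ_le_of_encard M (k := 2) (hcard x hx).le
    simp only [lam] at hl
    push_cast at b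
    constructor <;> linarith
  have hne : T.Nonempty := by
    rw [← encard_ne_zero, hc]; norm_num
  obtain ⟨x, hx⟩ := hne
  have q1 : 2 ≤ rkZ M T := (hpair x hx).1.trans (rkZ_mono M sdiff_subset)
  have q2 : rkZ M M.E ≤ rkZ M (M.E \ T) + 1 := by
    have h := rkZ_submod M (M.E \ T) {x}
    have e1 : (M.E \ T) ∪ {x} = M.E \ (T \ {x}) := by
      ext y
      simp only [mem_union, mem_sdiff, mem_singleton_iff, not_and, not_not]
      constructor
      · rintro (h | rfl)
        · exact ⟨h.1, fun h' => absurd h' h.2⟩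
        · exact ⟨hT hx, fun _ => rfl⟩
      · rintro ⟨a, b⟩
        by_cases hy : y ∈ T
        · exact .inr (b hy)
        · exact .inl ⟨a, hy⟩
    rw [e1] at h
    have h0 : 0 ≤ rkZ M ((M.E \ T) ∩ {x}) := by simp [rkZ]
    have h1 := rkZ_le_of_encard M (k := 1) (encard_singleton x).le
    have := (hpair x hx).2
    push_cast at h1
    linarith
  have tri : rkZ M T ≤ 2 → TriOrTriad M true T := fun h =>
    (triangle_iff M hT hc).2 ⟨h, fun x hx => (hpair x hx).1⟩
  have trd : rkZ M (M.E \ T) + 1 ≤ rkZ M M.E → TriOrTriad M false T := fun h =>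
    (triad_iff M hT hc).2 ⟨h, fun x hx => (hpair x hx).2⟩
  constructor
  · intro hl
    by_cases h : rkZ M T ≤ 2
    · exact ⟨true, tri h⟩
    · refine ⟨false, trd ?_⟩
      simp only [lam] at hl
      linarith
  · intro hl t
    simp only [lam] at hl
    cases t
    · exact trd (by linarith)
    · exact tri (by linarith)

end FanSep

namespace FanSep

/-! ### Intervals of a fan -/

lemma two_le_encard {S : Set α} {x y : α} (hx : x ∈ S) (hy : y ∈ S) (h : x ≠ y) :
    2 ≤ S.encard := by
  rw [← encard_pair h]
  exact encard_le_encard (by rintro z (rfl | rfl) <;> assumption)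

lemma two_le_compl {M : Matroid α} (h4 : 4 ≤ M.E.encard) {A : Set α} (hA : A.encard ≤ 2) :
    2 ≤ (M.E \ A).encard := by
  have h := encard_le_encard_sdiff_add_encard M.E A
  have h5 : (2 : ℕ∞) + 2 ≤ (M.E \ A).encard + 2 :=
    le_trans (by norm_num) (h4.trans (h.trans (add_le_add le_rfl hA)))
  exact (ENat.add_le_add_iff_right (by simp)).1 h5

section Fan

variable {M : Matroid α} {b : Bool} {n : ℕ} {e : ℕ → α}

lemma iv_subset (hf : IsFanFun M b n e) {x y : ℕ} (hx : 1 ≤ x) (hy : y ≤ n) :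
    e '' Icc x y ⊆ M.E := by
  rintro _ ⟨i, hi, rfl⟩
  exact hf.2.2.1 i (hx.trans hi.1) (hi.2.trans hy)

lemma mem_iv (hf : IsFanFun M b n e) {x y i : ℕ} (hx : 1 ≤ x) (hy : y ≤ n) (hi : 1 ≤ i)
    (hi' : i ≤ n) : e i ∈ e '' Icc x y ↔ x ≤ i ∧ i ≤ y := by
  constructor
  · rintro ⟨j, hj, hji⟩
    have : j = i := hf.2.1 j i (hx.trans hj.1) (hj.2.trans hy) hi hi' hji
    exact this ▸ hj
  · intro h
    exact ⟨i, h, rfl⟩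

lemma fan_ne (hf : IsFanFun M b n e) {i j : ℕ} (hi : 1 ≤ i) (hi' : i ≤ n) (hj : 1 ≤ j)
    (hj' : j ≤ n) (h : i ≠ j) : e i ≠ e j :=
  fun h' => h (hf.2.1 i j hi hi' hj hj' h')

lemma encard_iv_le (x y : ℕ) : (e '' Icc x y).encard ≤ ((y + 1 - x : ℕ) : ℕ∞) := by
  refine (encard_image_le e _).trans ?_
  rw [← Finset.coe_Icc, encard_coe_eq_coe_finsetCard, Nat.card_Icc]

lemma two_le_pair [M.RankFinite] (h3 : ThreeConn M) (h4 : 4 ≤ M.E.encard) {x y : α}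
    (hx : x ∈ M.E) (hy : y ∈ M.E) (h : x ≠ y) : 2 ≤ lam M {x, y} := by
  apply two_le_lam h3
  · rintro z (rfl | rfl) <;> assumption
  · rw [encard_pair h]
  · exact two_le_compl h4 (encard_pair h).le

/-- Every interval of a fan is 3-separating. -/
lemma fan_lam [M.RankFinite] (h3 : ThreeConn M) (h4 : 4 ≤ M.E.encard)
    (hf : IsFanFun M b n e) {x : ℕ} (hx : 1 ≤ x) :
    ∀ {y : ℕ}, y ≤ n → lam M (e '' Icc x y) ≤ 2 := by
  intro y
  induction y with
  | zero =>
    intro _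
    exact lam_le_of_encard M (k := 2) ((encard_iv_le x 0).trans (by
      exact_mod_cast (by omega : 0 + 1 - x ≤ 2)))
  | succ y ih =>
    intro hy
    by_cases hs : y + 1 ≤ x + 1
    · exact lam_le_of_encard M (k := 2) ((encard_iv_le x (y + 1)).trans (by
        exact_mod_cast (by omega : y + 1 + 1 - x ≤ 2)))
    obtain ⟨z, rfl⟩ : ∃ z, y = z + 1 := ⟨y - 1, by omega⟩
    have hT := hf.2.2.2 z (by omega) (by omega)
    have sm := lam_submod M (e '' Icc x (z + 1)) {e z, e (z + 1), e (z + 2)}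
    have hn := fan_ne hf (i := z) (j := z + 1) (by omega) (by omega) (by omega) (by omega)
      (by omega)
    have hi : e '' Icc x (z + 1) ∩ {e z, e (z + 1), e (z + 2)} = {e z, e (z + 1)} := by
      ext a
      constructor
      · rintro ⟨h, (rfl | rfl | rfl)⟩
        · simp
        · simp
        · rw [mem_iv hf hx (by omega) (by omega) (by omega)] at h
          omega
      · rintro (rfl | rfl)
        · exact ⟨⟨z, ⟨by omega, by omega⟩, rfl⟩, by simp⟩
        · exact ⟨⟨z + 1, ⟨by omega, by omega⟩, rfl⟩, by simp⟩
    have hu : e '' Icc x (z + 1) ∪ {e z, e (z + 1), e (z + 2)} = e '' Icc x (z + 1 + 1) := by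
      ext a
      constructor
      · rintro (⟨i, hi, rfl⟩ | rfl | rfl | rfl)
        · exact ⟨i, ⟨hi.1, by have := hi.2; omega⟩, rfl⟩
        · exact ⟨z, ⟨by omega, by omega⟩, rfl⟩
        · exact ⟨z + 1, ⟨by omega, by omega⟩, rfl⟩
        · exact ⟨z + 2, ⟨by omega, by omega⟩, rfl⟩
      · rintro ⟨i, ⟨h1, h2⟩, rfl⟩
        by_cases h : i = z + 2
        · subst h; simp
        · exact .inl ⟨i, ⟨h1, by omega⟩, rfl⟩
    have h2 := two_le_pair h3 h4 (hf.2.2.1 z (by omega) (by omega))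
      (hf.2.2.1 (z + 1) (by omega) (by omega)) hn
    rw [hi, hu] at sm
    have := ih (by omega)
    have := TT_lam hT
    linarith

/-- No triangle or triad consists of three non-consecutive elements of a fan if at least two
elements lie outside the interval that they span. If an end of that interval lies in a fan
triple of the other kind, then that end is in the closure and the coclosure of the rest of the
interval, which gives a 2-separation. Otherwise the middle element lies in a fan triple
of the other kind that avoids both ends, contradicting orthogonality. -/
lemma no_gap_triple [M.RankFinite] (h3 : ThreeConn M) (h4 : 4 ≤ M.E.encard)
    (hf : IsFanFun M b n e) {i j k : ℕ} (hi : 1 ≤ i) (hij : i < j) (hjk : j < k) (hk : k ≤ n)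
    (hgap : i + 2 < k) (hco : 2 ≤ (M.E \ e '' Icc i k).encard) {t : Bool}
    (hT : TriOrTriad M t {e i, e j, e k}) : False := by
  have hlow : 2 ≤ lam M (e '' Icc i k) := by
    apply two_le_lam h3 (iv_subset hf hi hk) _ hco
    exact two_le_encard ⟨i, ⟨le_rfl, by omega⟩, rfl⟩ ⟨j, ⟨by omega, by omega⟩, rfl⟩
      (fan_ne hf hi (by omega) (by omega) (by omega) (by omega))
  have key : ∀ p, i ≤ p → p + 2 ≤ k → posBool b p = !t →
      TriOrTriad M (!t) {e p, e (p + 1), e (p + 2)} := by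
    intro p h1 h2 h
    rw [← h]
    exact hf.2.2.2 p (by omega) (by omega)
  have hti : posBool b i = t := by
    by_contra hne
    have h' : posBool b i = !t := by
      revert hne; cases posBool b i <;> cases t <;> simp
    have hins : insert (e i) (e '' Icc (i + 1) k) = e '' Icc i k := by
      rw [← image_insert_eq]
      congr 1
      ext m; simp only [mem_insert_iff, mem_Icc]; omega
    have := lam_drop (A := e '' Icc (i + 1) k) (x := e i) hT (key i le_rfl (by omega) h')
      (by simp) (by simp)
      (by
        rw [hins]
        rintro _ (rfl | rfl | rfl)
        · exact ⟨i, ⟨by omega, by omega⟩, rfl⟩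
        · exact ⟨j, ⟨by omega, by omega⟩, rfl⟩
        · exact ⟨k, ⟨by omega, by omega⟩, rfl⟩)
      (by
        rw [hins]
        rintro _ (rfl | rfl | rfl)
        · exact ⟨i, ⟨by omega, by omega⟩, rfl⟩
        · exact ⟨i + 1, ⟨by omega, by omega⟩, rfl⟩
        · exact ⟨i + 2, ⟨by omega, by omega⟩, rfl⟩)
      (by rw [mem_iv hf (by omega) hk hi (by omega)]; omega)
    rw [hins] at this
    have := fan_lam h3 h4 hf (x := i + 1) (by omega) hk
    linarith
  have htk : posBool b k = t := by
    by_contra hne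
    have h' : posBool b (k - 2) = !t := by
      have : posBool b (k - 2) = posBool b k := by
        simp only [posBool]; congr 2; omega
      rw [this]
      revert hne; cases posBool b k <;> cases t <;> simp
    have hins : insert (e k) (e '' Icc i (k - 1)) = e '' Icc i k := by
      rw [← image_insert_eq]
      congr 1
      ext m; simp only [mem_insert_iff, mem_Icc]; omega
    have hk' := key (k - 2) (by omega) (by omega) h'
    rw [show k - 2 + 1 = k - 1 by omega, show k - 2 + 2 = k by omega] at hk'
    have := lam_drop (A := e '' Icc i (k - 1)) (x := e k) hT hk'
      (by simp) (by simp)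
      (by
        rw [hins]
        rintro _ (rfl | rfl | rfl)
        · exact ⟨i, ⟨by omega, by omega⟩, rfl⟩
        · exact ⟨j, ⟨by omega, by omega⟩, rfl⟩
        · exact ⟨k, ⟨by omega, by omega⟩, rfl⟩)
      (by
        rw [hins]
        rintro _ (rfl | rfl | rfl)
        · exact ⟨k - 2, ⟨by omega, by omega⟩, rfl⟩
        · exact ⟨k - 1, ⟨by omega, by omega⟩, rfl⟩
        · exact ⟨k, ⟨by omega, by omega⟩, rfl⟩)
      (by rw [mem_iv hf hi (by omega) (by omega) (by omega)]; omega)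
    rw [hins] at this
    have := fan_lam h3 h4 hf (x := i) hi (y := k - 1) (by omega)
    linarith
  -- A fan triple of the other kind that contains `j` but neither `i` nor `k`.
  have fin : ∀ p, i < p → p + 2 < k → p ≤ j → j ≤ p + 2 → posBool b p = !t → False := by
    intro p h1 h2 h5 h6 h
    refine TT_orth (x := e j) hT (key p h1.le h2.le h) ?_
    have hne : ∀ q r, 1 ≤ q → q ≤ n → 1 ≤ r → r ≤ n → e q = e r → q = r := hf.2.1
    ext a
    constructor
    · rintro ⟨(rfl | rfl | rfl), h'⟩
      · rcases h' with h' | h' | h' <;>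
          have := hne _ _ (by omega) (by omega) (by omega) (by omega) h' <;> omega
      · rfl
      · rcases h' with h' | h' | h' <;>
          have := hne _ _ (by omega) (by omega) (by omega) (by omega) h' <;> omega
    · rintro rfl
      refine ⟨by simp, ?_⟩
      obtain h | h | h : j = p ∨ j = p + 1 ∨ j = p + 2 := by omega
      all_goals subst h; simp
  have par : ∀ p q, posBool b p = posBool b q ↔ p % 2 = q % 2 := by
    intro p q
    simp only [posBool]
    rcases Nat.mod_two_eq_zero_or_one p with h | h <;>
      rcases Nat.mod_two_eq_zero_or_one q with h' | h' <;> cases b <;> simp [h, h']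
  have parn : ∀ p, (posBool b p = !t) ↔ p % 2 ≠ i % 2 := by
    intro p
    rw [Ne, ← par p i, hti]
    cases posBool b p <;> cases t <;> simp
  have hik : k % 2 = i % 2 := by rw [← par, hti, htk]
  by_cases hj : j % 2 = i % 2
  · exact fin (j - 1) (by omega) (by omega) (by omega) (by omega) ((parn _).2 (by omega))
  · by_cases hj2 : j + 1 = k
    · exact fin (j - 2) (by omega) (by omega) (by omega) (by omega) ((parn _).2 (by omega))
    · exact fin j (by omega) (by omega) (by omega) (by omega) ((parn _).2 (by omega))

/-- A finite set of at least three natural numbers that is not an interval has three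
successive members that are not consecutive integers. -/
lemma exists_gap_triple {P : Finset ℕ} (hP : 3 ≤ P.card)
    (hnint : ∀ x y, x < y → P ≠ Finset.Icc x y) :
    ∃ i j k, i ∈ P ∧ j ∈ P ∧ k ∈ P ∧ i < j ∧ j < k ∧ i + 2 < k ∧
      ∀ m ∈ P, i ≤ m → m ≤ k → m = i ∨ m = j ∨ m = k := by
  classical
  -- the predecessor and the successor in `P` of a number that is not extreme
  have pred : ∀ a, (∃ u ∈ P, u < a) → ∃ p ∈ P, p < a ∧ ∀ m ∈ P, m < a → m ≤ p := by
    rintro a ⟨u, hu, hua⟩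
    obtain ⟨p, hp, hmax⟩ := (P.filter (· < a)).exists_max_image id ⟨u, by simp [hu, hua]⟩
    simp only [Finset.mem_filter, id] at hp hmax
    exact ⟨p, hp.1, hp.2, fun m h1 h2 => hmax m ⟨h1, h2⟩⟩
  have succ : ∀ a, (∃ u ∈ P, a < u) → ∃ p ∈ P, a < p ∧ ∀ m ∈ P, a < m → p ≤ m := by
    rintro a ⟨u, hu, hua⟩
    obtain ⟨p, hp, hmin⟩ := (P.filter (a < ·)).exists_min_image id ⟨u, by simp [hu, hua]⟩
    simp only [Finset.mem_filter, id] at hp hmin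
    exact ⟨p, hp.1, hp.2, fun m h1 h2 => hmin m ⟨h1, h2⟩⟩
  have hne : P.Nonempty := Finset.card_pos.1 (by omega)
  have hlt : P.min' hne < P.max' hne := Finset.min'_lt_max'_of_card P (by omega)
  have hmiss : ∃ g, g ∉ P ∧ P.min' hne ≤ g ∧ g ≤ P.max' hne := by
    by_contra! hcon
    refine hnint _ _ hlt (Finset.Subset.antisymm ?_ ?_)
    · intro m hm
      exact Finset.mem_Icc.2 ⟨P.min'_le m hm, P.le_max' m hm⟩
    · intro m hm
      rw [Finset.mem_Icc] at hm
      by_contra hmP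
      exact absurd hm.2 (not_le.2 (hcon m hmP hm.1))
  obtain ⟨g, hg, hg1, hg2⟩ := hmiss
  have hmin := P.min'_mem hne
  have hmax := P.max'_mem hne
  obtain ⟨p, hp, hpg, hpm⟩ := pred g ⟨_, hmin, lt_of_le_of_ne hg1 (fun h => hg (h ▸ hmin))⟩
  obtain ⟨q, hq, hgq, hqm⟩ := succ g ⟨_, hmax, lt_of_le_of_ne hg2 (fun h => hg (h ▸ hmax))⟩
  have hcov : ∀ m ∈ P, m ≤ p ∨ q ≤ m := by
    intro m hm
    rcases lt_trichotomy m g with h | h | h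
    · exact .inl (hpm m hm h)
    · exact absurd (h ▸ hm) hg
    · exact .inr (hqm m hm h)
  obtain ⟨u, hu, hup, huq⟩ : ∃ u ∈ P, u ≠ p ∧ u ≠ q := by
    by_contra! hcon
    have : P ⊆ {p, q} := by
      intro m hm
      by_cases h : m = p
      · simp [h]
      · simp [hcon m hm h]
    have := Finset.card_le_card this
    have := Finset.card_le_two (a := p) (b := q)
    omega
  rcases hcov u hu with h | h
  · obtain ⟨a, ha, hap, ham⟩ := pred p ⟨u, hu, by omega⟩
    refine ⟨a, p, q, ha, hp, hq, hap, by omega, by omega, ?_⟩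
    intro m hm h1 h2
    have := hcov m hm
    have := ham m hm
    omega
  · obtain ⟨c, hc, hqc, hcm⟩ := succ q ⟨u, hu, by omega⟩
    refine ⟨p, q, c, hp, hq, hc, by omega, hqc, by omega, ?_⟩
    intro m hm h1 h2
    have := hcov m hm
    have := hcm m hm
    omega

/-- The case of the theorem in which at least two elements lie outside the fan. -/
lemma interval_of_two_outside [M.RankFinite] (h3 : ThreeConn M) (h4 : 4 ≤ M.E.encard)
    (hf : IsFanFun M b n e) (hout : 2 ≤ (M.E \ fanSet n e).encard)
    {X : Set α} (hX : X ⊆ fanSet n e) (hsep : lam M X ≤ 2) (hXc : 3 ≤ X.encard) :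
    ∃ x y, 1 ≤ x ∧ x < y ∧ y ≤ n ∧ X = e '' Icc x y := by
  classical
  by_contra! hcon
  let P : Finset ℕ := (Finset.Icc 1 n).filter (fun i => e i ∈ X)
  have hP : ∀ i, i ∈ P ↔ (1 ≤ i ∧ i ≤ n) ∧ e i ∈ X := by intro i; simp [P]
  have hXP : X = e '' (P : Set ℕ) := by
    ext a
    constructor
    · intro ha
      obtain ⟨i, h1, h2, rfl⟩ := hX ha
      exact ⟨i, by simpa [hP] using ⟨⟨h1, h2⟩, ha⟩, rfl⟩
    · rintro ⟨i, hi, rfl⟩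
      exact ((hP i).1 hi).2
  have hPc : 3 ≤ P.card := by
    have h := encard_image_le e (P : Set ℕ)
    rw [← hXP, encard_coe_eq_coe_finsetCard] at h
    exact_mod_cast hXc.trans h
  obtain ⟨i, j, k, hi, hj, hk, hij, hjk, hik, hall⟩ := exists_gap_triple hPc (by
    intro x y hxy hPe
    have hx : x ∈ P := by rw [hPe]; simp [hxy.le]
    have hy : y ∈ P := by rw [hPe]; simp [hxy.le]
    refine hcon x y ((hP x).1 hx).1.1 hxy ((hP y).1 hy).1.2 ?_
    rw [hXP, hPe, Finset.coe_Icc])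
  have hi' := (hP i).1 hi
  have hj' := (hP j).1 hj
  have hk' := (hP k).1 hk
  have hF : ∀ {x y}, 1 ≤ x → y ≤ n → e '' Icc x y ⊆ fanSet n e := by
    rintro x y hx hy _ ⟨m, hm, rfl⟩
    exact ⟨m, hx.trans hm.1, hm.2.trans hy, rfl⟩
  have hFE : fanSet n e ⊆ M.E := by
    rintro _ ⟨m, h1, h2, rfl⟩
    exact hf.2.2.1 m h1 h2
  have hinter : X ∩ e '' Icc i k = {e i, e j, e k} := by
    ext a
    constructor
    · rintro ⟨ha, m, hm, rfl⟩
      have hmP : m ∈ P := (hP m).2 ⟨⟨hi'.1.1.trans hm.1, hm.2.trans hk'.1.2⟩, ha⟩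
      rcases hall m hmP hm.1 hm.2 with rfl | rfl | rfl <;> simp
    · rintro (rfl | rfl | rfl)
      · exact ⟨hi'.2, i, ⟨le_rfl, by omega⟩, rfl⟩
      · exact ⟨hj'.2, j, ⟨by omega, by omega⟩, rfl⟩
      · exact ⟨hk'.2, k, ⟨by omega, by omega⟩, rfl⟩
  have hsm := lam_submod M X (e '' Icc i k)
  have hun : X ∪ e '' Icc i k ⊆ fanSet n e := union_subset hX (hF hi'.1.1 hk'.1.2)
  have hlow := two_le_lam h3 (hun.trans hFE)
    (two_le_encard (.inl hi'.2) (.inl hj'.2)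
      (fan_ne hf hi'.1.1 hi'.1.2 hj'.1.1 hj'.1.2 hij.ne))
    (hout.trans (encard_le_encard (sdiff_subset_sdiff_right hun)))
  have hIv := fan_lam h3 h4 hf (x := i) hi'.1.1 hk'.1.2
  rw [hinter] at hsm
  have hc3 : ({e i, e j, e k} : Set α).encard = 3 := by
    rw [encard_eq_three]
    exact ⟨e i, e j, e k, fan_ne hf hi'.1.1 hi'.1.2 hj'.1.1 hj'.1.2 (by omega),
      fan_ne hf hi'.1.1 hi'.1.2 hk'.1.1 hk'.1.2 (by omega),
      fan_ne hf hj'.1.1 hj'.1.2 hk'.1.1 hk'.1.2 (by omega), rfl⟩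
  obtain ⟨t, ht⟩ := (TT_of_lam h3 h4 (T := {e i, e j, e k}) (by
    rw [← hinter]; exact inter_subset_left.trans (hX.trans hFE)) hc3).1 (by linarith)
  exact no_gap_triple h3 h4 hf hi'.1.1 hij hjk hk'.1.2 hik
    (hout.trans (encard_le_encard (sdiff_subset_sdiff_right (hF hi'.1.1 hk'.1.2)))) ht

end Fan

end FanSep

namespace FanSep

/-! ### Cyclic fans are wheels or whirls -/

lemma mem_cycArc {r : ℕ} [NeZero r] {i j k : ZMod r} :
    k ∈ cycArc r i j ↔ (k - i).val < (j - i).val := by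
  constructor
  · rintro ⟨m, hm, rfl⟩
    rw [add_sub_cancel_left, ZMod.val_natCast_of_lt (hm.trans (ZMod.val_lt _))]
    exact hm
  · intro h
    exact ⟨_, h, by rw [ZMod.natCast_zmod_val]; ring⟩

section Cyclic

variable {M : Matroid α} {r : ℕ} {s w : ZMod r → α}

lemma sumElim_inj (hinj : Function.Injective (Sum.elim s w)) :
    Function.Injective s ∧ Function.Injective w ∧ ∀ a b, s a ≠ w b := by
  refine ⟨fun a b h => Sum.inl.inj (@hinj (.inl a) (.inl b) h),
    fun a b h => Sum.inr.inj (@hinj (.inr a) (.inr b) h), fun a b h => ?_⟩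
  cases @hinj (.inl a) (.inr b) h

/-- The circuit of a wheel formed by the spokes at `i` and `j` and the rim arc from `i`
to `j`. -/
def arcSet (s w : ZMod r → α) (i j : ZMod r) : Set α := {s i, s j} ∪ w '' cycArc r i j

/-- Orthogonality of a circuit with the triad `{w i, s (i+1), w (i+1)}`. -/
lemma circuit_step (trd : ∀ i, IsTriad M {w i, s (i + 1), w (i + 1)})
    {C : Set α} (hC : M.IsCircuit C) (i : ZMod r) :
    (s (i + 1) ∈ C → w i ∈ C ∨ w (i + 1) ∈ C) ∧
      (s (i + 1) ∉ C → (w i ∈ C ↔ w (i + 1) ∈ C)) := by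
  have hK : M.IsCocircuit {w i, s (i + 1), w (i + 1)} := (circuit_iff _ _).1 (trd i).1
  have aux : ∀ x, x ∈ C → x ∈ ({w i, s (i + 1), w (i + 1)} : Set α) →
      ∃ y, y ≠ x ∧ y ∈ C ∧ y ∈ ({w i, s (i + 1), w (i + 1)} : Set α) := by
    intro x hx hx'
    by_contra! hcon
    refine hC.inter_isCocircuit_ne_singleton hK (e := x) ?_
    ext y
    constructor
    · rintro ⟨h1, h2⟩
      by_contra hne
      exact hcon y hne h1 h2
    · rintro rfl
      exact ⟨hx, hx'⟩
  refine ⟨fun h => ?_, fun h => ⟨fun h' => ?_, fun h' => ?_⟩⟩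
  · obtain ⟨y, hne, hy, rfl | rfl | rfl⟩ := aux _ h (by simp)
    · exact .inl hy
    · exact absurd rfl hne
    · exact .inr hy
  · obtain ⟨y, hne, hy, rfl | rfl | rfl⟩ := aux _ h' (by simp)
    · exact absurd rfl hne
    · exact absurd hy h
    · exact hy
  · obtain ⟨y, hne, hy, rfl | rfl | rfl⟩ := aux _ h' (by simp)
    · exact hy
    · exact absurd hy h
    · exact absurd rfl hne

/-- Following the rim from a spoke of a circuit `C`, orthogonality with the triads keeps one
inside `C` until the next spoke of `C`. -/
lemma circuit_contains (hr : 2 ≤ r) (hE : M.E = range s ∪ range w)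
    (trd : ∀ i, IsTriad M {w i, s (i + 1), w (i + 1)})
    {C : Set α} (hC : M.IsCircuit C) :
    C = range w ∨ (∃ i, insert (s i) (range w) ⊆ C) ∨
      ∃ i j, i ≠ j ∧ arcSet s w i j ⊆ C := by
  have : NeZero r := ⟨by omega⟩
  have step := circuit_step trd hC
  have fwd : ∀ i, w i ∈ C → ∀ m : ℕ, (∀ l : ℕ, 1 ≤ l → l ≤ m → s (i + l) ∉ C) →
      w (i + m) ∈ C := by
    intro i hi m
    induction m with
    | zero => intro _; simpa using hi
    | succ m ih =>
      intro h
      have h1 := ih (fun l h1 h2 => h l h1 (by omega))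
      have h2 := h (m + 1) (by omega) le_rfl
      have e1 : i + ((m + 1 : ℕ) : ZMod r) = i + m + 1 := by push_cast; ring
      rw [e1] at h2 ⊢
      exact ((step (i + m)).2 h2).1 h1
  have bwd : ∀ i, w i ∈ C → ∀ m : ℕ, (∀ l : ℕ, l < m → s (i - l) ∉ C) → w (i - m) ∈ C := by
    intro i hi m
    induction m with
    | zero => intro _; simpa using hi
    | succ m ih =>
      intro h
      have h1 := ih (fun l h1 => h l (by omega))
      have h2 := h m (by omega)
      have e1 : i - (m : ZMod r) = i - ((m + 1 : ℕ) : ZMod r) + 1 := by push_cast; ring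
      rw [e1] at h1 h2
      exact ((step _).2 h2).2 h1
  by_cases hs : ∃ i, s i ∈ C
  swap
  · push Not at hs
    left
    have hsub : C ⊆ range w := by
      intro x hx
      rcases hE ▸ hC.subset_ground hx with ⟨i, rfl⟩ | h
      · exact absurd hx (hs i)
      · exact h
    refine hsub.antisymm ?_
    obtain ⟨x, hx⟩ := hC.nonempty
    obtain ⟨i, rfl⟩ := hsub hx
    rintro _ ⟨k, rfl⟩
    have := fwd i hx (k - i).val (fun l _ _ => hs _)
    rwa [ZMod.natCast_zmod_val, add_sub_cancel] at this
  obtain ⟨i, hi⟩ := hs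
  right
  have hi' := hi
  rw [← sub_add_cancel i 1] at hi'
  classical
  rcases (step (i - 1)).1 hi' with hw | hw
  · -- walk backwards from `i`
    have hex : ∃ m : ℕ, 1 ≤ m ∧ s (i - m) ∈ C := ⟨r, by omega, by simpa using hi⟩
    have hm := Nat.find_spec hex
    have hmin : ∀ l : ℕ, 1 ≤ l → l < Nat.find hex → s (i - l) ∉ C := by
      intro l h1 h2 h3
      exact Nat.find_min hex h2 ⟨h1, h3⟩
    set m := Nat.find hex
    have hmr : m ≤ r := Nat.find_min' hex ⟨by omega, by simpa using hi⟩
    have hall : ∀ l : ℕ, 1 ≤ l → l ≤ m → w (i - l) ∈ C := by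
      intro l h1 h2
      have := bwd (i - 1) hw (l - 1) (fun k hk => by
        have := hmin (k + 1) (by omega) (by omega)
        convert this using 3
        push_cast; ring)
      convert this using 2
      rw [Nat.cast_sub h1]; push_cast; ring
    rcases hmr.lt_or_eq with hlt | heq
    · right
      have hval : (i - (i - (m : ZMod r))).val = m := by
        rw [sub_sub_cancel, ZMod.val_natCast_of_lt hlt]
      refine ⟨i - m, i, ?_, ?_⟩
      · intro h
        rw [h, sub_self, ZMod.val_zero] at hval
        omega
      · rintro x ((rfl | rfl) | ⟨k, ⟨l, hl, rfl⟩, rfl⟩)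
        · exact hm.2
        · exact hi
        · rw [hval] at hl
          have := hall (m - l) (by omega) (by omega)
          convert this using 2
          rw [Nat.cast_sub hl.le]; ring
    · left
      refine ⟨i, insert_subset hi ?_⟩
      rintro _ ⟨k, rfl⟩
      have hk := ZMod.val_lt (i - 1 - k)
      have := hall ((i - 1 - k).val + 1) (by omega) (by omega)
      convert this using 2
      push_cast
      rw [ZMod.natCast_zmod_val]; ring
  · -- walk forwards from `i`
    rw [sub_add_cancel] at hw
    have hex : ∃ m : ℕ, 1 ≤ m ∧ s (i + m) ∈ C := ⟨r, by omega, by simpa using hi⟩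
    have hm := Nat.find_spec hex
    have hmin : ∀ l : ℕ, 1 ≤ l → l < Nat.find hex → s (i + l) ∉ C := by
      intro l h1 h2 h3
      exact Nat.find_min hex h2 ⟨h1, h3⟩
    set m := Nat.find hex
    have hmr : m ≤ r := Nat.find_min' hex ⟨by omega, by simpa using hi⟩
    have hall : ∀ l : ℕ, l < m → w (i + l) ∈ C := fun l h1 =>
      fwd i hw l (fun k hk hk' => hmin k hk (by omega))
    rcases hmr.lt_or_eq with hlt | heq
    · right
      have hval : (i + (m : ZMod r) - i).val = m := by
        rw [add_sub_cancel_left, ZMod.val_natCast_of_lt hlt]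
      refine ⟨i, i + m, ?_, ?_⟩
      · intro h
        rw [← h, sub_self, ZMod.val_zero] at hval
        omega
      · rintro x ((rfl | rfl) | ⟨k, ⟨l, hl, rfl⟩, rfl⟩)
        · exact hi
        · exact hm.2
        · rw [hval] at hl
          exact hall l hl
    · left
      refine ⟨i, insert_subset hi ?_⟩
      rintro _ ⟨k, rfl⟩
      have hk := ZMod.val_lt (k - i)
      have := hall (k - i).val (by omega)
      rwa [ZMod.natCast_zmod_val, add_sub_cancel] at this

/-- By the triangles, `s i` and the rim arc from `i` to `j` span the spokes up to `s j`. -/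
lemma arcSet_dep (hr : 2 ≤ r) (hinj : Function.Injective (Sum.elim s w))
    (tri : ∀ i, IsTriangle M {s i, w i, s (i + 1)}) {i j : ZMod r} (hij : i ≠ j) :
    M.Dep (arcSet s w i j) := by
  have : NeZero r := ⟨by omega⟩
  obtain ⟨hs, hw, hsw⟩ := sumElim_inj hinj
  have hcirc : ∀ k, M.IsCircuit {s k, w k, s (k + 1)} := fun k => (circuit_iff _ _).1 (tri k).1
  have hsE : ∀ k, s k ∈ M.E := fun k => (hcirc k).subset_ground (by simp)
  have hwE : ∀ k, w k ∈ M.E := fun k => (hcirc k).subset_ground (by simp)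
  set Z : Set α := insert (s i) (w '' cycArc r i j) with hZ
  have hZE : Z ⊆ M.E := by
    rintro x (rfl | ⟨k, -, rfl⟩)
    · exact hsE i
    · exact hwE k
  have hcl : ∀ m : ℕ, m ≤ (j - i).val → s (i + m) ∈ M.closure Z := by
    intro m
    induction m with
    | zero =>
      intro _
      exact M.mem_closure_of_mem (by simp [hZ]) hZE
    | succ m ih =>
      intro h
      have h1 := ih (by omega)
      have h2 : w (i + m) ∈ M.closure Z :=
        M.mem_closure_of_mem (.inr ⟨_, ⟨m, by omega, rfl⟩, rfl⟩) hZE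
      have e1 : i + ((m + 1 : ℕ) : ZMod r) = i + m + 1 := by push_cast; ring
      rw [e1]
      have h3 := (hcirc (i + m)).mem_closure_sdiff_singleton_of_mem
        (e := s (i + m + 1)) (by simp)
      refine Matroid.closure_subset_closure_of_subset_closure ?_ h3
      rintro x ⟨rfl | rfl | rfl, hx⟩
      · exact h1
      · exact h2
      · exact absurd rfl hx
  have hj := hcl _ le_rfl
  rw [ZMod.natCast_zmod_val, add_sub_cancel] at hj
  have hjZ : s j ∉ Z := by
    rintro (h | ⟨k, -, h⟩)
    · exact hij (hs h).symm
    · exact hsw _ _ h.symm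
  obtain ⟨C, hCs, hC, -⟩ := Matroid.exists_isCircuit_of_mem_closure hj hjZ
  have heq : arcSet s w i j = insert (s j) Z := by
    rw [arcSet, hZ, insert_comm, insert_union, singleton_union]
  rw [heq]
  exact hC.dep.superset hCs (insert_subset (hsE j) hZE)

/-- The spokes span, so the rank is at most `r` and a rim together with a spoke is dependent. -/
lemma rim_insert_dep (hr : 2 ≤ r) (hinj : Function.Injective (Sum.elim s w))
    (hE : M.E = range s ∪ range w)
    (tri : ∀ i, IsTriangle M {s i, w i, s (i + 1)}) (i : ZMod r) :
    M.Dep (insert (s i) (range w)) := by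
  have : NeZero r := ⟨by omega⟩
  obtain ⟨hs, hw, hsw⟩ := sumElim_inj hinj
  have hcirc : ∀ k, M.IsCircuit {s k, w k, s (k + 1)} := fun k => (circuit_iff _ _).1 (tri k).1
  have hsub : insert (s i) (range w) ⊆ M.E := by
    rw [hE]; exact insert_subset (.inl ⟨i, rfl⟩) subset_union_right
  have huniv : (univ : Set (ZMod r)).encard = r := by
    rw [encard_univ, ENat.card_eq_coe_fintype_card, ZMod.card]
  rw [← Matroid.not_indep_iff hsub]
  intro hind
  have h1 := hind.encard_le_eRank
  have hspan : M.E ⊆ M.closure (range s) := by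
    have hsE : range s ⊆ M.E := by rw [hE]; exact subset_union_left
    intro x hx
    rcases hE ▸ hx with h | ⟨k, rfl⟩
    · exact M.mem_closure_of_mem h hsE
    · have h3 := (hcirc k).mem_closure_sdiff_singleton_of_mem (e := w k) (by simp)
      refine M.closure_subset_closure ?_ h3
      rintro x ⟨rfl | rfl | rfl, hx⟩
      · exact ⟨_, rfl⟩
      · exact absurd rfl hx
      · exact ⟨_, rfl⟩
  have h2 : M.eRank ≤ r := by
    rw [Matroid.eRank_def]
    refine (M.eRk_mono hspan).trans ?_
    rw [M.eRk_closure_eq]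
    refine (M.eRk_le_encard _).trans ?_
    rw [← image_univ]
    exact (encard_image_le _ _).trans huniv.le
  have h3 : (insert (s i) (range w)).encard = r + 1 := by
    rw [encard_insert_of_notMem, ← image_univ, hw.encard_image, huniv]
    rintro ⟨k, hk⟩
    exact hsw _ _ hk.symm
  rw [h3] at h1
  have h4 : ((r + 1 : ℕ) : ℕ∞) ≤ (r : ℕ) := by push_cast; exact h1.trans h2
  have : r + 1 ≤ r := by exact_mod_cast h4
  omega

/-- A matroid whose ground set is cyclically covered by alternating triangles and triads is a
wheel if its rim is dependent, and a whirl otherwise. -/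
theorem wheel_or_whirl (hr : 2 ≤ r) (hinj : Function.Injective (Sum.elim s w))
    (hE : M.E = range s ∪ range w)
    (tri : ∀ i, IsTriangle M {s i, w i, s (i + 1)})
    (trd : ∀ i, IsTriad M {w i, s (i + 1), w (i + 1)}) : IsWheel M ∨ IsWhirl M := by
  have : NeZero r := ⟨by omega⟩
  obtain ⟨hs, hw, hsw⟩ := sumElim_inj hinj
  have hclass : ∀ C, M.IsCircuit C → C = range w ∨ (∃ i, C = insert (s i) (range w)) ∨
      ∃ i j, i ≠ j ∧ C = arcSet s w i j := by
    intro C hC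
    rcases circuit_contains hr hE trd hC with h | ⟨i, h⟩ | ⟨i, j, hij, h⟩
    · exact .inl h
    · exact .inr (.inl ⟨i, ((Matroid.isCircuit_iff.1 hC).2
        (rim_insert_dep hr hinj hE tri i) h).symm⟩)
    · exact .inr (.inr ⟨i, j, hij, ((Matroid.isCircuit_iff.1 hC).2
        (arcSet_dep hr hinj tri hij) h).symm⟩)
  have s_mem : ∀ {k i j}, s k ∈ arcSet s w i j → k = i ∨ k = j := by
    rintro k i j ((h | h) | ⟨l, -, h⟩)
    · exact .inl (hs h)
    · exact .inr (hs h)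
    · exact absurd h.symm (hsw _ _)
  have w_mem : ∀ {k i j}, w k ∈ arcSet s w i j → k ∈ cycArc r i j := by
    rintro k i j ((h | h) | ⟨l, hl, h⟩)
    · exact absurd h.symm (hsw _ _)
    · exact absurd h.symm (hsw _ _)
    · exact hw h ▸ hl
  have w_end : ∀ {i j}, w j ∉ arcSet s w i j := fun h =>
    absurd (mem_cycArc.1 (w_mem h)) (lt_irrefl _)
  have s_rim : ∀ {k i}, s k ∈ insert (s i) (range w) → k = i := by
    rintro k i (h | ⟨l, h⟩)
    · exact hs h
    · exact absurd h.symm (hsw _ _)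
  have s_not : ∀ {k}, s k ∉ range w := by
    rintro k ⟨l, h⟩
    exact absurd h.symm (hsw _ _)
  have harc : ∀ i j, i ≠ j → M.IsCircuit (arcSet s w i j) := by
    intro i j hij
    obtain ⟨C, hCs, hC⟩ := (arcSet_dep hr hinj tri hij).exists_isCircuit_subset
    rcases hclass C hC with rfl | ⟨k, rfl⟩ | ⟨k, l, hkl, rfl⟩
    · exact absurd (hCs ⟨j, rfl⟩) w_end
    · exact absurd (hCs (.inr ⟨j, rfl⟩)) w_end
    · have h1 := s_mem (hCs (show s k ∈ arcSet s w k l by simp [arcSet]))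
      have h2 := s_mem (hCs (show s l ∈ arcSet s w k l by simp [arcSet]))
      rcases h1 with rfl | rfl <;> rcases h2 with rfl | rfl
      · exact absurd rfl hkl
      · exact hC
      · refine absurd (hCs (.inr ⟨k, mem_cycArc.2 ?_, rfl⟩)) w_end
        rw [sub_self, ZMod.val_zero]
        exact Nat.pos_of_ne_zero (fun h => hkl (by
          rw [ZMod.val_eq_zero, sub_eq_zero] at h; exact h.symm))
      · exact absurd rfl hkl
  have hwE : range w ⊆ M.E := by rw [hE]; exact subset_union_right
  by_cases hW : M.Indep (range w)
  · right
    refine ⟨r, hr, s, w, hinj, hE, fun C => ?_⟩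
    rw [circuit_iff]
    constructor
    · intro hC
      rcases hclass C hC with rfl | h | h
      · exact absurd hW hC.not_indep
      · exact .inl h
      · exact .inr h
    · rintro (⟨i, rfl⟩ | ⟨i, j, hij, rfl⟩)
      · obtain ⟨C, hCs, hC⟩ := (rim_insert_dep hr hinj hE tri i).exists_isCircuit_subset
        rcases hclass C hC with rfl | ⟨k, rfl⟩ | ⟨k, l, hkl, rfl⟩
        · exact absurd hW hC.not_indep
        · have := s_rim (hCs (.inl rfl))
          exact this ▸ hC
        · have h1 := s_rim (hCs (show s k ∈ arcSet s w k l by simp [arcSet]))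
          have h2 := s_rim (hCs (show s l ∈ arcSet s w k l by simp [arcSet]))
          exact absurd (h1.trans h2.symm) hkl
      · exact harc i j hij
  · left
    have hWc : M.IsCircuit (range w) := by
      obtain ⟨C, hCs, hC⟩ := ((Matroid.not_indep_iff hwE).1 hW).exists_isCircuit_subset
      rcases hclass C hC with rfl | ⟨k, rfl⟩ | ⟨k, l, hkl, rfl⟩
      · exact hC
      · exact absurd (hCs (.inl rfl)) s_not
      · exact absurd (hCs (show s k ∈ arcSet s w k l by simp [arcSet])) s_not
    refine ⟨r, hr, s, w, hinj, hE, fun C => ?_⟩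
    rw [circuit_iff]
    constructor
    · intro hC
      rcases hclass C hC with rfl | ⟨i, rfl⟩ | h
      · exact .inl rfl
      · have := (Matroid.isCircuit_iff.1 hC).2 hWc.dep (subset_insert _ _)
        have hsi : s i ∈ range w := by rw [this]; exact mem_insert _ _
        exact absurd hsi s_not
      · exact .inr h
    · rintro (rfl | ⟨i, j, hij, rfl⟩)
      · exact hWc
      · exact harc i j hij

end Cyclic

end FanSep

namespace FanSep

/-! ### Fans with at most one element outside -/

lemma posBool_eq_iff {b : Bool} {p q : ℕ} : posBool b p = posBool b q ↔ p % 2 = q % 2 := by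
  simp only [posBool]
  rcases Nat.mod_two_eq_zero_or_one p with h | h <;>
    rcases Nat.mod_two_eq_zero_or_one q with h' | h' <;> cases b <;> simp [h, h']

lemma posBool_not_eq {b : Bool} {p q : ℕ} (h : p % 2 ≠ q % 2) :
    posBool b p = posBool (!b) q := by
  simp only [posBool]
  rcases Nat.mod_two_eq_zero_or_one p with h1 | h1 <;>
    rcases Nat.mod_two_eq_zero_or_one q with h2 | h2 <;> simp [h1, h2] at h ⊢

/-- Orthogonality: among triangles and triads, two sets that meet in exactly one element are of
the same kind. -/
lemma TT_same {M : Matroid α} {t₁ t₂ : Bool} {T₁ T₂ : Set α} {x : α}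
    (h1 : TriOrTriad M t₁ T₁) (h2 : TriOrTriad M t₂ T₂) (hx1 : x ∈ T₁) (hx2 : x ∈ T₂)
    (h : ∀ y, y ∈ T₁ → y ∈ T₂ → y = x) : t₁ = t₂ := by
  by_contra hne
  have ht : t₂ = !t₁ := by revert hne; cases t₁ <;> cases t₂ <;> simp
  subst ht
  refine TT_orth (x := x) h1 h2 ?_
  ext y
  constructor
  · rintro ⟨hy, hy'⟩
    exact h y hy hy'
  · rintro rfl
    exact ⟨hx1, hx2⟩

section Fan

variable {M : Matroid α} {b : Bool} {n : ℕ} {e : ℕ → α}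

/-- A 3-element set whose complement is an interval of a fan is a triangle or a triad, and it
is both if that interval has at most one element. -/
lemma TT_of_compl [M.RankFinite] (h3 : ThreeConn M) (h4 : 4 ≤ M.E.encard)
    (hf : IsFanFun M b n e) {T : Set α} (hT : T ⊆ M.E) (hc : T.encard = 3) {x y : ℕ}
    (hx : 1 ≤ x) (hy : y ≤ n) (hco : M.E \ T = e '' Icc x y) :
    (∃ t, TriOrTriad M t T) ∧ (y ≤ x → ∀ t, TriOrTriad M t T) := by
  refine ⟨(TT_of_lam h3 h4 hT hc).1 ?_, fun hyx => (TT_of_lam h3 h4 hT hc).2 ?_⟩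
  · rw [← lam_compl M hT, hco]
    exact fan_lam h3 h4 hf hx hy
  · refine lam_le_of_encard_compl M (k := 1) hT ?_
    rw [hco]
    refine (encard_iv_le x y).trans ?_
    exact_mod_cast (by omega : y + 1 - x ≤ 1)

lemma encard_triple (hf : IsFanFun M b n e) {i j k : ℕ} (hi : 1 ≤ i ∧ i ≤ n)
    (hj : 1 ≤ j ∧ j ≤ n) (hk : 1 ≤ k ∧ k ≤ n) (hij : i ≠ j) (hik : i ≠ k) (hjk : j ≠ k) :
    ({e i, e j, e k} : Set α).encard = 3 :=
  encard_eq_three.2 ⟨e i, e j, e k, fan_ne hf hi.1 hi.2 hj.1 hj.2 hij,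
    fan_ne hf hi.1 hi.2 hk.1 hk.2 hik, fan_ne hf hj.1 hj.2 hk.1 hk.2 hjk, rfl⟩

lemma compl_triple (hf : IsFanFun M b n e) (hfull : fanSet n e = M.E) {i j k x y : ℕ}
    (hi : 1 ≤ i ∧ i ≤ n) (hj : 1 ≤ j ∧ j ≤ n) (hk : 1 ≤ k ∧ k ≤ n) (hx : 1 ≤ x) (hy : y ≤ n)
    (h : ∀ m, 1 ≤ m → m ≤ n → ((m ≠ i ∧ m ≠ j ∧ m ≠ k) ↔ (x ≤ m ∧ m ≤ y))) :
    M.E \ {e i, e j, e k} = e '' Icc x y := by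
  rw [← hfull]
  ext a
  constructor
  · rintro ⟨⟨m, h1, h2, rfl⟩, h5⟩
    refine ⟨m, (h m h1 h2).1 ⟨?_, ?_, ?_⟩, rfl⟩ <;> rintro rfl <;> simp at h5
  · rintro ⟨m, hm, rfl⟩
    have h1 : 1 ≤ m := hx.trans hm.1
    have h2 : m ≤ n := hm.2.trans hy
    refine ⟨⟨m, h1, h2, rfl⟩, ?_⟩
    obtain ⟨a1, a2, a3⟩ := (h m h1 h2).2 hm
    rintro (h' | h' | h')
    · exact a1 (hf.2.1 _ _ h1 h2 hi.1 hi.2 h')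
    · exact a2 (hf.2.1 _ _ h1 h2 hj.1 hj.2 h')
    · exact a3 (hf.2.1 _ _ h1 h2 hk.1 hk.2 h')

lemma triple_subset (hf : IsFanFun M b n e) {i j k : ℕ} (hi : 1 ≤ i ∧ i ≤ n)
    (hj : 1 ≤ j ∧ j ≤ n) (hk : 1 ≤ k ∧ k ≤ n) : {e i, e j, e k} ⊆ M.E := by
  rintro _ (rfl | rfl | rfl)
  · exact hf.2.2.1 _ hi.1 hi.2
  · exact hf.2.2.1 _ hj.1 hj.2
  · exact hf.2.2.1 _ hk.1 hk.2

/-- Orthogonality for two triples of fan elements with exactly one index in common. -/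
lemma TT_same_of_index (hf : IsFanFun M b n e) {t₁ t₂ : Bool} {x i j p q : ℕ}
    (h1 : TriOrTriad M t₁ {e i, e j, e x}) (h2 : TriOrTriad M t₂ {e x, e p, e q})
    (hi : 1 ≤ i ∧ i ≤ n) (hj : 1 ≤ j ∧ j ≤ n) (hx : 1 ≤ x ∧ x ≤ n)
    (hp : 1 ≤ p ∧ p ≤ n) (hq : 1 ≤ q ∧ q ≤ n)
    (h : i ≠ x ∧ i ≠ p ∧ i ≠ q ∧ j ≠ x ∧ j ≠ p ∧ j ≠ q) : t₁ = t₂ := by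
  refine TT_same (x := e x) h1 h2 (by simp) (by simp) ?_
  rintro _ (rfl | rfl | rfl) h'
  · rcases h' with h' | h' | h' <;>
      have := hf.2.1 _ _ (by omega) (by omega) (by omega) (by omega) h' <;> omega
  · rcases h' with h' | h' | h' <;>
      have := hf.2.1 _ _ (by omega) (by omega) (by omega) (by omega) h' <;> omega
  · rfl

lemma triple_rev (x y z : α) : ({x, y, z} : Set α) = {z, y, x} := by
  ext a
  simp only [mem_insert_iff, mem_singleton_iff]
  tauto

/-- A fan that exhausts the ground set has even length and closes up cyclically. -/
lemma fan_cyclic [M.RankFinite] (h3 : ThreeConn M) (h4 : 4 ≤ M.E.encard)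
    (hf : IsFanFun M b n e) (hn : 4 ≤ n) (hfull : fanSet n e = M.E) :
    n % 2 = 0 ∧ TriOrTriad M (posBool b (n - 1)) {e (n - 1), e n, e 1} ∧
      TriOrTriad M (posBool b n) {e n, e 1, e 2} := by
  have c1 := TT_of_compl h3 h4 hf (T := {e (n - 1), e n, e 1})
    (triple_subset hf (by omega) (by omega) (by omega))
    (encard_triple hf (by omega) (by omega) (by omega) (by omega) (by omega) (by omega))
    (x := 2) (y := n - 2) (by omega) (by omega)
    (compl_triple hf hfull (by omega) (by omega) (by omega) (by omega) (by omega)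
      (by intros; omega))
  have c2 := TT_of_compl h3 h4 hf (T := {e n, e 1, e 2})
    (triple_subset hf (by omega) (by omega) (by omega))
    (encard_triple hf (by omega) (by omega) (by omega) (by omega) (by omega) (by omega))
    (x := 3) (y := n - 1) (by omega) (by omega)
    (compl_triple hf hfull (by omega) (by omega) (by omega) (by omega) (by omega)
      (by intros; omega))
  by_cases hn4 : n = 4
  · exact ⟨by omega, c1.2 (by omega) _, c2.2 (by omega) _⟩
  obtain ⟨⟨t₁, ht₁⟩, -⟩ := c1
  obtain ⟨⟨t₂, ht₂⟩, -⟩ := c2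
  have f1 := hf.2.2.2 1 le_rfl (by omega)
  have f2 := hf.2.2.2 2 (by omega) (by omega)
  have f3 := hf.2.2.2 (n - 3) (by omega) (by omega)
  rw [show n - 3 + 1 = n - 2 by omega, show n - 3 + 2 = n - 1 by omega] at f3
  have e1 := TT_same_of_index hf f3 ht₁ (by omega) (by omega) (by omega) (by omega) (by omega)
    (by omega)
  have e2 := TT_same_of_index hf ht₂ f2 (by omega) (by omega) (by omega) (by omega) (by omega)
    (by omega)
  have e3 := TT_same_of_index hf ht₁ f1 (by omega) (by omega) (by omega) (by omega) (by omega)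
    (by omega)
  have hev : n % 2 = 0 := by
    rw [← e1, posBool_eq_iff] at e3
    omega
  refine ⟨hev, ?_, ?_⟩
  · rwa [show posBool b (n - 1) = t₁ by rw [← e1, posBool_eq_iff]; omega]
  · rwa [show posBool b n = t₂ by rw [e2, posBool_eq_iff]; omega]

lemma fan_reverse (hf : IsFanFun M b n e) (hn : n % 2 = 0) :
    IsFanFun M (!b) n (fun i => e (n + 1 - i)) := by
  refine ⟨hf.1, ?_, ?_, ?_⟩
  · intro i j hi hi' hj hj' h
    have := hf.2.1 _ _ (by omega) (by omega) (by omega) (by omega) h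
    omega
  · intro i hi hi'
    exact hf.2.2.1 _ (by omega) (by omega)
  · intro i hi hi'
    have h := hf.2.2.2 (n - 1 - i) (by omega) (by omega)
    rw [posBool_not_eq (q := i) (by omega), triple_rev] at h
    rw [show n - 1 - i + 2 = n + 1 - i by omega, show n - 1 - i + 1 = n + 1 - (i + 1) by omega,
      show n - 1 - i = n + 1 - (i + 2) by omega] at h
    exact h

lemma fanSet_reverse (n : ℕ) (e : ℕ → α) : fanSet n (fun i => e (n + 1 - i)) = fanSet n e := by
  ext a
  constructor
  · rintro ⟨i, h1, h2, rfl⟩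
    exact ⟨n + 1 - i, by omega, by omega, rfl⟩
  · rintro ⟨i, h1, h2, rfl⟩
    exact ⟨n + 1 - i, by omega, by omega, by dsimp only; congr 1; omega⟩

lemma val_add_one_cases {r : ℕ} (hr : 2 ≤ r) (i : ZMod r) :
    (i.val + 1 < r ∧ (i + 1).val = i.val + 1) ∨ (i.val + 1 = r ∧ (i + 1).val = 0) := by
  have : NeZero r := ⟨by omega⟩
  have : Fact (1 < r) := ⟨by omega⟩
  have hlt := ZMod.val_lt i
  rw [ZMod.val_add, ZMod.val_one]
  by_cases h : i.val + 1 = r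
  · exact .inr ⟨h, by rw [h, Nat.mod_self]⟩
  · exact .inl ⟨by omega, Nat.mod_eq_of_lt (by omega)⟩

/-- A 3-connected matroid whose ground set is a single fan is a wheel or a whirl. -/
lemma wheel_or_whirl_of_full [M.RankFinite] (h3 : ThreeConn M) (h4 : 4 ≤ M.E.encard)
    (hf : IsFanFun M b n e) (hn : 4 ≤ n) (hfull : fanSet n e = M.E) :
    IsWheel M ∨ IsWhirl M := by
  have hev := (fan_cyclic h3 h4 hf hn hfull).1
  wlog hb : b = true generalizing b e
  · have hbf : b = false := by simpa using hb
    subst hbf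
    exact this (fan_reverse hf hev) ((fanSet_reverse n e).trans hfull) rfl
  subst hb
  obtain ⟨-, c1, c2⟩ := fan_cyclic h3 h4 hf hn hfull
  obtain ⟨r, rfl⟩ : ∃ r, n = 2 * r := ⟨n / 2, by omega⟩
  have hr : 2 ≤ r := by omega
  have : NeZero r := ⟨by omega⟩
  have podd : ∀ k, k % 2 = 1 → posBool true k = true := by
    intro k hk; simp [posBool, hk]
  have peven : ∀ k, k % 2 = 0 → posBool true k = false := by
    intro k hk; simp [posBool, hk]
  rw [podd _ (by omega)] at c1
  rw [peven _ (by omega)] at c2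
  refine wheel_or_whirl (s := fun i : ZMod r => e (2 * i.val + 1))
    (w := fun i : ZMod r => e (2 * i.val + 2)) hr ?_ ?_ ?_ ?_
  · have key : ∀ i j : ZMod r, ∀ p q, 1 ≤ p → p ≤ 2 → 1 ≤ q → q ≤ 2 →
        e (2 * i.val + p) = e (2 * j.val + q) → i = j ∧ p = q := by
      intro i j p q h1 h2 h5 h6 h
      have hi := ZMod.val_lt i
      have hj := ZMod.val_lt j
      have := hf.2.1 _ _ (by omega) (by omega) (by omega) (by omega) h
      exact ⟨ZMod.val_injective r (by omega), by omega⟩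
    rintro (i | i) (j | j) h
    · rw [(key i j 1 1 (by omega) (by omega) (by omega) (by omega) h).1]
    · exact absurd (key i j 1 2 (by omega) (by omega) (by omega) (by omega) h).2 (by omega)
    · exact absurd (key i j 2 1 (by omega) (by omega) (by omega) (by omega) h).2 (by omega)
    · rw [(key i j 2 2 (by omega) (by omega) (by omega) (by omega) h).1]
  · rw [← hfull]
    ext a
    constructor
    · rintro ⟨k, h1, h2, rfl⟩
      have hv : (((k - 1) / 2 : ℕ) : ZMod r).val = (k - 1) / 2 :=
        ZMod.val_natCast_of_lt (by omega)
      rcases Nat.mod_two_eq_zero_or_one k with hk | hk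
      · exact .inr ⟨((k - 1) / 2 : ℕ), by dsimp only; rw [hv]; congr 1; omega⟩
      · exact .inl ⟨((k - 1) / 2 : ℕ), by dsimp only; rw [hv]; congr 1; omega⟩
    · rintro (⟨i, rfl⟩ | ⟨i, rfl⟩)
      · have hi := ZMod.val_lt i
        exact ⟨_, by omega, by omega, rfl⟩
      · have hi := ZMod.val_lt i
        exact ⟨_, by omega, by omega, rfl⟩
  · intro i
    rcases val_add_one_cases hr i with ⟨h1, h2⟩ | ⟨h1, h2⟩
    · have := hf.2.2.2 (2 * i.val + 1) (by omega) (by omega)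
      rw [podd _ (by omega)] at this
      rw [h2]
      exact this
    · rw [h2, show 2 * i.val + 1 = 2 * r - 1 by omega, show 2 * i.val + 2 = 2 * r by omega]
      exact c1
  · intro i
    rcases val_add_one_cases hr i with ⟨h1, h2⟩ | ⟨h1, h2⟩
    · have := hf.2.2.2 (2 * i.val + 2) (by omega) (by omega)
      rw [peven _ (by omega)] at this
      rw [h2]
      exact this
    · rw [h2, show 2 * i.val + 2 = 2 * r by omega]
      exact c2

/-- If a single element `z` lies outside a fan, then appending `z` gives a longer fan. -/
lemma fan_extend [M.RankFinite] (h3 : ThreeConn M) (h4 : 4 ≤ M.E.encard)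
    (hf : IsFanFun M b n e) {z : α} (hz : M.E \ fanSet n e = {z}) :
    ∃ e', IsFanFun M b (n + 1) e' ∧ fanSet (n + 1) e' = M.E := by
  have hn := hf.1
  have hzm : z ∈ M.E \ fanSet n e := by rw [hz]; rfl
  have hze : ∀ i, 1 ≤ i → i ≤ n → z ≠ e i := fun i h1 h2 h => hzm.2 ⟨i, h1, h2, h⟩
  have hcov : ∀ a ∈ M.E, a ≠ z → a ∈ fanSet n e := by
    intro a ha hne
    by_contra hcon
    have : a ∈ M.E \ fanSet n e := ⟨ha, hcon⟩
    rw [hz] at this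
    exact hne this
  have hTE : {e (n - 1), e n, z} ⊆ M.E := by
    rintro _ (rfl | rfl | rfl)
    · exact hf.2.2.1 _ (by omega) (by omega)
    · exact hf.2.2.1 _ (by omega) (by omega)
    · exact hzm.1
  have hTc : ({e (n - 1), e n, z} : Set α).encard = 3 :=
    encard_eq_three.2 ⟨_, _, _,
      fan_ne hf (by omega) (by omega) (by omega) (by omega) (by omega),
      (hze _ (by omega) (by omega)).symm, (hze _ (by omega) (by omega)).symm, rfl⟩
  have hco : M.E \ {e (n - 1), e n, z} = e '' Icc 1 (n - 2) := by
    ext a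
    constructor
    · rintro ⟨ha, hne⟩
      obtain ⟨m, h1, h2, rfl⟩ := hcov a ha (fun h => hne (by simp [h]))
      refine ⟨m, ⟨h1, ?_⟩, rfl⟩
      have a1 : m ≠ n - 1 := by rintro rfl; simp at hne
      have a2 : m ≠ n := by rintro rfl; simp at hne
      omega
    · rintro ⟨m, ⟨h1, h2⟩, rfl⟩
      refine ⟨hf.2.2.1 m h1 (by omega), ?_⟩
      rintro (h | h | h)
      · exact fan_ne hf (by omega) (by omega) (by omega) (by omega) (by omega) h
      · exact fan_ne hf (by omega) (by omega) (by omega) (by omega) (by omega) h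
      · exact hze m h1 (by omega) h.symm
  have hlast : TriOrTriad M (posBool b (n - 1)) {e (n - 1), e n, z} := by
    have c := TT_of_compl h3 h4 hf hTE hTc le_rfl (by omega) hco
    by_cases hn3 : n = 3
    · exact c.2 (by omega) _
    obtain ⟨⟨t, ht⟩, -⟩ := c
    have f := hf.2.2.2 (n - 3) (by omega) (by omega)
    rw [show n - 3 + 1 = n - 2 by omega, show n - 3 + 2 = n - 1 by omega] at f
    have e1 := TT_same (x := e (n - 1)) f ht (by simp) (by simp) (by
      rintro _ (rfl | rfl | rfl) h'
      · rcases h' with h' | h' | h'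
        · exact h'
        · exact absurd h' (fan_ne hf (by omega) (by omega) (by omega) (by omega) (by omega))
        · exact absurd h'.symm (hze _ (by omega) (by omega))
      · rcases h' with h' | h' | h'
        · exact h'
        · exact absurd h' (fan_ne hf (by omega) (by omega) (by omega) (by omega) (by omega))
        · exact absurd h'.symm (hze _ (by omega) (by omega))
      · rfl)
    rwa [show posBool b (n - 1) = t by rw [← e1, posBool_eq_iff]; omega]
  let e' : ℕ → α := fun i => if i ≤ n then e i else z
  have ev : ∀ i, i ≤ n → e' i = e i := fun i hi => if_pos hi
  have ez : e' (n + 1) = z := if_neg (by omega)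
  refine ⟨e', ⟨by omega, ?_, ?_, ?_⟩, ?_⟩
  · intro i j hi hi' hj hj' h
    rcases Nat.lt_or_ge n i with h1 | h1 <;> rcases Nat.lt_or_ge n j with h2 | h2
    · omega
    · obtain rfl : i = n + 1 := by omega
      rw [ez, ev j h2] at h
      exact absurd h (hze j hj h2)
    · obtain rfl : j = n + 1 := by omega
      rw [ez, ev i h1] at h
      exact absurd h.symm (hze i hi h1)
    · rw [ev i h1, ev j h2] at h
      exact hf.2.1 i j hi h1 hj h2 h
  · intro i hi hi'
    rcases Nat.lt_or_ge n i with h1 | h1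
    · obtain rfl : i = n + 1 := by omega
      rw [ez]; exact hzm.1
    · rw [ev i h1]; exact hf.2.2.1 i hi h1
  · intro i hi hi'
    rcases Nat.lt_or_ge n (i + 2) with h1 | h1
    · obtain rfl : i = n - 1 := by omega
      rw [show n - 1 + 1 = n by omega, show n - 1 + 2 = n + 1 by omega, ez,
        ev _ (by omega), ev _ le_rfl]
      exact hlast
    · rw [ev _ h1, ev _ (by omega), ev _ (by omega)]
      exact hf.2.2.2 i hi h1
  · ext a
    constructor
    · rintro ⟨i, h1, h2, rfl⟩
      rcases Nat.lt_or_ge n i with h | h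
      · obtain rfl : i = n + 1 := by omega
        rw [ez]; exact hzm.1
      · rw [ev i h]; exact hf.2.2.1 i h1 h
    · intro ha
      by_cases h : a = z
      · exact ⟨n + 1, by omega, le_rfl, by rw [ez, h]⟩
      · obtain ⟨i, h1, h2, rfl⟩ := hcov a ha h
        exact ⟨i, h1, by omega, (ev i h2).symm⟩

/-- A fan with at most one element outside it forces a wheel or a whirl. -/
lemma wheel_or_whirl_of_outside [M.RankFinite] (h3 : ThreeConn M) (h4 : 4 ≤ M.E.encard)
    (hf : IsFanFun M b n e) (hout : ¬ 2 ≤ (M.E \ fanSet n e).encard) :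
    IsWheel M ∨ IsWhirl M := by
  have hn := hf.1
  have hFE : fanSet n e ⊆ M.E := by
    rintro _ ⟨m, h1, h2, rfl⟩
    exact hf.2.2.1 m h1 h2
  have hle : (M.E \ fanSet n e).encard ≤ 1 :=
    encard_le_one_iff.2 fun x y hx hy => by_contra fun hne => hout (two_le_encard hx hy hne)
  rcases encard_le_one_iff_eq.1 hle with h | ⟨z, hz⟩
  · have hfull : fanSet n e = M.E := hFE.antisymm (sdiff_eq_empty.1 h)
    have hn4 : 4 ≤ n := by
      have hiv : fanSet n e = e '' Icc 1 n := by
        ext a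
        constructor
        · rintro ⟨i, h1, h2, rfl⟩
          exact ⟨i, ⟨h1, h2⟩, rfl⟩
        · rintro ⟨i, ⟨h1, h2⟩, rfl⟩
          exact ⟨i, h1, h2, rfl⟩
      rw [← hfull, hiv] at h4
      have h5 := h4.trans (encard_iv_le (e := e) 1 n)
      have h6 : 4 ≤ n + 1 - 1 := by exact_mod_cast h5
      omega
    exact wheel_or_whirl_of_full h3 h4 hf hn4 hfull
  · obtain ⟨e', hf', hfull⟩ := fan_extend h3 h4 hf hz
    exact wheel_or_whirl_of_full h3 h4 hf' (by omega) hfull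

end Fan

end FanSep

/-- Any 3-separating subset (of size at least three) of a fan of a 3-connected matroid
(with at least four elements, and neither a wheel nor a whirl) consists of consecutive
elements of the fan. -/
theorem statement14 (M : Matroid α) (hM3 : ThreeConn M) (hcard : 4 ≤ M.E.encard)
    (hW : ¬ IsWheel M) (hWh : ¬ IsWhirl M)
    (b : Bool) (n : ℕ) (e : ℕ → α) (hfan : IsFanFun M b n e)
    (X : Set α) (hXsub : X ⊆ fanSet n e)
    (hXsep : erk M X + erk M (M.E \ X) ≤ erk M M.E + 2)
    (hXcard : 3 ≤ X.encard) :
    ∃ x y, 1 ≤ x ∧ x < y ∧ y ≤ n ∧ X = e '' Set.Icc x y := by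
  have := FanSep.rankFinite_of_threeConn hM3 hcard
  by_cases hout : 2 ≤ (M.E \ fanSet n e).encard
  · refine FanSep.interval_of_two_outside hM3 hcard hfan hout hXsub ?_ hXcard
    simp only [FanSep.erk_eq] at hXsep
    rw [← FanSep.coe_rkZ M X, ← FanSep.coe_rkZ M M.E, ← FanSep.coe_rkZ M (M.E \ X)] at hXsep
    norm_cast at hXsep
    simp only [FanSep.lam, FanSep.rkZ]
    omega
  · exact absurd (FanSep.wheel_or_whirl_of_outside hM3 hcard hfan hout) (not_or.2 ⟨hW, hWh⟩)
end

section
/- Let M be a 3-connected matroid such that |E(M)| >= 4 and M is not a wheel or a whirl. Let (f_1, ..., f_m) and (g_1, ..., g_n) be fans of M with |{f_1, ..., f_m} ∩ {g_1, ..., g_n}| >= 3. Then there are integers 1 <= x < y <= m and 1 <= x' < y' <= n such that {f_1, ..., f_m} ∩ {g_1, ..., g_n} = {f_x, f_{x+1}, ..., f_y} = {g_{x'}, g_{x'+1}, ..., g_{y'}}. -/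
/-!
Write `λ(X) = r(X) + r✶(X) - |X|` for the connectivity of a finite set `X`; 3-connectedness says
that a set `X` with `|X| ≥ 2` and `λ(X) ≤ 1` has at most one element outside it. Three facts about
`λ` carry the proof.

* A fan has `λ ≤ 2` (`fan_Dle`). If some fan has `λ ≤ 1`, it misses at most one element of `M`,
  and a rank count shows that the fan closes up: the ground set of `M` is a cyclic sequence in
  which consecutive triples are alternately triangles and triads (`fan_not_Dle`). In such a
  matroid orthogonality between circuits and triads determines all circuits, up to the question
  whether the rim is dependent, and `M` is a wheel or a whirl (`Cyc.wheel_or_whirl`). So under the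
  hypotheses every fan has `λ = 2`.

* A subset `X` of a fan with `|X| ≥ 3` and `λ(X) ≤ 2` consists of consecutive elements
  (`interval_of_Dle`). Adding to a set an element spanned or cospanned by it does not increase
  `λ`, and adding one that is both lowers `λ`. If `X` has a gap, then filling it and growing along
  the fan meets an element of the second kind, so the whole fan would have `λ ≤ 1`.

* If an element of a fan with at least four elements lies in a triangle and a triad that share a
  further element `z` outside the fan, then adding `z` to the fan gives the element set of another
  fan (`extend`).

For fans `F` and `G`, let `H` be maximal among the element sets of fans with `F ⊆ H ⊆ F ∪ G`. By
the extension property `H ∩ G` consists of consecutive elements of `G`, so it is a fan and has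
`λ ≤ 2`. Hence both `H ∩ G` and `F` consist of consecutive elements of `H`, and so does
`F ∩ G = F ∩ (H ∩ G)`; thus `λ(F ∩ G) ≤ 2` (`inter_Dle`), and `interval_of_Dle` applied to `F`
and to `G` gives the theorem.
-/

open Matroid Set

universe u

variable {α : Type u}

open PaperDefs

namespace FanProof

/-! ### Ranks of finite sets -/

/-- The rank of a set as a natural number. It is only meaningful for sets of finite rank
(otherwise it is the junk value `0`), and is only used for finite sets. -/
noncomputable def r (M : Matroid α) (X : Set α) : ℕ := (M.eRk X).toNat

lemma coe_r (M : Matroid α) {X : Set α} (hX : X.Finite) : (r M X : ℕ∞) = M.eRk X := by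
  refine ENat.natCast_toNat ?_
  exact ne_top_of_le_ne_top (Set.encard_ne_top_iff.2 hX) (M.eRk_le_encard X)

lemma r_mono (M : Matroid α) {X Y : Set α} (hY : Y.Finite) (h : X ⊆ Y) : r M X ≤ r M Y := by
  have := M.eRk_mono h
  rw [← coe_r M hY, ← coe_r M (hY.subset h)] at this
  exact_mod_cast this

lemma r_le_ncard (M : Matroid α) {X : Set α} (hX : X.Finite) : r M X ≤ X.ncard := by
  have := M.eRk_le_encard X
  rw [← coe_r M hX, ← hX.cast_ncard_eq] at this
  exact_mod_cast this

lemma r_insert_le (M : Matroid α) {X : Set α} (hX : X.Finite) (e : α) :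
    r M (insert e X) ≤ r M X + 1 := by
  have := M.eRk_insert_le_add_one e X
  rw [← coe_r M hX, ← coe_r M (hX.insert e)] at this
  exact_mod_cast this

lemma r_insert_of_mem_closure (M : Matroid α) {X : Set α} {e : α}
    (he : e ∈ M.closure X) : r M (insert e X) = r M X := by
  unfold r
  rw [← M.eRk_closure_eq (insert e X), closure_insert_eq_of_mem_closure he, eRk_closure_eq]

lemma indep_iff_r (M : Matroid α) {X : Set α} (hX : X.Finite) :
    M.Indep X ↔ X.ncard ≤ r M X := by
  rw [indep_iff_eRk_eq_encard_of_finite hX, ← coe_r M hX, ← hX.cast_ncard_eq]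
  have := r_le_ncard M hX
  norm_cast
  omega

/-- If `X ∪ Y` covers a finite ground set then `r✶(X) ≤ |X| + r(Y) - r(M)`. -/
lemma r_dual_le (M : Matroid α) (hE : M.E.Finite) {X Y : Set α} (hX : X ⊆ M.E) (hY : Y.Finite)
    (h : M.E ⊆ X ∪ Y) : r M✶ X + r M M.E ≤ X.ncard + r M Y := by
  have h1 := M.eRk_dual_add_eRank X hX
  have h2 : M.eRk (M.E \ X) ≤ M.eRk Y := M.eRk_mono (by
    intro x hx
    exact (h hx.1).resolve_left hx.2)
  rw [eRank_def, ← coe_r _ (hE.subset hX), ← coe_r _ hE, ← (hE.subset hX).cast_ncard_eq,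
    ← coe_r _ (hE.subset Set.sdiff_subset)] at h1
  rw [← coe_r _ (hE.subset Set.sdiff_subset), ← coe_r _ hY] at h2
  norm_cast at h1 h2
  omega

lemma r_add_r_dual (M : Matroid α) (hE : M.E.Finite) : r M M.E + r M✶ M.E = M.E.ncard := by
  have h := M.eRank_add_eRank_dual
  rw [eRank_def, eRank_def, M.dual_ground, ← coe_r _ hE, ← coe_r _ hE, ← hE.cast_ncard_eq] at h
  exact_mod_cast h

/-- `Dle M X k` says that the connectivity `λ(X) = r(X) + r✶(X) - |X|` is at most `k`. -/
def Dle (M : Matroid α) (X : Set α) (k : ℕ) : Prop := r M X + r M✶ X ≤ X.ncard + k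

lemma Dle.dual {M : Matroid α} {X : Set α} {k : ℕ} (h : Dle M X k) : Dle M✶ X k := by
  unfold Dle at *
  rw [dual_dual]
  omega

/-- A matroid with at least four elements in which no finite set `X` gives a 2-separation.
In contrast to 3-connectedness of infinite matroids, this condition is visibly self-dual. -/
structure Good (M : Matroid α) : Prop where
  four : 4 ≤ M.E.encard
  conn : ∀ X : Set α, X.Finite → X ⊆ M.E → 2 ≤ X.ncard → Dle M X 1 → (M.E \ X).encard ≤ 1

lemma Good.dual {M : Matroid α} (h : Good M) : Good M✶ where
  four := h.four
  conn X h1 h2 h3 h4 := h.conn X h1 h2 h3 (by simpa using h4.dual)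

lemma erk_eq (M : Matroid α) (X : Set α) : erk M X = M.eRk X := by
  unfold erk
  apply le_antisymm
  · refine iSup₂_le fun I hI ↦ ?_
    exact hI.1.encard_le_eRk_of_subset hI.2
  · obtain ⟨I, hI⟩ := M.exists_isBasis' X
    rw [hI.eRk_eq_encard]
    exact le_iSup₂_of_le I ⟨hI.indep, hI.subset⟩ le_rfl

lemma good_of_threeConn {M : Matroid α} (h : ThreeConn M) (h4 : 4 ≤ M.E.encard) : Good M where
  four := h4
  conn X hfin hXE h2 hd := by
    by_contra hcon
    have h2' : 2 ≤ (M.E \ X).encard := by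
      have := Order.add_one_le_of_lt (not_le.1 hcon)
      exact this
    refine h.2 X (M.E \ X) ⟨union_sdiff_cancel hXE, disjoint_sdiff_right, ?_, h2', ?_⟩
    · rw [← hfin.cast_ncard_eq]; exact_mod_cast h2
    · rw [erk_eq, erk_eq, erk_eq, eRk_ground]
      have h1 := M.eRk_dual_add_eRank X hXE
      have hd' : M.eRk X + M✶.eRk X ≤ X.encard + 1 := by
        rw [← coe_r _ hfin, ← coe_r _ hfin, ← hfin.cast_ncard_eq]; exact_mod_cast hd
      have hX : X.encard ≠ ⊤ := Set.encard_ne_top_iff.2 hfin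
      rw [← ENat.add_le_add_iff_right hX]
      calc M.eRk X + M.eRk (M.E \ X) + X.encard = (M.eRk X + M✶.eRk X) + M.eRank := by
            rw [add_assoc, ← h1, add_assoc]
        _ ≤ (X.encard + 1) + M.eRank := by gcongr
        _ = _ := by rw [add_comm M.eRank, add_comm X.encard, add_comm (1 : ℕ∞), add_right_comm]; ring

/-! ### Triangles and triads -/

lemma isCircuit_iff' {M : Matroid α} {C : Set α} : PaperDefs.IsCircuit M C ↔ M.IsCircuit C := by
  rw [isCircuit_iff_forall_ssubset]; rfl

lemma encard_pair_le' (a b : α) : ({a, b} : Set α).encard ≤ 2 :=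
  (Set.encard_insert_le {b} a).trans (by rw [Set.encard_singleton]; rfl)

lemma ncard_pair_le' (a b : α) : ({a, b} : Set α).ncard ≤ 2 :=
  (Set.ncard_insert_le a {b}).trans (by rw [Set.ncard_singleton])

lemma tri_distinct {M : Matroid α} {a b c : α} (h : IsTriangle M {a, b, c}) :
    a ≠ b ∧ a ≠ c ∧ b ≠ c := by
  have h3 := h.2
  have key : ∀ x y : α, ({a, b, c} : Set α) ≠ {x, y} := by
    intro x y hxy
    have := encard_pair_le' x y
    rw [← hxy, h3] at this
    exact absurd this (by decide)
  refine ⟨?_, ?_, ?_⟩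
  · rintro rfl
    exact key a c (by simp)
  · rintro rfl
    exact key a b (by ext; simp; tauto)
  · rintro rfl
    exact key a b (by simp)

lemma tri_subset {M : Matroid α} {T : Set α} (h : IsTriangle M T) : T ⊆ M.E := h.1.1.subset_ground

lemma tri_mem_closure {M : Matroid α} {a b c : α} (h : IsTriangle M {a, b, c}) :
    c ∈ M.closure {a, b} := by
  have hc := (isCircuit_iff'.1 h.1).mem_closure_sdiff_singleton_of_mem (e := c) (by simp)
  obtain ⟨h1, h2, h3⟩ := tri_distinct h
  refine M.closure_subset_closure ?_ hc
  intro x hx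
  simp only [Set.mem_sdiff, Set.mem_insert_iff, Set.mem_singleton_iff] at hx ⊢
  tauto

lemma rot1 (a b c : α) : ({a, b, c} : Set α) = {b, c, a} := by ext; simp; tauto
lemma rot2 (a b c : α) : ({a, b, c} : Set α) = {c, a, b} := by ext; simp; tauto
lemma swp (a b c : α) : ({a, b, c} : Set α) = {c, b, a} := by ext; simp; tauto
lemma swp12 (a b c : α) : ({a, b, c} : Set α) = {b, a, c} := by ext; simp; tauto
lemma swp23 (a b c : α) : ({a, b, c} : Set α) = {a, c, b} := by ext; simp; tauto

lemma Good.pair {M : Matroid α} (h : Good M) {a b : α} (ha : a ∈ M.E) (hb : b ∈ M.E)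
    (hab : a ≠ b) : M.Indep {a, b} := by
  have hfin : ({a, b} : Set α).Finite := by simp
  by_contra hcon
  rw [indep_iff_r _ hfin, Set.ncard_pair hab] at hcon
  have h1 := r_le_ncard M✶ hfin
  rw [Set.ncard_pair hab] at h1
  have hsub : ({a, b} : Set α) ⊆ M.E := by rintro x (rfl | rfl) <;> assumption
  have := h.conn {a, b} hfin hsub (by rw [Set.ncard_pair hab])
    (by unfold Dle; rw [Set.ncard_pair hab]; omega)
  have h4 := h.four
  rw [← Set.encard_sdiff_add_encard_of_subset hsub, Set.encard_pair hab] at h4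
  have : (4 : ℕ∞) ≤ 1 + 2 := h4.trans (by gcongr)
  exact absurd this (by decide)

lemma Good.tri {M : Matroid α} (h : Good M) {a b c : α} (ha : a ∈ M.E) (hb : b ∈ M.E)
    (hc : c ∈ M.E) (hab : a ≠ b) (hac : a ≠ c) (hbc : b ≠ c) (hr : r M {a, b, c} ≤ 2) :
    IsTriangle M {a, b, c} := by
  have hfin : ({a, b, c} : Set α).Finite := by simp
  have h3 : ({a, b, c} : Set α).encard = 3 := Set.encard_eq_three.2 ⟨a, b, c, hab, hac, hbc, rfl⟩
  refine ⟨isCircuit_iff'.2 ?_, h3⟩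
  rw [isCircuit_iff_dep_forall_sdiff_singleton_indep]
  have hsub : ({a, b, c} : Set α) ⊆ M.E := by rintro x (rfl | rfl | rfl) <;> assumption
  refine ⟨?_, ?_⟩
  · rw [← not_indep_iff, indep_iff_r _ hfin]
    have : ({a, b, c} : Set α).ncard = 3 := Set.ncard_eq_three.2 ⟨a, b, c, hab, hac, hbc, rfl⟩
    omega
  · rintro e (rfl | rfl | rfl)
    · exact (h.pair hb hc hbc).subset (by intro x; simp; tauto)
    · exact (h.pair ha hc hac).subset (by intro x; simp; tauto)
    · exact (h.pair ha hb hab).subset (by intro x; simp; tauto)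

lemma r_tri {M : Matroid α} {a b c : α} (h : IsTriangle M {a, b, c}) : r M {a, b, c} ≤ 2 := by
  rw [rot2, r_insert_of_mem_closure _ (tri_mem_closure h)]
  exact (r_le_ncard M (by simp)).trans (ncard_pair_le' a b)

/-- Two triangles sharing the pair `x, y` give a four-point line. -/
lemma Good.tri_line {M : Matroid α} (h : Good M) {x y c d : α} (h1 : IsTriangle M {x, y, c})
    (h2 : IsTriangle M {x, y, d}) (hcd : c ≠ d) : IsTriangle M {x, c, d} := by
  have hc := tri_mem_closure h1
  have hd := tri_mem_closure h2
  obtain ⟨h11, h12, h13⟩ := tri_distinct h1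
  obtain ⟨h21, h22, h23⟩ := tri_distinct h2
  have s1 := tri_subset h1
  have s2 := tri_subset h2
  refine h.tri (s1 (by simp)) (s1 (by simp)) (s2 (by simp)) h12 h22 hcd ?_
  have h3 : r M (insert c (insert d {x, y})) ≤ 2 := by
    rw [r_insert_of_mem_closure _ (M.closure_subset_closure (subset_insert _ _) hc),
      r_insert_of_mem_closure _ hd]
    exact (r_le_ncard M (by simp)).trans (ncard_pair_le' x y)
  refine (r_mono M (by simp) ?_).trans h3
  intro z; simp; tauto

/-- A circuit and a triad cannot meet in exactly one element. -/
lemma orth_circuit {M : Matroid α} {C : Set α} {x u v : α} (hC : M.IsCircuit C)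
    (hK : IsTriangle M✶ {x, u, v}) (hx : x ∈ C) : u ∈ C ∨ v ∈ C := by
  by_contra hcon
  push Not at hcon
  refine hC.inter_isCocircuit_ne_singleton (K := {x, u, v}) (e := x) (isCircuit_iff'.1 hK.1) ?_
  ext z
  simp only [Set.mem_inter_iff, Set.mem_insert_iff, Set.mem_singleton_iff]
  constructor
  · rintro ⟨hz, rfl | rfl | rfl⟩
    · rfl
    · exact absurd hz hcon.1
    · exact absurd hz hcon.2
  · rintro rfl
    exact ⟨hx, by simp⟩

lemma tt_true {M : Matroid α} {T : Set α} : TriOrTriad M true T ↔ IsTriangle M T := Iff.rfl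
lemma tt_false {M : Matroid α} {T : Set α} : TriOrTriad M false T ↔ IsTriangle M✶ T := Iff.rfl

lemma tt_dual {M : Matroid α} {t : Bool} {T : Set α} :
    TriOrTriad M✶ t T ↔ TriOrTriad M (!t) T := by
  cases t
  · simp [tt_true, tt_false]
  · simp [tt_true, tt_false]

lemma tt_distinct {M : Matroid α} {t : Bool} {a b c : α} (h : TriOrTriad M t {a, b, c}) :
    a ≠ b ∧ a ≠ c ∧ b ≠ c := by
  cases t
  · exact tri_distinct (tt_false.1 h)
  · exact tri_distinct (tt_true.1 h)

lemma tt_subset {M : Matroid α} {t : Bool} {T : Set α} (h : TriOrTriad M t T) : T ⊆ M.E := by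
  cases t
  · have := tri_subset (tt_false.1 h)
    exact this
  · exact tri_subset (tt_true.1 h)

/-- Orthogonality between triples of opposite types. -/
lemma orth {M : Matroid α} {t : Bool} {x y w u v : α} (h1 : TriOrTriad M t {x, y, w})
    (h2 : TriOrTriad M (!t) {x, u, v}) : u = y ∨ u = w ∨ v = y ∨ v = w := by
  have hd1 := tt_distinct h2
  have key : u ∈ ({x, y, w} : Set α) ∨ v ∈ ({x, y, w} : Set α) := by
    cases t
    · refine orth_circuit (M := M✶) (isCircuit_iff'.1 h1.1) (x := x) ?_ (by simp)
      rw [dual_dual]; exact h2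
    · exact orth_circuit (M := M) (isCircuit_iff'.1 h1.1) (x := x) h2 (by simp)
  simp only [Set.mem_insert_iff, Set.mem_singleton_iff] at key
  have := hd1.1.symm
  have := hd1.2.1.symm
  tauto

lemma Good.tt_line {M : Matroid α} (h : Good M) {t : Bool} {x y c d : α}
    (h1 : TriOrTriad M t {x, y, c}) (h2 : TriOrTriad M t {x, y, d}) (hcd : c ≠ d) :
    TriOrTriad M t {x, c, d} := by
  cases t
  · exact h.dual.tri_line h1 h2 hcd
  · exact h.tri_line h1 h2 hcd

/-! ### Changing the connectivity by adding one element -/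

lemma Dle.step_plus {M : Matroid α} {X : Set α} {k : ℕ} (hX : X.Finite) (e : α)
    (h : Dle M X k) : Dle M (insert e X) (k + 1) := by
  by_cases he : e ∈ X
  · rw [Set.insert_eq_of_mem he]; unfold Dle at *; omega
  unfold Dle at *
  have h1 := r_insert_le M hX e
  have h2 := r_insert_le M✶ hX e
  rw [Set.ncard_insert_of_notMem he hX]
  omega

lemma tt_r_insert {M : Matroid α} {X : Set α} {a b e : α}
    (h : IsTriangle M {a, b, e}) (ha : a ∈ X) (hb : b ∈ X) :
    r M (insert e X) = r M X := by
  refine r_insert_of_mem_closure _ (M.closure_subset_closure ?_ (tri_mem_closure h))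
  rintro x (rfl | rfl) <;> assumption

lemma Dle.step_zero {M : Matroid α} {X : Set α} {k : ℕ} (hX : X.Finite) {t : Bool} {a b e : α}
    (ht : TriOrTriad M t {a, b, e}) (ha : a ∈ X) (hb : b ∈ X)
    (h : Dle M X k) : Dle M (insert e X) k := by
  by_cases he : e ∈ X
  · rwa [Set.insert_eq_of_mem he]
  unfold Dle at *
  have h1 := r_insert_le M hX e
  have h2 := r_insert_le M✶ hX e
  rw [Set.ncard_insert_of_notMem he hX]
  cases t
  · have := tt_r_insert (tt_false.1 ht) ha hb
    omega
  · have := tt_r_insert (tt_true.1 ht) ha hb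
    omega

lemma Dle.step_minus {M : Matroid α} {X : Set α} {k : ℕ} (hX : X.Finite) {t : Bool}
    {a b c d e : α} (ht : TriOrTriad M t {a, b, e}) (ha : a ∈ X) (hb : b ∈ X)
    (ht' : TriOrTriad M (!t) {c, d, e}) (hc : c ∈ X) (hd : d ∈ X) (he : e ∉ X)
    (h : Dle M X (k + 1)) : Dle M (insert e X) k := by
  unfold Dle at *
  rw [Set.ncard_insert_of_notMem he hX]
  cases t
  · have := tt_r_insert (tt_false.1 ht) ha hb
    have := tt_r_insert (tt_true.1 ht') hc hd
    omega
  · have := tt_r_insert (tt_true.1 ht) ha hb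
    have := tt_r_insert (tt_false.1 ht') hc hd
    omega

/-! ### Fans: duals, reversals, subfans and extensions -/

lemma posBool_one (b : Bool) : posBool b 1 = b := rfl

lemma posBool_succ (b : Bool) (i : ℕ) : posBool b (i + 1) = !posBool b i := by
  unfold posBool
  rcases Nat.mod_two_eq_zero_or_one i with h | h
  · rw [if_pos (by omega), if_neg (by omega)]; simp
  · rw [if_neg (by omega), if_pos (by omega)]

lemma posBool_not (b : Bool) (i : ℕ) : posBool (!b) i = !posBool b i := by
  unfold posBool; split <;> rfl

lemma posBool_odd {b : Bool} {i : ℕ} (h : i % 2 = 1) : posBool b i = b := if_pos h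
lemma posBool_even {b : Bool} {i : ℕ} (h : i % 2 = 0) : posBool b i = !b := if_neg (by omega)

lemma posBool_congr (b : Bool) {i j : ℕ} (h : i % 2 = j % 2) : posBool b i = posBool b j := by
  unfold posBool; rw [h]

lemma fanSet_eq (n : ℕ) (e : ℕ → α) : fanSet n e = e '' Icc 1 n := by
  ext x
  constructor
  · rintro ⟨i, h1, h2, rfl⟩; exact ⟨i, ⟨h1, h2⟩, rfl⟩
  · rintro ⟨i, ⟨h1, h2⟩, rfl⟩; exact ⟨i, h1, h2, rfl⟩

lemma mem_fanSet {n : ℕ} {e : ℕ → α} {i : ℕ} (h1 : 1 ≤ i) (h2 : i ≤ n) : e i ∈ fanSet n e :=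
  ⟨i, h1, h2, rfl⟩

lemma fanSet_finite (n : ℕ) (e : ℕ → α) : (fanSet n e).Finite := by
  rw [fanSet_eq]; exact (finite_Icc 1 n).image e

section
variable {M : Matroid α} {b : Bool} {n : ℕ} {e : ℕ → α}

lemma fan_tt (h : IsFanFun M b n e) {i j k : ℕ} (hi : 1 ≤ i) (hj : j = i + 1) (hk : k = i + 2)
    (hn : k ≤ n) : TriOrTriad M (posBool b i) {e i, e j, e k} := by
  subst hj hk
  exact h.2.2.2 i hi hn

lemma fan_inj (h : IsFanFun M b n e) {i j : ℕ} (hi : 1 ≤ i) (hi' : i ≤ n) (hj : 1 ≤ j)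
    (hj' : j ≤ n) (hij : e i = e j) : i = j := h.2.1 i j hi hi' hj hj' hij

lemma fan_ne (h : IsFanFun M b n e) {i j : ℕ} (hi : 1 ≤ i) (hi' : i ≤ n) (hj : 1 ≤ j)
    (hj' : j ≤ n) (hij : i ≠ j) : e i ≠ e j := fun h' ↦ hij (fan_inj h hi hi' hj hj' h')

lemma fan_subset (h : IsFanFun M b n e) : fanSet n e ⊆ M.E := by
  rintro _ ⟨i, h1, h2, rfl⟩; exact h.2.2.1 i h1 h2

lemma fan_mem (h : IsFanFun M b n e) {i : ℕ} (hi : 1 ≤ i) (hi' : i ≤ n) : e i ∈ M.E :=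
  h.2.2.1 i hi hi'

lemma fan_ncard_Icc (h : IsFanFun M b n e) {x y : ℕ} (hx : 1 ≤ x) (hy : y ≤ n) :
    (e '' Icc x y).ncard = y + 1 - x := by
  rw [Set.InjOn.ncard_image]
  · rw [← Finset.coe_Icc, Set.ncard_coe_finset, Nat.card_Icc]
  · intro i hi j hj hij
    exact fan_inj h (hx.trans hi.1) (hi.2.trans hy) (hx.trans hj.1) (hj.2.trans hy) hij

lemma fan_ncard (h : IsFanFun M b n e) : (fanSet n e).ncard = n := by
  rw [fanSet_eq, fan_ncard_Icc h le_rfl le_rfl]; omega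

lemma fan_dual (h : IsFanFun M b n e) : IsFanFun M✶ (!b) n e := by
  refine ⟨h.1, h.2.1, h.2.2.1, fun i h1 h2 ↦ ?_⟩
  rw [tt_dual, posBool_not, Bool.not_not]
  exact h.2.2.2 i h1 h2

lemma fan_rev (h : IsFanFun M b n e) :
    IsFanFun M (posBool b n) n (fun i ↦ e (n + 1 - i)) := by
  refine ⟨h.1, fun i j h1 h2 h3 h4 h5 ↦ ?_, fun i h1 h2 ↦ h.2.2.1 _ (by omega) (by omega),
    fun i h1 h2 ↦ ?_⟩
  · have := fan_inj h (by omega) (by omega) (by omega) (by omega) h5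
    omega
  · have := fan_tt h (i := n + 1 - (i + 2)) (j := n + 1 - (i + 1)) (k := n + 1 - i)
      (by omega) (by omega) (by omega) (by omega)
    rw [swp] at this
    convert this using 1
    have hb := posBool_succ b
    rcases Nat.mod_two_eq_zero_or_one i with hi | hi
    · rw [posBool_even hi, ← hb]
      exact posBool_congr b (by omega)
    · rw [posBool_odd hi]
      exact posBool_congr b (by omega)

lemma fanSet_rev (n : ℕ) (e : ℕ → α) : fanSet n (fun i ↦ e (n + 1 - i)) = fanSet n e := by
  ext x
  constructor
  · rintro ⟨i, h1, h2, rfl⟩; exact ⟨n + 1 - i, by omega, by omega, rfl⟩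
  · rintro ⟨i, h1, h2, rfl⟩
    exact ⟨n + 1 - i, by omega, by omega, by simp only []; congr 1; omega⟩

lemma fan_sub (h : IsFanFun M b n e) {x y : ℕ} (hx : 1 ≤ x) (hxy : x + 2 ≤ y) (hy : y ≤ n) :
    IsFanFun M (posBool b x) (y + 1 - x) (fun i ↦ e (x - 1 + i)) := by
  refine ⟨by omega, fun i j h1 h2 h3 h4 h5 ↦ ?_, fun i h1 h2 ↦ h.2.2.1 _ (by omega) (by omega),
    fun i h1 h2 ↦ ?_⟩
  · have := fan_inj h (by omega) (by omega) (by omega) (by omega) h5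
    omega
  · have := fan_tt h (i := x - 1 + i) (j := x - 1 + (i + 1)) (k := x - 1 + (i + 2))
      (by omega) (by omega) (by omega) (by omega)
    convert this using 1
    have hb := posBool_succ b
    rcases Nat.mod_two_eq_zero_or_one i with hi | hi
    · rw [posBool_even hi, ← hb]
      exact posBool_congr b (by omega)
    · rw [posBool_odd hi]
      exact posBool_congr b (by omega)

lemma fanSet_sub (e : ℕ → α) {x y : ℕ} (hx : 1 ≤ x) :
    fanSet (y + 1 - x) (fun i ↦ e (x - 1 + i)) = e '' Icc x y := by
  ext a
  constructor
  · rintro ⟨i, h1, h2, rfl⟩; exact ⟨x - 1 + i, ⟨by omega, by omega⟩, rfl⟩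
  · rintro ⟨i, ⟨h1, h2⟩, rfl⟩
    exact ⟨i + 1 - x, by omega, by omega, by simp only []; congr 1; omega⟩

lemma fan_cons (h : IsFanFun M b n e) {z : α} (hz : z ∉ fanSet n e)
    (ht : TriOrTriad M (!b) {z, e 1, e 2}) :
    IsFanFun M (!b) (n + 1) (fun i ↦ if i = 1 then z else e (i - 1)) := by
  have h3 := h.1
  refine ⟨by omega, fun i j h1 h2 h3 h4 h5 ↦ ?_, fun i h1 h2 ↦ ?_, fun i h1 h2 ↦ ?_⟩
  · simp only [] at h5
    split_ifs at h5 with h6 h7 h7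
    · omega
    · exact absurd (h5 ▸ mem_fanSet (by omega) (by omega)) hz
    · exact absurd (h5 ▸ mem_fanSet (by omega) (by omega)) hz
    · have := fan_inj h (by omega) (by omega) (by omega) (by omega) h5
      omega
  · simp only []
    split_ifs with h6
    · exact tt_subset ht (by simp)
    · exact h.2.2.1 _ (by omega) (by omega)
  · simp only []
    rw [if_neg (by omega : ¬ i + 1 = 1), if_neg (by omega : ¬ i + 2 = 1)]
    split_ifs with h6
    · subst h6; exact ht
    · have := fan_tt h (i := i - 1) (j := i + 1 - 1) (k := i + 2 - 1)
        (by omega) (by omega) (by omega) (by omega)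
      convert this using 1
      obtain ⟨j, rfl⟩ : ∃ j, i = j + 1 := ⟨i - 1, by omega⟩
      rw [posBool_succ, posBool_not]; simp

lemma fanSet_cons (z : α) (n : ℕ) (e : ℕ → α) :
    fanSet (n + 1) (fun i ↦ if i = 1 then z else e (i - 1)) = insert z (fanSet n e) := by
  ext a
  constructor
  · rintro ⟨i, h1, h2, rfl⟩
    simp only []
    split_ifs with h
    · exact mem_insert _ _
    · exact mem_insert_of_mem _ (mem_fanSet (by omega) (by omega))
  · rintro (rfl | ⟨i, h1, h2, rfl⟩)
    · exact ⟨1, by omega, by omega, by simp⟩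
    · exact ⟨i + 1, by omega, by omega, by simp; omega⟩

/-! ### Ranks and connectivity of fans -/

lemma Icc_succ_image (e : ℕ → α) {x y : ℕ} (h : x ≤ y + 1) :
    e '' Icc x (y + 1) = insert (e (y + 1)) (e '' Icc x y) := by
  rw [← Set.image_insert_eq]
  congr 1
  ext i
  simp only [mem_Icc, Set.mem_insert_iff]
  omega

/-- The rank of `L` consecutive fan elements, the first of which is a spoke element if
`posBool b (i + 1)` holds and a rim element otherwise. -/
lemma fan_r_Icc (h : IsFanFun M b n e) (i L : ℕ) (hL : i + L ≤ n) :
    r M (e '' Icc (i + 1) (i + L)) ≤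
      if posBool b (i + 1) then L / 2 + 1 else (L + 1) / 2 + 1 := by
  have hfin : ∀ x y, (e '' Icc x y).Finite := fun x y ↦ (finite_Icc x y).image e
  induction L with
  | zero =>
    rw [show Icc (i + 1) (i + 0) = ∅ by ext; simp]
    have := r_le_ncard M (X := e '' ∅) (by simp)
    simp only [Set.image_empty, Set.ncard_empty] at this ⊢
    split_ifs <;> omega
  | succ L ih =>
    have ih := ih (by omega)
    rw [show i + (L + 1) = (i + L) + 1 by ring, Icc_succ_image e (by omega)]
    have h1 := r_insert_le M (hfin (i + 1) (i + L)) (e (i + L + 1))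
    rcases lt_or_ge L 2 with hL2 | hL2
    · have h2 := r_le_ncard M (hfin (i + 1) (i + L))
      rw [fan_ncard_Icc h (by omega) (by omega)] at h2
      have : L = 0 ∨ L = 1 := by omega
      rcases this with rfl | rfl
      · split_ifs <;> omega
      · split_ifs at ih ⊢ <;> omega
    · -- the last three elements form a triangle when their type says so
      have ht := fan_tt h (i := i + L - 1) (j := i + L) (k := i + L + 1) (by omega) (by omega)
        (by omega) (by omega)
      have key : posBool b (i + L - 1) = true →
          r M (insert (e (i + L + 1)) (e '' Icc (i + 1) (i + L)))
            = r M (e '' Icc (i + 1) (i + L)) := by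
        intro hb
        rw [hb] at ht
        exact tt_r_insert (tt_true.1 ht) ⟨_, ⟨by omega, by omega⟩, rfl⟩
          ⟨_, ⟨by omega, by omega⟩, rfl⟩
      rcases Nat.mod_two_eq_zero_or_one L with hp | hp
      · have : posBool b (i + L - 1) = posBool b (i + 1) := posBool_congr b (by omega)
        rw [this] at key
        split_ifs at ih ⊢ with hb
        · rw [key hb]; omega
        · omega
      · have : posBool b (i + L - 1) = !posBool b (i + 1) := by
          rw [← posBool_succ]; exact posBool_congr b (by omega)
        rw [this] at key
        split_ifs at ih ⊢ with hb
        · omega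
        · rw [key (by simpa using hb)]; omega

/-- `fan_r_Icc` with explicit end points. -/
lemma fan_r (h : IsFanFun M b n e) {x y : ℕ} (hx : 1 ≤ x) (hxy : x ≤ y + 1) (hy : y ≤ n) :
    r M (e '' Icc x y) ≤
      if posBool b x then (y + 1 - x) / 2 + 1 else (y + 2 - x) / 2 + 1 := by
  have := fan_r_Icc h (x - 1) (y + 1 - x) (by omega)
  rw [show x - 1 + 1 = x by omega, show x - 1 + (y + 1 - x) = y by omega,
    show y + 1 - x + 1 = y + 2 - x by omega] at this
  exact this

lemma fan_r_dual (h : IsFanFun M b n e) {x y : ℕ} (hx : 1 ≤ x) (hxy : x ≤ y + 1) (hy : y ≤ n) :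
    r M✶ (e '' Icc x y) ≤
      if posBool b x then (y + 2 - x) / 2 + 1 else (y + 1 - x) / 2 + 1 := by
  have := fan_r (fan_dual h) hx hxy hy
  rw [posBool_not] at this
  cases hb : posBool b x <;> simpa [hb] using this

/-- The connectivity of a fan is at most two. -/
lemma fan_Dle (h : IsFanFun M b n e) : Dle M (fanSet n e) 2 := by
  have h1 := fan_r h (x := 1) (y := n) le_rfl (by omega) le_rfl
  have h2 := fan_r_dual h (x := 1) (y := n) le_rfl (by omega) le_rfl
  unfold Dle
  rw [fan_ncard h, fanSet_eq]
  split_ifs at h1 h2 <;> omega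

lemma fan_Dle_Icc (h : IsFanFun M b n e) {x y : ℕ} (hx : 1 ≤ x) (hxy : x + 2 ≤ y) (hy : y ≤ n) :
    Dle M (e '' Icc x y) 2 := by
  rw [← fanSet_sub e hx]
  exact fan_Dle (fan_sub h hx hxy hy)

end

/-! ### Fans of connectivity at most one -/

/-- The ground set is a cyclic fan of even length: every three cyclically consecutive elements
form alternately a triangle and a triad. By Tutte, such a matroid is a wheel or a whirl
(`Cyc.wheel_or_whirl`). -/
def Cyc (M : Matroid α) : Prop :=
  ∃ (b : Bool) (k : ℕ) (e : ℕ → α), 2 ≤ k ∧ IsFanFun M b (2 * k) e ∧ M.E = fanSet (2 * k) e ∧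
    TriOrTriad M b {e (2 * k - 1), e (2 * k), e 1} ∧ TriOrTriad M (!b) {e (2 * k), e 1, e 2}

lemma Cyc.of_dual {M : Matroid α} (h : Cyc M✶) : Cyc M := by
  obtain ⟨b, k, e, hk, hf, hE, h1, h2⟩ := h
  refine ⟨!b, k, e, hk, ?_, hE, tt_dual.1 h1, tt_dual.1 h2⟩
  simpa using fan_dual hf

lemma Good.r_pair {M : Matroid α} (h : Good M) {a b : α} (ha : a ∈ M.E) (hb : b ∈ M.E)
    (hab : a ≠ b) : 2 ≤ r M {a, b} := by
  have := (indep_iff_r M (by simp)).1 (h.pair ha hb hab)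
  rwa [Set.ncard_pair hab] at this

lemma Good.r_single {M : Matroid α} (h : Good M) {a b : α} (ha : a ∈ M.E) (hb : b ∈ M.E)
    (hab : a ≠ b) : 1 ≤ r M {a} := by
  have := (indep_iff_r M (by simp)).1 ((h.pair ha hb hab).subset (I := {a}) (by simp))
  rwa [Set.ncard_singleton] at this

/-- The complement of a non-spanning set is a triad as soon as it has three elements. -/
lemma Good.triad_of_cover {M : Matroid α} (h : Good M) (hE : M.E.Finite) {a b c : α} {Y : Set α}
    (ha : a ∈ M.E) (hb : b ∈ M.E) (hc : c ∈ M.E) (hab : a ≠ b) (hac : a ≠ c) (hbc : b ≠ c)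
    (hY : Y.Finite) (hcov : M.E ⊆ {a, b, c} ∪ Y) (hr : r M Y + 1 ≤ r M M.E) :
    IsTriangle M✶ {a, b, c} := by
  refine h.dual.tri ha hb hc hab hac hbc ?_
  have := r_dual_le M hE (X := {a, b, c}) (Y := Y)
    (by rintro x (rfl | rfl | rfl) <;> assumption) hY hcov
  rw [Set.ncard_eq_three.2 ⟨a, b, c, hab, hac, hbc, rfl⟩] at this
  omega

lemma Good.tri_of_cover {M : Matroid α} (h : Good M) (hE : M.E.Finite) {a b c : α} {Y : Set α}
    (ha : a ∈ M.E) (hb : b ∈ M.E) (hc : c ∈ M.E) (hab : a ≠ b) (hac : a ≠ c) (hbc : b ≠ c)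
    (hY : Y.Finite) (hcov : M.E ⊆ {a, b, c} ∪ Y) (hr : r M✶ Y + 1 ≤ r M✶ M.E) :
    IsTriangle M {a, b, c} := by
  have := h.dual.triad_of_cover (Y := Y) hE ha hb hc hab hac hbc hY hcov hr
  rwa [dual_dual] at this

lemma fin_img (e : ℕ → α) (x y : ℕ) : (e '' Icc x y).Finite := (finite_Icc x y).image e

/-- A covering statement for a fan: every index is either in the interval or one of the listed. -/
lemma cover_of {n : ℕ} {e : ℕ → α} {X : Set α} {x y : ℕ}
    (hX : ∀ i, 1 ≤ i → i ≤ n → ¬ (x ≤ i ∧ i ≤ y) → e i ∈ X) :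
    fanSet n e ⊆ X ∪ e '' Icc x y := by
  rintro _ ⟨i, h1, h2, rfl⟩
  by_cases h : x ≤ i ∧ i ≤ y
  · exact Or.inr ⟨i, h, rfl⟩
  · exact Or.inl (hX i h1 h2 h)

lemma cyc_of_odd {M : Matroid α} (hG : Good M) {k : ℕ} {e : ℕ → α} {y : α}
    (h : IsFanFun M true (2 * k + 1) e) (hy : y ∉ fanSet (2 * k + 1) e)
    (hE : M.E = insert y (fanSet (2 * k + 1) e)) : Cyc M := by
  have hk : 1 ≤ k := by have := h.1; omega
  have hEf : M.E.Finite := hE ▸ (fanSet_finite _ _).insert y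
  have hyE : y ∈ M.E := hE ▸ mem_insert _ _
  have hsum := r_add_r_dual M hEf
  rw [hE, Set.ncard_insert_of_notMem hy (fanSet_finite _ _), fan_ncard h, ← hE] at hsum
  have hyne : ∀ i, 1 ≤ i → i ≤ 2 * k + 1 → e i ≠ y :=
    fun i h1 h2 h' ↦ hy (h' ▸ mem_fanSet h1 h2)
  have h1 := r_dual_le M hEf (X := {y}) (Y := fanSet (2 * k + 1) e) (by simpa using hyE)
    (fanSet_finite _ _) (by rw [hE]; rfl)
  have h2 := hG.dual.r_single hyE (fan_mem h (i := 1) le_rfl (by omega))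
    (hyne 1 le_rfl (by omega)).symm
  have h3 := fan_r h (x := 1) (y := 2 * k + 1) le_rfl (by omega) le_rfl
  rw [← fanSet_eq] at h3
  rw [Set.ncard_singleton] at h1
  have hcov : ∀ {X : Set α} {x z : ℕ}, y ∈ X →
      (∀ i, 1 ≤ i → i ≤ 2 * k + 1 → ¬ (x ≤ i ∧ i ≤ z) → e i ∈ X) → M.E ⊆ X ∪ e '' Icc x z := by
    intro X x z hyX hX
    rw [hE]
    exact Set.insert_subset (Or.inl hyX) (cover_of hX)
  have e1 := fan_mem h (i := 1) le_rfl (by omega)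
  have en := fan_mem h (i := 2 * k + 1) (by omega) le_rfl
  have hne := fan_ne h (i := 1) (j := 2 * k + 1) le_rfl (by omega) (by omega) le_rfl (by omega)
  have hcov1 : M.E ⊆ {e 1, e (2 * k + 1), y} ∪ e '' Icc 2 (2 * k) := by
    refine hcov (by simp) fun i hi hi' hi'' ↦ ?_
    have : i = 1 ∨ i = 2 * k + 1 := by omega
    rcases this with rfl | rfl <;> simp
  have h4 := r_dual_le M✶ (X := {e 1, e (2 * k + 1), y}) hEf
    (by rintro x (rfl | rfl | rfl) <;> assumption) (fin_img e 2 (2 * k)) hcov1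
  rw [dual_dual, dual_ground, Set.ncard_eq_three.2 ⟨_, _, _, hne, hyne 1 le_rfl (by omega),
    hyne _ (by omega) le_rfl, rfl⟩] at h4
  have h5 := fan_r_dual h (x := 2) (y := 2 * k) (by omega) (by omega) (by omega)
  have h6 : 2 ≤ r M {e 1, e (2 * k + 1), y} :=
    (hG.r_pair e1 en hne).trans (r_mono M (by simp) (by intro x; simp; tauto))
  have p2 : posBool true 2 = false := rfl
  have p1 : posBool true 1 = true := rfl
  have p3 : posBool true 3 = true := rfl
  rw [p2, if_neg (by simp)] at h5
  rw [p1, if_pos rfl] at h3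
  have hr : r M M.E = k + 1 := by omega
  have hr' : r M✶ M.E = k + 1 := by omega
  have t1 : IsTriangle M {e 1, e (2 * k + 1), y} :=
    hG.tri e1 en hyE hne (hyne 1 le_rfl (by omega)) (hyne _ (by omega) le_rfl) (by omega)
  have t2 : IsTriangle M✶ {y, e 1, e 2} := by
    refine hG.triad_of_cover hEf hyE e1 (fan_mem h (by omega) (by omega))
      (hyne 1 (by omega) (by omega)).symm (hyne 2 (by omega) (by omega)).symm
      (fan_ne h (by omega) (by omega) (by omega) (by omega) (by omega))
      (fin_img e 3 (2 * k + 1)) (hcov (by simp) fun i hi hi' hi'' ↦ ?_) ?_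
    · have : i = 1 ∨ i = 2 := by omega
      rcases this with rfl | rfl <;> simp
    · have := fan_r h (x := 3) (y := 2 * k + 1) (by omega) (by omega) (by omega)
      rw [p3, if_pos rfl] at this
      omega
  have t3 : IsTriangle M✶ {e (2 * k), e (2 * k + 1), y} := by
    refine hG.triad_of_cover hEf (fan_mem h (by omega) (by omega)) en hyE
      (fan_ne h (by omega) (by omega) (by omega) (by omega) (by omega))
      (hyne _ (by omega) (by omega)) (hyne _ (by omega) (by omega))
      (fin_img e 1 (2 * k - 1)) (hcov (by simp) fun i hi hi' hi'' ↦ ?_) ?_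
    · have : i = 2 * k ∨ i = 2 * k + 1 := by omega
      rcases this with rfl | rfl <;> simp
    · have := fan_r h (x := 1) (y := 2 * k - 1) (by omega) (by omega) (by omega)
      rw [p1, if_pos rfl] at this
      omega
  refine ⟨false, k + 1, fun i ↦ if i = 1 then y else e (i - 1), by omega,
    fan_cons h hy (tt_false.2 t2), ?_, ?_, ?_⟩
  · rw [hE, ← fanSet_cons]; rfl
  · simp only [if_true]
    rw [if_neg (by omega), if_neg (by omega)]
    exact t3
  · simp only [if_true]
    rw [if_neg (by omega), if_neg (by omega)]
    rw [rot1] at t1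
    exact t1

/-- In a matroid that is not a cyclic fan, no set is both a triangle and a triad. -/
lemma Good.not_both {M : Matroid α} (hG : Good M) (hC : ¬ Cyc M) {a b c : α}
    (h1 : IsTriangle M {a, b, c}) (h2 : IsTriangle M✶ {a, b, c}) : False := by
  obtain ⟨hab, hac, hbc⟩ := tri_distinct h1
  let e : ℕ → α := fun i ↦ if i = 1 then a else if i = 2 then b else c
  have hsub := tri_subset h1
  have hfan : IsFanFun M true (2 * 1 + 1) e := by
    refine ⟨le_rfl, ?_, ?_, ?_⟩
    · intro i j hi hi' hj hj' hij
      interval_cases i <;> interval_cases j <;> simp_all [e]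
    · intro i hi hi'
      interval_cases i
      · exact hsub (by simp [e])
      · exact hsub (by simp [e])
      · exact hsub (by simp [e])
    · intro i hi hi'
      obtain rfl : i = 1 := by omega
      exact h1
  have hF : fanSet (2 * 1 + 1) e = {a, b, c} := by
    ext x
    constructor
    · rintro ⟨i, hi, hi', rfl⟩
      interval_cases i <;> simp [e]
    · rintro (rfl | rfl | rfl)
      · exact ⟨1, by omega, by omega, rfl⟩
      · exact ⟨2, by omega, by omega, rfl⟩
      · exact ⟨3, by omega, by omega, rfl⟩
  have hn : ({a, b, c} : Set α).ncard = 3 := Set.ncard_eq_three.2 ⟨a, b, c, hab, hac, hbc, rfl⟩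
  have := hG.conn {a, b, c} (by simp) hsub (by omega) (by
    have := r_tri h1
    have := r_tri h2
    unfold Dle; omega)
  rw [Set.encard_le_one_iff_eq] at this
  rcases this with h0 | ⟨y, hy⟩
  · have h4 := hG.four
    have : M.E ⊆ {a, b, c} := by rwa [← Set.sdiff_eq_empty]
    have := (h4.trans (Set.encard_le_encard this)).trans_eq h1.2
    exact absurd this (by decide)
  · have hy' : y ∈ M.E \ {a, b, c} := hy ▸ rfl
    refine hC (cyc_of_odd hG (y := y) hfan (by rw [hF]; exact hy'.2) ?_)
    rw [hF, ← Set.singleton_union, ← hy, Set.sdiff_union_of_subset hsub]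

lemma fan_odd_false {M : Matroid α} (hG : Good M) (hC : ¬ Cyc M) {k : ℕ} {e : ℕ → α}
    (h : IsFanFun M true (2 * k + 1) e) (hE : M.E = fanSet (2 * k + 1) e) : False := by
  have hk : 1 ≤ k := by have := h.1; omega
  have hEf : M.E.Finite := hE ▸ fanSet_finite _ _
  have hsum := r_add_r_dual M hEf
  rw [hE, fan_ncard h, ← hE] at hsum
  have h3 := fan_r h (x := 1) (y := 2 * k + 1) le_rfl (by omega) le_rfl
  rw [← fanSet_eq, ← hE] at h3
  have e1 := fan_mem h (i := 1) le_rfl (by omega)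
  have en := fan_mem h (i := 2 * k + 1) (by omega) le_rfl
  have hne := fan_ne h (i := 1) (j := 2 * k + 1) le_rfl (by omega) (by omega) le_rfl (by omega)
  have hcov1 : M.E ⊆ {e 1, e (2 * k + 1)} ∪ e '' Icc 2 (2 * k) := by
    rw [hE]
    refine cover_of fun i hi hi' hi'' ↦ ?_
    have : i = 1 ∨ i = 2 * k + 1 := by omega
    rcases this with rfl | rfl <;> simp
  have h4 := r_dual_le M✶ (X := {e 1, e (2 * k + 1)}) hEf
    (by rintro x (rfl | rfl) <;> assumption) (fin_img e 2 (2 * k)) hcov1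
  rw [dual_dual, dual_ground, Set.ncard_pair hne] at h4
  have h5 := fan_r_dual h (x := 2) (y := 2 * k) (by omega) (by omega) (by omega)
  have h6 := hG.r_pair e1 en hne
  rw [show posBool true 2 = false from rfl, if_neg (by simp)] at h5
  rw [posBool_one, if_pos rfl] at h3
  refine hG.not_both hC (h.2.2.2 1 (by omega) (by omega)) ?_
  refine hG.triad_of_cover hEf e1 (fan_mem h (by omega) (by omega))
    (fan_mem h (by omega) (by omega))
    (fan_ne h (by omega) (by omega) (by omega) (by omega) (by omega))
    (fan_ne h (by omega) (by omega) (by omega) (by omega) (by omega))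
    (fan_ne h (by omega) (by omega) (by omega) (by omega) (by omega))
    (fin_img e 4 (2 * k + 1)) (hE.subset.trans (cover_of fun i hi hi' hi'' ↦ ?_)) ?_
  · have : i = 1 ∨ i = 2 ∨ i = 3 := by omega
    rcases this with rfl | rfl | rfl <;> simp
  · have := fan_r h (x := 4) (y := 2 * k + 1) (by omega) (by omega) (by omega)
    rw [show posBool true 4 = false from rfl, if_neg (by simp)] at this
    omega

/-- Reversing an even fan and dualising preserves its type. -/
lemma fan_rev_dual {M : Matroid α} {k : ℕ} {e : ℕ → α} (h : IsFanFun M true (2 * k) e) :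
    IsFanFun M✶ true (2 * k) (fun i ↦ e (2 * k + 1 - i)) := by
  have := fan_dual (fan_rev h)
  rwa [posBool_even (by omega)] at this

lemma fan_even_r_le {M : Matroid α} (hG : Good M) (hC : ¬ Cyc M) {k : ℕ} {e : ℕ → α}
    (h : IsFanFun M true (2 * k) e) (hE : M.E = fanSet (2 * k) e) : r M M.E ≤ k := by
  have hk : 2 ≤ k := by have := h.1; omega
  have hEf : M.E.Finite := hE ▸ fanSet_finite _ _
  by_contra hcon
  refine hG.not_both hC (h.2.2.2 1 (by omega) (by omega)) ?_
  refine hG.triad_of_cover hEf (fan_mem h (by omega) (by omega)) (fan_mem h (by omega) (by omega))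
    (fan_mem h (by omega) (by omega))
    (fan_ne h (by omega) (by omega) (by omega) (by omega) (by omega))
    (fan_ne h (by omega) (by omega) (by omega) (by omega) (by omega))
    (fan_ne h (by omega) (by omega) (by omega) (by omega) (by omega))
    (fin_img e 4 (2 * k)) (hE.subset.trans (cover_of fun i hi hi' hi'' ↦ ?_)) ?_
  · have : i = 1 ∨ i = 2 ∨ i = 3 := by omega
    rcases this with rfl | rfl | rfl <;> simp
  · have := fan_r h (x := 4) (y := 2 * k) (by omega) (by omega) (by omega)
    rw [show posBool true 4 = false from rfl, if_neg (by simp)] at this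
    omega

lemma fan_even_false {M : Matroid α} (hG : Good M) (hC : ¬ Cyc M) {k : ℕ} {e : ℕ → α}
    (h : IsFanFun M true (2 * k) e) (hE : M.E = fanSet (2 * k) e) : False := by
  have hk : 2 ≤ k := by have := h.1; omega
  have hEf : M.E.Finite := hE ▸ fanSet_finite _ _
  have hsum := r_add_r_dual M hEf
  rw [hE, fan_ncard h, ← hE] at hsum
  have h1 := fan_even_r_le hG hC h hE
  have h2 := fan_even_r_le hG.dual (fun h' ↦ hC h'.of_dual) (fan_rev_dual h)
    (by rw [fanSet_rev]; exact hE)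
  rw [dual_ground] at h2
  refine hC ⟨true, k, e, hk, h, hE, ?_, ?_⟩
  · refine hG.tri_of_cover hEf (fan_mem h (by omega) (by omega))
      (fan_mem h (by omega) (by omega)) (fan_mem h (by omega) (by omega))
      (fan_ne h (by omega) (by omega) (by omega) (by omega) (by omega))
      (fan_ne h (by omega) (by omega) (by omega) (by omega) (by omega))
      (fan_ne h (by omega) (by omega) (by omega) (by omega) (by omega))
      (fin_img e 2 (2 * k - 2)) (hE.subset.trans (cover_of fun i hi hi' hi'' ↦ ?_)) ?_
    · have : i = 2 * k - 1 ∨ i = 2 * k ∨ i = 1 := by omega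
      rcases this with rfl | rfl | rfl <;> simp
    · have := fan_r_dual h (x := 2) (y := 2 * k - 2) (by omega) (by omega) (by omega)
      rw [show posBool true 2 = false from rfl, if_neg (by simp)] at this
      omega
  · refine hG.triad_of_cover hEf (fan_mem h (by omega) (by omega))
      (fan_mem h (by omega) (by omega)) (fan_mem h (by omega) (by omega))
      (fan_ne h (by omega) (by omega) (by omega) (by omega) (by omega))
      (fan_ne h (by omega) (by omega) (by omega) (by omega) (by omega))
      (fan_ne h (by omega) (by omega) (by omega) (by omega) (by omega))
      (fin_img e 3 (2 * k - 1)) (hE.subset.trans (cover_of fun i hi hi' hi'' ↦ ?_)) ?_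
    · have : i = 2 * k ∨ i = 1 ∨ i = 2 := by omega
      rcases this with rfl | rfl | rfl <;> simp
    · have := fan_r h (x := 3) (y := 2 * k - 1) (by omega) (by omega) (by omega)
      rw [show posBool true 3 = true from rfl, if_pos rfl] at this
      omega

lemma fan_even_insert_r_le {M : Matroid α} (hG : Good M) {k : ℕ} {e : ℕ → α} {y : α}
    (h : IsFanFun M true (2 * k) e) (hy : y ∉ fanSet (2 * k) e)
    (hE : M.E = insert y (fanSet (2 * k) e)) : r M✶ M.E ≤ k := by
  have hk : 2 ≤ k := by have := h.1; omega
  have hEf : M.E.Finite := hE ▸ (fanSet_finite _ _).insert y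
  have hyE : y ∈ M.E := hE ▸ mem_insert _ _
  have e1 := fan_mem h (i := 1) le_rfl (by omega)
  have hne : e 1 ≠ y := fun h' ↦ hy (h' ▸ mem_fanSet (by omega) (by omega))
  have hcov1 : M.E ⊆ {e 1, y} ∪ e '' Icc 2 (2 * k) := by
    rw [hE]
    refine Set.insert_subset (by simp) (cover_of fun i hi hi' hi'' ↦ ?_)
    have : i = 1 := by omega
    subst this; simp
  have h4 := r_dual_le M✶ (X := {e 1, y}) hEf
    (by rintro x (rfl | rfl) <;> assumption) (fin_img e 2 (2 * k)) hcov1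
  rw [dual_dual, dual_ground, Set.ncard_pair hne] at h4
  have h5 := fan_r_dual h (x := 2) (y := 2 * k) (by omega) (by omega) (by omega)
  have h6 := hG.r_pair e1 hyE hne
  rw [show posBool true 2 = false from rfl, if_neg (by simp)] at h5
  omega

lemma fan_even_insert_false {M : Matroid α} (hG : Good M) {k : ℕ} {e : ℕ → α} {y : α}
    (h : IsFanFun M true (2 * k) e) (hy : y ∉ fanSet (2 * k) e)
    (hE : M.E = insert y (fanSet (2 * k) e)) : False := by
  have hEf : M.E.Finite := hE ▸ (fanSet_finite _ _).insert y
  have hsum := r_add_r_dual M hEf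
  rw [hE, Set.ncard_insert_of_notMem hy (fanSet_finite _ _), fan_ncard h, ← hE] at hsum
  have h1 := fan_even_insert_r_le hG h hy hE
  have h2 := fan_even_insert_r_le hG.dual (fan_rev_dual h) (by rw [fanSet_rev]; exact hy)
    (by rw [fanSet_rev]; exact hE)
  rw [dual_dual, dual_ground] at h2
  omega

lemma fan_not_Dle_true {M : Matroid α} (hG : Good M) (hC : ¬ Cyc M) {n : ℕ} {e : ℕ → α}
    (h : IsFanFun M true n e) : ¬ Dle M (fanSet n e) 1 := by
  intro hd
  have h3 := h.1
  have hsub := fan_subset h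
  have := hG.conn _ (fanSet_finite n e) hsub (by rw [fan_ncard h]; omega) hd
  rw [Set.encard_le_one_iff_eq] at this
  obtain ⟨k, hk | hk⟩ := Nat.even_or_odd' n
  · subst hk
    rcases this with h0 | ⟨y, hy⟩
    · exact fan_even_false hG hC h (subset_antisymm (Set.sdiff_eq_empty.1 h0) hsub)
    · have hy' : y ∈ M.E \ fanSet (2 * k) e := hy ▸ rfl
      refine fan_even_insert_false hG h hy'.2 ?_
      rw [← Set.singleton_union, ← hy, Set.sdiff_union_of_subset hsub]
  · subst hk
    rcases this with h0 | ⟨y, hy⟩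
    · exact fan_odd_false hG hC h (subset_antisymm (Set.sdiff_eq_empty.1 h0) hsub)
    · have hy' : y ∈ M.E \ fanSet (2 * k + 1) e := hy ▸ rfl
      refine hC (cyc_of_odd hG h hy'.2 ?_)
      rw [← Set.singleton_union, ← hy, Set.sdiff_union_of_subset hsub]

/-- Unless the matroid is a cyclic fan, every fan has connectivity exactly two. -/
lemma fan_not_Dle {M : Matroid α} (hG : Good M) (hC : ¬ Cyc M) {b : Bool} {n : ℕ} {e : ℕ → α}
    (h : IsFanFun M b n e) : ¬ Dle M (fanSet n e) 1 := by
  cases b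
  · exact fun hd ↦ fan_not_Dle_true hG.dual (fun h' ↦ hC h'.of_dual) (fan_dual h) hd.dual
  · exact fan_not_Dle_true hG hC h

/-! ### Subsets of a fan of connectivity two are intervals -/

section
variable {M : Matroid α} {b : Bool} {n : ℕ} {e : ℕ → α}

/-- Once two consecutive elements of a fan are present, the following elements can be added
without increasing the connectivity. -/
lemma grow_up (h : IsFanFun M b n e) {Y : Set α} (hY : Y.Finite) {i k : ℕ} (hi : 1 ≤ i)
    (h1 : e i ∈ Y) (h2 : e (i + 1) ∈ Y) (hd : Dle M Y k) (j : ℕ) (hj : j ≤ n) :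
    Dle M (Y ∪ e '' Icc i j) k := by
  induction j with
  | zero =>
    rwa [show Icc i 0 = ∅ from Icc_eq_empty (by omega), Set.image_empty, Set.union_empty]
  | succ j ih =>
    have ih := ih (by omega)
    by_cases hji : j + 1 ≤ i + 1
    · rwa [Set.union_eq_self_of_subset_right]
      rintro _ ⟨l, ⟨hl, hl'⟩, rfl⟩
      have : l = i ∨ l = i + 1 := by omega
      rcases this with rfl | rfl <;> assumption
    · rw [Icc_succ_image e (by omega), Set.union_insert]
      exact ih.step_zero (hY.union (fin_img e i j))
        (fan_tt h (i := j - 1) (j := j) (k := j + 1) (by omega) (by omega) (by omega) hj)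
        (Or.inr ⟨_, ⟨by omega, by omega⟩, rfl⟩) (Or.inr ⟨_, ⟨by omega, by omega⟩, rfl⟩)

lemma rev_image (e : ℕ → α) {n x y : ℕ} (hx : 1 ≤ x) (hy : y ≤ n) :
    (fun i ↦ e (n + 1 - i)) '' Icc x y = e '' Icc (n + 1 - y) (n + 1 - x) := by
  ext a
  constructor
  · rintro ⟨i, ⟨h1, h2⟩, rfl⟩; exact ⟨n + 1 - i, ⟨by omega, by omega⟩, rfl⟩
  · rintro ⟨i, ⟨h1, h2⟩, rfl⟩
    exact ⟨n + 1 - i, ⟨by omega, by omega⟩, by simp only []; congr 1; omega⟩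

lemma grow (h : IsFanFun M b n e) {Y : Set α} (hY : Y.Finite) {i k : ℕ} (hi : 1 ≤ i)
    (hin : i + 1 ≤ n) (h1 : e i ∈ Y) (h2 : e (i + 1) ∈ Y) (hd : Dle M Y k) :
    Dle M (Y ∪ fanSet n e) k := by
  have h3 := grow_up h hY hi h1 h2 hd n le_rfl
  have h4 := grow_up (fan_rev h) (hY.union (fin_img e i n)) (i := n - i) (by omega)
    (Or.inl (by simpa [show n + 1 - (n - i) = i + 1 by omega] using h2))
    (Or.inl (by simpa [show n - (n - i) = i by omega] using h1)) h3 n le_rfl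
  rw [rev_image e (by omega) le_rfl] at h4
  convert h4 using 1
  rw [Set.union_assoc, ← Set.image_union, fanSet_eq]
  congr 2
  ext l
  simp only [mem_Icc, Set.mem_union]
  omega

/-- Growing a pair `e p, e (p + 1)` towards a later element `e c` whose predecessor is missing
decreases the connectivity. -/
lemma grow_join (h : IsFanFun M b n e) {Y : Set α} (hY : Y.Finite) {p c k : ℕ} (hp : 1 ≤ p)
    (hpc : p + 3 ≤ c) (hc : c ≤ n) (h1 : e p ∈ Y) (h2 : e (p + 1) ∈ Y) (h3 : e c ∈ Y)
    (h4 : e (c - 1) ∉ Y) (hd : Dle M Y (k + 1)) : Dle M (Y ∪ e '' Icc p c) k := by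
  have h5 := grow_up h hY hp h1 h2 hd (c - 2) (by omega)
  have t1 := fan_tt h (i := c - 3) (j := c - 2) (k := c - 1) (by omega) (by omega) (by omega)
    (by omega)
  have t2 := fan_tt h (i := c - 2) (j := c - 1) (k := c) (by omega) (by omega) (by omega)
    (by omega)
  rw [show c - 2 = (c - 3) + 1 by omega, posBool_succ, show c - 3 + 1 = c - 2 by omega,
    swp23] at t2
  have h6 : e (c - 1) ∉ Y ∪ e '' Icc p (c - 2) := by
    rintro (h' | ⟨l, ⟨hl, hl'⟩, hl''⟩)
    · exact h4 h'
    · have := fan_inj h (by omega) (by omega) (by omega) (by omega) hl''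
      omega
  have h7 := h5.step_minus (hY.union (fin_img e p (c - 2))) t1
    (Or.inr ⟨_, ⟨by omega, by omega⟩, rfl⟩) (Or.inr ⟨_, ⟨by omega, by omega⟩, rfl⟩)
    t2 (Or.inr ⟨_, ⟨by omega, by omega⟩, rfl⟩) (Or.inl h3) h6
  convert h7 using 1
  have e1 := Icc_succ_image e (x := p) (y := c - 1) (by omega)
  have e2 := Icc_succ_image e (x := p) (y := c - 2) (by omega)
  rw [show c - 1 + 1 = c by omega] at e1
  rw [show c - 2 + 1 = c - 1 by omega] at e2
  rw [e1, e2, Set.union_insert, Set.union_insert, Set.insert_eq_of_mem]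
  exact Or.inr (Or.inl h3)

/-- A gap between `e p` and `e q` can be filled so that `e (q - 1)` is included, without
increasing the connectivity. -/
lemma fill_gap (h : IsFanFun M b n e) {X : Set α} (hX : X.Finite) {p q k : ℕ} (hp : 1 ≤ p)
    (hpq : p + 2 ≤ q) (hq : q ≤ n) (h1 : e p ∈ X) (h2 : e q ∈ X)
    (h3 : ∀ i, p < i → i < q → e i ∉ X) (hd : Dle M X k) :
    ∃ Y, X ⊆ Y ∧ Y ⊆ X ∪ e '' Icc p q ∧ e (q - 1) ∈ Y ∧ Dle M Y k := by
  rcases Nat.eq_or_lt_of_le hpq with rfl | hpq'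
  · refine ⟨insert (e (p + 1)) X, subset_insert _ _, ?_, mem_insert _ _, ?_⟩
    · exact Set.insert_subset (Or.inr ⟨_, ⟨by omega, by omega⟩, rfl⟩) subset_union_left
    · have := fan_tt h (i := p) (j := p + 1) (k := p + 2) hp rfl rfl hq
      rw [swp23] at this
      exact hd.step_zero hX this h1 h2
  · refine ⟨insert (e (p + 1)) X ∪ e '' Icc p q, ?_, ?_, Or.inr ⟨_, ⟨by omega, by omega⟩, rfl⟩, ?_⟩
    · exact (subset_insert _ _).trans subset_union_left
    · refine Set.union_subset (Set.insert_subset ?_ subset_union_left) subset_union_right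
      exact Or.inr ⟨_, ⟨by omega, by omega⟩, rfl⟩
    · refine grow_join h (hX.insert _) hp (by omega) hq (Or.inr h1) (Or.inl rfl) (Or.inr h2) ?_
        (hd.step_plus hX _)
      rintro (h' | h')
      · have := fan_inj h (by omega) (by omega) (by omega) (by omega) h'
        omega
      · exact h3 _ (by omega) (by omega) h'

/-- If `X` has a gap between `e p` and `e q` and contains an element after `e q`, then the
connectivity of the fan is smaller than that of `X`. -/
lemma gap_right (h : IsFanFun M b n e) {X : Set α} (hX : X ⊆ fanSet n e) {p q k : ℕ}
    (hp : 1 ≤ p) (hpq : p + 2 ≤ q) (hq : q ≤ n) (h1 : e p ∈ X) (h2 : e q ∈ X)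
    (h3 : ∀ i, p < i → i < q → e i ∉ X) (hc : ∃ c, q < c ∧ c ≤ n ∧ e c ∈ X)
    (hd : Dle M X (k + 1)) : Dle M (fanSet n e) k := by
  classical
  have hXf : X.Finite := (fanSet_finite n e).subset hX
  obtain ⟨hqc, hcn, hcX⟩ := Nat.find_spec hc
  have hmin : ∀ i, q < i → i < Nat.find hc → e i ∉ X := by
    intro i hi hi' hi''
    exact Nat.find_min hc hi' ⟨hi, by omega, hi''⟩
  generalize Nat.find hc = c at hqc hcn hcX hmin
  have hIcc : ∀ x y, 1 ≤ x → y ≤ n → e '' Icc x y ⊆ fanSet n e := by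
    rintro x y hx hy _ ⟨l, ⟨hl, hl'⟩, rfl⟩
    exact mem_fanSet (by omega) (by omega)
  rcases Nat.eq_or_lt_of_le (Nat.succ_le_of_lt hqc) with rfl | hqc'
  · have h4 := grow_join (fan_rev h) hXf (p := n - q) (c := n + 1 - p) (k := k)
      (by omega) (by omega) (by omega)
      (by simpa [show n + 1 - (n - q) = q + 1 by omega] using hcX)
      (by simpa [show n - (n - q) = q by omega] using h2)
      (by simpa [show n + 1 - (n + 1 - p) = p by omega] using h1)
      (by
        have := h3 (p + 1) (by omega) (by omega)
        simpa [show n + 1 - (n + 1 - p - 1) = p + 1 by omega] using this) hd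
    rw [rev_image e (by omega) (by omega)] at h4
    have h5 := grow h (hXf.union (fin_img e _ _)) (i := q) (by omega) (by omega)
      (Or.inl h2) (Or.inl hcX) h4
    rwa [Set.union_eq_self_of_subset_left] at h5
    exact Set.union_subset hX (hIcc _ _ (by omega) (by omega))
  · obtain ⟨Y, hXY, hYX, hqY, hdY⟩ := fill_gap h hXf hp hpq hq h1 h2 h3 hd
    have hYf : Y.Finite := (hXf.union (fin_img e p q)).subset hYX
    have h4 := grow_join h hYf (p := q - 1) (c := c) (k := k) (by omega) (by omega) hcn hqY
      (by rw [show q - 1 + 1 = q by omega]; exact hXY h2) (hXY hcX) (by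
        intro h'
        rcases hYX h' with h' | ⟨l, ⟨hl, hl'⟩, hl''⟩
        · exact hmin _ (by omega) (by omega) h'
        · have := fan_inj h (by omega) (by omega) (by omega) (by omega) hl''
          omega) hdY
    have h5 := grow h (hYf.union (fin_img e _ _)) (i := q - 1) (by omega) (by omega)
      (Or.inl hqY) (Or.inl (by rw [show q - 1 + 1 = q by omega]; exact hXY h2)) h4
    rwa [Set.union_eq_self_of_subset_left] at h5
    refine Set.union_subset (hYX.trans (Set.union_subset hX (hIcc _ _ ?_ ?_)))
      (hIcc _ _ ?_ ?_) <;> omega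

lemma gap_left (h : IsFanFun M b n e) {X : Set α} (hX : X ⊆ fanSet n e) {p q k : ℕ}
    (hpq : p + 2 ≤ q) (hq : q ≤ n) (h1 : e p ∈ X) (h2 : e q ∈ X)
    (h3 : ∀ i, p < i → i < q → e i ∉ X) (hc : ∃ c, c < p ∧ 1 ≤ c ∧ e c ∈ X)
    (hd : Dle M X (k + 1)) : Dle M (fanSet n e) k := by
  obtain ⟨c, hcp, hc1, hcX⟩ := hc
  have := gap_right (fan_rev h) (X := X) (by rwa [fanSet_rev]) (p := n + 1 - q) (q := n + 1 - p)
    (k := k) (by omega) (by omega) (by omega)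
    (by simpa [show n + 1 - (n + 1 - q) = q by omega] using h2)
    (by simpa [show n + 1 - (n + 1 - p) = p by omega] using h1)
    (fun i hi hi' ↦ h3 _ (by omega) (by omega))
    ⟨n + 1 - c, by omega, by omega, by simpa [show n + 1 - (n + 1 - c) = c by omega] using hcX⟩ hd
  rwa [fanSet_rev] at this

lemma interval_of_convex (h : IsFanFun M b n e) {X : Set α} (hX : X ⊆ fanSet n e)
    (h3 : 3 ≤ X.ncard)
    (hconv : ∀ i j l, 1 ≤ i → i < j → j < l → l ≤ n → e i ∈ X → e l ∈ X → e j ∈ X) :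
    ∃ x y, 1 ≤ x ∧ x + 2 ≤ y ∧ y ≤ n ∧ X = e '' Icc x y := by
  classical
  let S : Finset ℕ := (Finset.Icc 1 n).filter (fun i ↦ e i ∈ X)
  have hS : ∀ i, i ∈ S ↔ (1 ≤ i ∧ i ≤ n) ∧ e i ∈ X := fun i ↦ by simp [S]
  have hne : S.Nonempty := by
    obtain ⟨a, ha⟩ : X.Nonempty := Set.nonempty_of_ncard_ne_zero (by omega)
    obtain ⟨i, h1, h2, rfl⟩ := hX ha
    exact ⟨i, (hS i).2 ⟨⟨h1, h2⟩, ha⟩⟩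
  have hx := (hS _).1 (S.min'_mem hne)
  have hy := (hS _).1 (S.max'_mem hne)
  have hxy := S.min'_le_max' hne
  have hXeq : X = e '' Icc (S.min' hne) (S.max' hne) := by
    ext a
    constructor
    · intro ha
      obtain ⟨i, h1, h2, rfl⟩ := hX ha
      have hi := (hS i).2 ⟨⟨h1, h2⟩, ha⟩
      exact ⟨i, ⟨S.min'_le _ hi, S.le_max' _ hi⟩, rfl⟩
    · rintro ⟨i, ⟨h1, h2⟩, rfl⟩
      rcases h1.eq_or_lt with h1 | h1
      · rw [← h1]; exact hx.2
      rcases h2.eq_or_lt with h2 | h2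
      · rw [h2]; exact hy.2
      exact hconv _ i _ hx.1.1 h1 h2 hy.1.2 hx.2 hy.2
  refine ⟨S.min' hne, S.max' hne, hx.1.1, ?_, hy.1.2, hXeq⟩
  rw [hXeq, fan_ncard_Icc h hx.1.1 hy.1.2] at h3
  omega

/-- A set of at least three elements of a fan, of connectivity at most two, consists of
consecutive elements of the fan, provided the fan itself has connectivity at least two. -/
lemma interval_of_Dle (h : IsFanFun M b n e) (hF : ¬ Dle M (fanSet n e) 1) {X : Set α}
    (hX : X ⊆ fanSet n e) (h3 : 3 ≤ X.ncard) (hd : Dle M X 2) :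
    ∃ x y, 1 ≤ x ∧ x + 2 ≤ y ∧ y ≤ n ∧ X = e '' Icc x y := by
  classical
  refine interval_of_convex h hX h3 ?_
  intro i j l hi hij hjl hl hiX hlX
  by_contra hjX
  -- the gap around `j` is delimited by the nearest members `p < j < q` of `X`
  let P : ℕ → Prop := fun p ↦ p < j ∧ 1 ≤ p ∧ e p ∈ X
  have hp := Nat.findGreatest_spec (P := P) (n := j) hij.le ⟨hij, hi, hiX⟩
  have hpm : ∀ t, Nat.findGreatest P j < t → t ≤ j → ¬ P t :=
    fun t ht ht' ↦ Nat.findGreatest_is_greatest ht ht'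
  generalize Nat.findGreatest P j = p at hp hpm
  have hQ : ∃ q, j < q ∧ q ≤ n ∧ e q ∈ X := ⟨l, hjl, hl, hlX⟩
  have hq := Nat.find_spec hQ
  have hqm : ∀ t, t < Nat.find hQ → ¬ (j < t ∧ t ≤ n ∧ e t ∈ X) := fun t ht ↦ Nat.find_min hQ ht
  generalize Nat.find hQ = q at hq hqm
  obtain ⟨hpj, hp1, hpX⟩ := hp
  obtain ⟨hjq, hqn, hqX⟩ := hq
  have hgap : ∀ t, p < t → t < q → e t ∉ X := by
    intro t ht ht' htX
    rcases lt_trichotomy t j with h' | h' | h'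
    · exact hpm t ht h'.le ⟨h', by omega, htX⟩
    · subst h'; exact hjX htX
    · exact hqm t ht' ⟨h', by omega, htX⟩
  obtain ⟨a, haX, ha⟩ : ∃ a ∈ X, a ∉ ({e p, e q} : Set α) := by
    by_contra! hcon
    have := (Set.ncard_le_ncard (t := {e p, e q}) hcon (by simp)).trans (ncard_pair_le' _ _)
    omega
  obtain ⟨c, hc1, hcn, rfl⟩ := hX haX
  have hcp : c ≠ p := by rintro rfl; exact ha (by simp)
  have hcq : c ≠ q := by rintro rfl; exact ha (by simp)
  have : c < p ∨ q < c := by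
    by_contra! hcon
    exact hgap c (by omega) (by omega) haX
  rcases this with h' | h'
  · exact hF (gap_left h hX (by omega) hqn hpX hqX hgap ⟨c, h', hc1, haX⟩ hd)
  · exact hF (gap_right h hX hp1 (by omega) hqn hpX hqX hgap ⟨c, h', hcn, haX⟩ hd)

end

/-! ### Extending a fan by one element of another fan -/

section
variable {M : Matroid α} {b : Bool} {n : ℕ} {e : ℕ → α}

/-- The extension lemma when the common element is one of the first two of the fan, and the
triple `{e i, z, v}` has the type opposite to that of `{e 1, e 2, e 3}`. -/
lemma extend_front (hG : Good M) (h : IsFanFun M b n e) (hn : 4 ≤ n) {i : ℕ} {z v : α}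
    (hi : i = 1 ∨ i = 2) (hz : z ∉ fanSet n e) (h2 : TriOrTriad M (!b) {e i, z, v}) :
    ∃ b' e', IsFanFun M b' (n + 1) e' ∧ fanSet (n + 1) e' = insert z (fanSet n e) := by
  have hzne : ∀ j, 1 ≤ j → j ≤ n → e j ≠ z := fun j h1 h2 h' ↦ hz (h' ▸ mem_fanSet h1 h2)
  have t1 : TriOrTriad M b {e 1, e 2, e 3} := h.2.2.2 1 (by omega) (by omega)
  have t2 : TriOrTriad M (!b) {e 2, e 3, e 4} := by
    have := h.2.2.2 2 (by omega) (by omega)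
    rwa [posBool_even (by omega)] at this
  have z1 := hzne 1 (by omega) (by omega)
  have z2 := hzne 2 (by omega) (by omega)
  have z3 := hzne 3 (by omega) (by omega)
  have z4 := hzne 4 (by omega) (by omega)
  have prepend : TriOrTriad M (!b) {z, e 1, e 2} →
      ∃ b' e', IsFanFun M b' (n + 1) e' ∧ fanSet (n + 1) e' = insert z (fanSet n e) :=
    fun ht ↦ ⟨_, _, fan_cons h hz ht, fanSet_cons _ _ _⟩
  rcases hi with rfl | rfl
  · have hv : v = e 2 ∨ v = e 3 := by
      have := orth t1 h2
      have := z2.symm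
      have := z3.symm
      tauto
    rcases hv with rfl | rfl
    · rw [swp12] at h2
      exact prepend h2
    · rcases Nat.lt_or_ge 4 n with h5 | h5
      · exfalso
        have t3 : TriOrTriad M b {e 3, e 4, e 5} := h.2.2.2 3 (by omega) (by omega)
        rw [rot2] at h2
        have := orth t3 h2
        have := hzne 5 (by omega) (by omega)
        have n1 := fan_ne h (i := 1) (j := 4) (by omega) (by omega) (by omega) (by omega)
          (by omega)
        have n2 := fan_ne h (i := 1) (j := 5) (by omega) (by omega) (by omega) (by omega)
          (by omega)
        have := z4.symm
        have := (hzne 5 (by omega) (by omega)).symm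
        tauto
      · -- a fan with four elements remains a fan when its middle elements are exchanged
        obtain rfl : n = 4 := by omega
        let e' : ℕ → α := fun j ↦ if j = 2 then e 3 else if j = 3 then e 2 else e j
        have hF : fanSet 4 e' = fanSet 4 e := by
          ext x
          constructor
          · rintro ⟨j, hj, hj', rfl⟩
            interval_cases j
            · exact ⟨1, by omega, by omega, rfl⟩
            · exact ⟨3, by omega, by omega, rfl⟩
            · exact ⟨2, by omega, by omega, rfl⟩
            · exact ⟨4, by omega, by omega, rfl⟩
          · rintro ⟨j, hj, hj', rfl⟩
            interval_cases j
            · exact ⟨1, by omega, by omega, rfl⟩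
            · exact ⟨3, by omega, by omega, rfl⟩
            · exact ⟨2, by omega, by omega, rfl⟩
            · exact ⟨4, by omega, by omega, rfl⟩
        have h' : IsFanFun M b 4 e' := by
          refine ⟨by omega, ?_, ?_, ?_⟩
          · intro j l hj hj' hl hl' hjl
            have h4 := fan_inj h (i := if j = 2 then 3 else if j = 3 then 2 else j)
              (j := if l = 2 then 3 else if l = 3 then 2 else l)
              (by split_ifs <;> omega) (by split_ifs <;> omega)
              (by split_ifs <;> omega) (by split_ifs <;> omega)
              (by simp only [apply_ite e]; exact hjl)
            split_ifs at h4 <;> omega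
          · intro j hj hj'
            exact fan_subset h (hF ▸ mem_fanSet hj hj')
          · intro j hj hj'
            have : j = 1 ∨ j = 2 := by omega
            rcases this with rfl | rfl
            · rw [swp23] at t1; exact t1
            · rw [swp12] at t2; exact t2
        rw [← hF] at hz
        refine ⟨_, _, fan_cons h' hz ?_, by rw [fanSet_cons, hF]⟩
        rw [swp12] at h2
        exact h2
  · rw [swp12] at t1
    have hv : v = e 1 ∨ v = e 3 := by
      have := orth t1 h2
      have := z1.symm
      have := z3.symm
      tauto
    rcases hv with rfl | rfl
    · rw [rot1] at h2
      exact prepend h2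
    · exfalso
      rw [swp23] at h2
      have := orth t1 (hG.tt_line h2 t2 z4.symm)
      have n1 := fan_ne h (i := 4) (j := 1) (by omega) (by omega) (by omega) (by omega)
        (by omega)
      have n2 := fan_ne h (i := 4) (j := 3) (by omega) (by omega) (by omega) (by omega)
        (by omega)
      have := z1.symm
      have := z3.symm
      tauto

/-- If an element `e i` of a fan with at least four elements lies in a triangle and in a triad
which share a further element `z` outside the fan, then adding `z` gives the ground set of
another fan. -/
lemma extend (hG : Good M) (h : IsFanFun M b n e) (hn : 4 ≤ n) {i : ℕ} {z v w : α} {t : Bool}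
    (hi : 1 ≤ i) (hi' : i ≤ n) (hz : z ∉ fanSet n e) (h1 : TriOrTriad M t {e i, z, v})
    (h2 : TriOrTriad M (!t) {e i, z, w}) :
    ∃ b' e', IsFanFun M b' (n + 1) e' ∧ fanSet (n + 1) e' = insert z (fanSet n e) := by
  have any : ∀ s, ∃ x, TriOrTriad M s {e i, z, x} := by
    intro s
    by_cases hs : s = t
    · exact ⟨v, hs ▸ h1⟩
    · have : s = !t := by cases s <;> cases t <;> simp_all
      exact ⟨w, this ▸ h2⟩
  have hzne : ∀ j, 1 ≤ j → j ≤ n → z ≠ e j := fun j h1 h2 h' ↦ hz (h' ▸ mem_fanSet h1 h2)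
  by_cases c1 : i ≤ 2
  · obtain ⟨x, hx⟩ := any (!b)
    exact extend_front hG h hn (by omega) hz hx
  by_cases c2 : n ≤ i + 1
  · obtain ⟨x, hx⟩ := any (!posBool b n)
    have := extend_front hG (fan_rev h) hn (i := n + 1 - i) (z := z) (v := x) (by omega)
      (by rwa [fanSet_rev]) (by simpa only [show n + 1 - (n + 1 - i) = i by omega] using hx)
    rwa [fanSet_rev] at this
  · exfalso
    obtain ⟨x, hx⟩ := any (!posBool b i)
    have t1 := fan_tt h (i := i) (j := i + 1) (k := i + 2) (by omega) rfl rfl (by omega)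
    have t2 := fan_tt h (i := i - 2) (j := i - 1) (k := i) (by omega) (by omega) (by omega)
      (by omega)
    rw [posBool_congr b (by omega : (i - 2) % 2 = i % 2), rot2] at t2
    have o1 := orth t1 hx
    have o2 := orth t2 hx
    have a1 := hzne (i + 1) (by omega) (by omega)
    have a2 := hzne (i + 2) (by omega) (by omega)
    have a3 := hzne (i - 1) (by omega) (by omega)
    have a4 := hzne (i - 2) (by omega) (by omega)
    have o1 : x = e (i + 1) ∨ x = e (i + 2) := by tauto
    have o2 : x = e (i - 2) ∨ x = e (i - 1) := by tauto
    rcases o1 with rfl | rfl <;> rcases o2 with o2 | o2 <;>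
    · have := fan_inj h (by omega) (by omega) (by omega) (by omega) o2
      omega

/-! ### The intersection of two fans -/

lemma inter_image (h : IsFanFun M b n e) {x y x' y' : ℕ} (hx : 1 ≤ x) (hy : y ≤ n)
    (hx' : 1 ≤ x') (hy' : y' ≤ n) :
    e '' Icc x y ∩ e '' Icc x' y' = e '' Icc (max x x') (min y y') := by
  ext a
  constructor
  · rintro ⟨⟨i, ⟨h1, h2⟩, rfl⟩, ⟨j, ⟨h3, h4⟩, h5⟩⟩
    have := fan_inj h (by omega) (by omega) (by omega) (by omega) h5
    exact ⟨i, ⟨by omega, by omega⟩, rfl⟩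
  · rintro ⟨i, ⟨h1, h2⟩, rfl⟩
    exact ⟨⟨i, ⟨by omega, by omega⟩, rfl⟩, ⟨i, ⟨by omega, by omega⟩, rfl⟩⟩

/-- The intersection of a fan with a set `H` closed under passing to neighbouring inner elements
of the fan is an interval of the fan. -/
lemma interval_of_closed (h : IsFanFun M b n e) {H : Set α}
    (hcard : 3 ≤ (H ∩ fanSet n e).ncard)
    (hup : ∀ p, 2 ≤ p → p + 2 ≤ n → e p ∈ H → e (p + 1) ∈ H)
    (hdown : ∀ p, 3 ≤ p → p + 1 ≤ n → e p ∈ H → e (p - 1) ∈ H) :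
    ∃ x y, 1 ≤ x ∧ x + 2 ≤ y ∧ y ≤ n ∧ H ∩ fanSet n e = e '' Icc x y := by
  have up : ∀ p q, 2 ≤ p → p ≤ q → q + 1 ≤ n → e p ∈ H → e q ∈ H := by
    intro p q hp hpq hq hpH
    induction q, hpq using Nat.le_induction with
    | base => exact hpH
    | succ q hpq ih => exact hup q (by omega) (by omega) (ih (by omega))
  have down : ∀ p q, 2 ≤ q → q ≤ p → p + 1 ≤ n → e p ∈ H → e q ∈ H := by
    intro p q hq hqp hp hpH
    obtain ⟨d, rfl⟩ := Nat.exists_eq_add_of_le hqp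
    induction d with
    | zero => exact hpH
    | succ d ih =>
      have := hdown _ (by omega) hp hpH
      exact ih (by omega) (by omega) this
  refine interval_of_convex h inter_subset_right hcard ?_
  intro i j l hi hij hjl hl hiX hlX
  refine ⟨?_, mem_fanSet (by omega) (by omega)⟩
  by_cases h2 : 2 ≤ i
  · exact up i j h2 hij.le (by omega) hiX.1
  by_cases h3 : l + 1 ≤ n
  · exact down l j (by omega) hjl.le h3 hlX.1
  obtain ⟨a, haX, ha⟩ : ∃ a ∈ H ∩ fanSet n e, a ∉ ({e i, e l} : Set α) := by
    by_contra! hcon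
    have := (Set.ncard_le_ncard (t := {e i, e l}) hcon (by simp)).trans (ncard_pair_le' _ _)
    omega
  obtain ⟨haH, c, hc1, hcn, rfl⟩ := haX
  have hci : c ≠ i := by rintro rfl; exact ha (by simp)
  have hcl : c ≠ l := by rintro rfl; exact ha (by simp)
  rcases le_total c j with h' | h'
  · exact up c j (by omega) h' (by omega) haH
  · exact down c j (by omega) h' (by omega) haH

end

/-- Two fans sharing at least three elements intersect in a set of connectivity at most two.
The proof enlarges one of the fans inside the union of the two as far as possible. -/
lemma inter_Dle {M : Matroid α} (hG : Good M) (hC : ¬ Cyc M) {b₁ b₂ : Bool} {m n : ℕ}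
    {f g : ℕ → α} (hf : IsFanFun M b₁ m f) (hg : IsFanFun M b₂ n g)
    (h3 : 3 ≤ (fanSet m f ∩ fanSet n g).ncard) : Dle M (fanSet m f ∩ fanSet n g) 2 := by
  have hfin : (fanSet m f ∪ fanSet n g).Finite := (fanSet_finite m f).union (fanSet_finite n g)
  let 𝓗 : Set (Set α) := {S | (fanSet m f ⊆ S ∧ S ⊆ fanSet m f ∪ fanSet n g) ∧
    ∃ b N h, IsFanFun M b N h ∧ fanSet N h = S}
  have h𝓗 : 𝓗.Finite := hfin.finite_subsets.subset fun S hS ↦ hS.1.2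
  obtain ⟨H, hH, hmax⟩ : ∃ H ∈ 𝓗, ∀ S ∈ 𝓗, H ⊆ S → S = H := by
    obtain ⟨H, hH⟩ := h𝓗.exists_maximal
      ⟨fanSet m f, ⟨subset_rfl, subset_union_left⟩, b₁, m, f, hf, rfl⟩
    exact ⟨H, hH.1, fun S hS hHS ↦ subset_antisymm (hH.2 hS hHS) hHS⟩
  obtain ⟨⟨hFH, hHU⟩, b, N, h, hh, rfl⟩ := hH
  have hHf := fanSet_finite N h
  have hNm : m ≤ N := by
    have := Set.ncard_le_ncard hFH hHf
    rwa [fan_ncard hf, fan_ncard hh] at this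
  rcases Nat.lt_or_ge N 4 with hN | hN
  · -- the fan `f` has three elements, all of which lie in `g`
    have := hh.1
    have := hf.1
    rw [Set.eq_of_subset_of_ncard_le inter_subset_left (by rw [fan_ncard hf]; omega)
      (fanSet_finite m f)]
    exact fan_Dle hf
  have hclosed : ∀ p q t v w, 1 ≤ q → q ≤ n → g p ∈ fanSet N h →
      TriOrTriad M t {g p, g q, v} → TriOrTriad M (!t) {g p, g q, w} → g q ∈ fanSet N h := by
    intro p q t v w hq hq' hp h1 h2
    by_contra hz
    obtain ⟨i, hi, hi', hip⟩ := hp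
    rw [hip] at h1 h2
    obtain ⟨b', e', he', hs⟩ := extend hG hh hN hi hi' hz h1 h2
    have := hmax (fanSet (N + 1) e') ⟨⟨?_, ?_⟩, b', N + 1, e', he', rfl⟩ ?_
    · rw [hs] at this
      exact hz (this ▸ mem_insert _ _)
    · rw [hs]; exact hFH.trans (subset_insert _ _)
    · rw [hs]; exact Set.insert_subset (Or.inr (mem_fanSet hq hq')) hHU
    · rw [hs]; exact subset_insert _ _
  have hsub : fanSet m f ∩ fanSet n g ⊆ fanSet N h ∩ fanSet n g :=
    Set.inter_subset_inter_left _ hFH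
  have hHG3 : 3 ≤ (fanSet N h ∩ fanSet n g).ncard :=
    h3.trans (Set.ncard_le_ncard hsub (hHf.subset inter_subset_left))
  obtain ⟨x, y, hx, hxy, hy, hHG⟩ := interval_of_closed hg hHG3
    (by
      intro p hp hpn hpH
      have t1 := fan_tt hg (i := p) (j := p + 1) (k := p + 2) (by omega) rfl rfl (by omega)
      have t2 := fan_tt hg (i := p - 1) (j := p) (k := p + 1) (by omega) (by omega) (by omega)
        (by omega)
      rw [show posBool b₂ p = !posBool b₂ (p - 1) by rw [← posBool_succ]; congr 1; omega] at t1
      rw [rot1] at t2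
      exact hclosed p (p + 1) _ _ _ (by omega) (by omega) hpH t2 t1)
    (by
      intro p hp hpn hpH
      have t1 := fan_tt hg (i := p - 2) (j := p - 1) (k := p) (by omega) (by omega) (by omega)
        (by omega)
      have t2 := fan_tt hg (i := p - 1) (j := p) (k := p + 1) (by omega) (by omega) (by omega)
        (by omega)
      rw [show posBool b₂ (p - 1) = !posBool b₂ (p - 2) by
        rw [← posBool_succ]; congr 1; omega, swp12] at t2
      rw [swp] at t1
      exact hclosed p (p - 1) _ _ _ (by omega) (by omega) hpH t1 t2)
  have hHd := fan_not_Dle hG hC hh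
  obtain ⟨x₁, y₁, hx₁, hxy₁, hy₁, e₁⟩ := interval_of_Dle hh hHd inter_subset_left hHG3
    (by rw [hHG]; exact fan_Dle_Icc hg hx hxy hy)
  obtain ⟨x₂, y₂, hx₂, hxy₂, hy₂, e₂⟩ := interval_of_Dle hh hHd hFH
    (by rw [fan_ncard hf]; exact hf.1) (fan_Dle hf)
  have hX : fanSet m f ∩ fanSet n g = h '' Icc (max x₂ x₁) (min y₂ y₁) := by
    rw [← inter_image hh hx₂ hy₂ hx₁ hy₁, ← e₁, ← e₂, ← Set.inter_assoc,
      Set.inter_eq_self_of_subset_left hFH]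
  rw [hX, fan_ncard_Icc hh (by omega) (by omega)] at h3
  rw [hX]
  exact fan_Dle_Icc hh (by omega) (by omega) (by omega)

/-! ### Cyclic fans are wheels or whirls -/

/-- A cyclic fan written with indices in `ZMod k`: the spokes are `s i`, the rim elements `w i`. -/
structure CycZ (M : Matroid α) (k : ℕ) (s w : ZMod k → α) : Prop where
  inj : Function.Injective (Sum.elim s w)
  ground : M.E = Set.range s ∪ Set.range w
  tri : ∀ i, IsTriangle M {s i, w i, s (i + 1)}
  triad : ∀ i, IsTriangle M✶ {w i, s (i + 1), w (i + 1)}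

lemma val_succ {k : ℕ} [NeZero k] (i : ZMod k) :
    (i.val + 1 < k ∧ (i + 1).val = i.val + 1) ∨ (i.val + 1 = k ∧ (i + 1).val = 0) := by
  have hlt := ZMod.val_lt i
  have h : ((i.val + 1 : ℕ) : ZMod k) = i + 1 := by
    rw [Nat.cast_add, ZMod.natCast_zmod_val, Nat.cast_one]
  rcases Nat.lt_or_ge (i.val + 1) k with h1 | h1
  · left
    refine ⟨h1, ?_⟩
    rw [← h, ZMod.val_natCast, Nat.mod_eq_of_lt h1]
  · right
    have h2 : i.val + 1 = k := by omega
    refine ⟨h2, ?_⟩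
    rw [← h, ZMod.val_natCast, h2, Nat.mod_self]

lemma Cyc.exists_cycZ {M : Matroid α} (h : Cyc M) : ∃ k s w, 2 ≤ k ∧ CycZ M k s w := by
  -- a cyclic fan starting with a triad becomes one starting with a triangle when reversed
  have h' : ∃ (k : ℕ) (e : ℕ → α), 2 ≤ k ∧ IsFanFun M true (2 * k) e ∧ M.E = fanSet (2 * k) e ∧
      TriOrTriad M true {e (2 * k - 1), e (2 * k), e 1} ∧
      TriOrTriad M false {e (2 * k), e 1, e 2} := by
    obtain ⟨b, k, e, hk, hf, hE, h1, h2⟩ := h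
    cases b
    · refine ⟨k, fun i ↦ e (2 * k + 1 - i), hk, ?_, by rw [fanSet_rev]; exact hE, ?_, ?_⟩
      · have := fan_rev hf
        rwa [posBool_even (by omega)] at this
      · simp only [show 2 * k + 1 - (2 * k - 1) = 2 by omega,
          show 2 * k + 1 - (2 * k) = 1 by omega, show 2 * k + 1 - 1 = 2 * k by omega]
        rw [swp]; exact h2
      · simp only [show 2 * k + 1 - 2 = 2 * k - 1 by omega,
          show 2 * k + 1 - (2 * k) = 1 by omega, show 2 * k + 1 - 1 = 2 * k by omega]
        rw [swp]; exact h1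
    · exact ⟨k, e, hk, hf, hE, h1, h2⟩
  obtain ⟨k, e, hk, hf, hE, h1, h2⟩ := h'
  have : NeZero k := ⟨by omega⟩
  refine ⟨k, fun i ↦ e (2 * i.val + 1), fun i ↦ e (2 * i.val + 2), hk, ?_, ?_, ?_, ?_⟩
  · have key : ∀ i j : ZMod k, ∀ c d : ℕ, 1 ≤ c → c ≤ 2 → 1 ≤ d → d ≤ 2 →
        e (2 * i.val + c) = e (2 * j.val + d) → i = j ∧ c = d := by
      intro i j c d hc hc' hd hd' he
      have hi := ZMod.val_lt i
      have hj := ZMod.val_lt j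
      have := fan_inj hf (by omega) (by omega) (by omega) (by omega) he
      exact ⟨ZMod.val_injective k (by omega), by omega⟩
    rintro (i | i) (j | j) hij
    · rw [(key i j 1 1 (by omega) (by omega) (by omega) (by omega) hij).1]
    · have := (key i j 1 2 (by omega) (by omega) (by omega) (by omega) hij).2
      omega
    · have := (key i j 2 1 (by omega) (by omega) (by omega) (by omega) hij).2
      omega
    · rw [(key i j 2 2 (by omega) (by omega) (by omega) (by omega) hij).1]
  · rw [hE]
    ext x
    constructor
    · rintro ⟨l, hl, hl', rfl⟩
      have hv : (((l - 1) / 2 : ℕ) : ZMod k).val = (l - 1) / 2 :=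
        ZMod.val_natCast_of_lt (by omega)
      rcases Nat.mod_two_eq_zero_or_one l with hp | hp
      · exact Or.inr ⟨((l - 1) / 2 : ℕ), by simp only [hv]; congr 1; omega⟩
      · exact Or.inl ⟨((l - 1) / 2 : ℕ), by simp only [hv]; congr 1; omega⟩
    · rintro (⟨i, rfl⟩ | ⟨i, rfl⟩)
      · exact mem_fanSet (by omega) (by have := ZMod.val_lt i; omega)
      · exact mem_fanSet (by omega) (by have := ZMod.val_lt i; omega)
  · intro i
    rcases val_succ i with ⟨hi, hi'⟩ | ⟨hi, hi'⟩
    · rw [hi']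
      have := hf.2.2.2 (2 * i.val + 1) (by omega) (by omega)
      rw [posBool_odd (by omega)] at this
      exact this
    · rw [hi', show 2 * i.val + 1 = 2 * k - 1 by omega, show 2 * i.val + 2 = 2 * k by omega]
      exact h1
  · intro i
    rcases val_succ i with ⟨hi, hi'⟩ | ⟨hi, hi'⟩
    · rw [hi']
      have := hf.2.2.2 (2 * i.val + 2) (by omega) (by omega)
      rw [posBool_even (by omega)] at this
      exact this
    · rw [hi', show 2 * i.val + 2 = 2 * k by omega]
      exact h2

section
variable {M : Matroid α} {k : ℕ} {s w : ZMod k → α}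

lemma CycZ.s_inj (h : CycZ M k s w) {i j : ZMod k} (hij : s i = s j) : i = j :=
  Sum.inl_injective (h.inj (a₁ := Sum.inl i) (a₂ := Sum.inl j) hij)

lemma CycZ.w_inj (h : CycZ M k s w) {i j : ZMod k} (hij : w i = w j) : i = j :=
  Sum.inr_injective (h.inj (a₁ := Sum.inr i) (a₂ := Sum.inr j) hij)

lemma CycZ.s_ne_w (h : CycZ M k s w) (i j : ZMod k) : s i ≠ w j := fun hij ↦ by
  have := h.inj (a₁ := Sum.inl i) (a₂ := Sum.inr j) hij
  cases this

lemma CycZ.s_mem (h : CycZ M k s w) (i : ZMod k) : s i ∈ M.E := h.ground ▸ Or.inl ⟨i, rfl⟩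
lemma CycZ.w_mem (h : CycZ M k s w) (i : ZMod k) : w i ∈ M.E := h.ground ▸ Or.inr ⟨i, rfl⟩

/-- Two spokes together with the rim elements of the arc from `i` to `j`. -/
def arcSet (s w : ZMod k → α) (i j : ZMod k) : Set α := {s i, s j} ∪ w '' cycArc k i j

lemma CycZ.s_mem_arcSet (h : CycZ M k s w) {i j l : ZMod k} (hl : s l ∈ arcSet s w i j) :
    l = i ∨ l = j := by
  rcases hl with (hl | hl) | ⟨c, -, hc⟩
  · exact Or.inl (h.s_inj hl)
  · exact Or.inr (h.s_inj hl)
  · exact absurd hc.symm (h.s_ne_w _ _)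

lemma CycZ.w_mem_arcSet (h : CycZ M k s w) {i j l : ZMod k} (hl : w l ∈ arcSet s w i j) :
    l ∈ cycArc k i j := by
  rcases hl with (hl | hl) | ⟨c, hc, hc'⟩
  · exact absurd hl.symm (h.s_ne_w _ _)
  · exact absurd hl.symm (h.s_ne_w _ _)
  · rwa [← h.w_inj hc']

lemma right_notMem_cycArc [NeZero k] (i j : ZMod k) : j ∉ cycArc k i j := by
  rintro ⟨m, hm, hj⟩
  have h1 : j - i = (m : ZMod k) := by rw [hj]; ring
  have h2 : (j - i).val = m := by
    have := ZMod.val_lt (j - i)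
    rw [h1] at hm this ⊢
    rw [ZMod.val_natCast] at hm this ⊢
    have := Nat.mod_le m k
    omega
  omega

lemma left_mem_cycArc [NeZero k] {i j : ZMod k} (hij : i ≠ j) : i ∈ cycArc k i j := by
  refine ⟨0, ?_, by simp⟩
  rw [ZMod.val_pos]
  exact sub_ne_zero.2 hij.symm

/-- Following the triangles around the rim. -/
lemma CycZ.s_mem_closure (h : CycZ M k s w) (i : ZMod k) (d : ℕ) :
    s (i + d) ∈ M.closure ({s i} ∪ {a | ∃ m : ℕ, m < d ∧ a = w (i + m)}) := by
  induction d with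
  | zero =>
    refine M.mem_closure_of_mem' (Or.inl ?_) (h.s_mem _)
    simp
  | succ d ih =>
    have h1 := tri_mem_closure (h.tri (i + d))
    rw [show i + (d : ZMod k) + 1 = i + ((d + 1 : ℕ) : ZMod k) by push_cast; ring] at h1
    refine M.closure_subset_closure_of_subset_closure ?_ h1
    rintro x (rfl | rfl)
    · refine M.closure_subset_closure (Set.union_subset_union_right _ ?_) ih
      rintro _ ⟨m, hm, rfl⟩
      exact ⟨m, by omega, rfl⟩
    · exact M.mem_closure_of_mem' (Or.inr ⟨d, by omega, rfl⟩) (h.w_mem _)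

lemma CycZ.arcSet_subset (h : CycZ M k s w) (i j : ZMod k) : arcSet s w i j ⊆ M.E := by
  rintro x ((rfl | rfl) | ⟨c, -, rfl⟩)
  · exact h.s_mem _
  · exact h.s_mem _
  · exact h.w_mem _

lemma CycZ.arcSet_dep [NeZero k] (h : CycZ M k s w) {i j : ZMod k} (hij : i ≠ j) :
    M.Dep (arcSet s w i j) := by
  have h1 := h.s_mem_closure i (j - i).val
  rw [ZMod.natCast_zmod_val, add_sub_cancel] at h1
  rw [← not_indep_iff (h.arcSet_subset i j)]
  intro hI
  refine hI.notMem_closure_sdiff_of_mem (e := s j) (by simp [arcSet])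
    (M.closure_subset_closure ?_ h1)
  rintro x (rfl | ⟨m, hm, rfl⟩)
  · exact ⟨by simp [arcSet], fun h' ↦ hij (h.s_inj h')⟩
  · exact ⟨Or.inr ⟨_, ⟨m, hm, rfl⟩, rfl⟩, fun h' ↦ h.s_ne_w _ _ h'.symm⟩

/-- Every circuit of a cyclic fan contains two spokes and an arc joining them, or contains the
rim and at most one spoke. -/
lemma CycZ.circuit_cases [NeZero k] (h : CycZ M k s w) {C : Set α} (hC : M.IsCircuit C) :
    (∃ i j, i ≠ j ∧ arcSet s w i j ⊆ C) ∨
      (Set.range w ⊆ C ∧ ∀ i j, s i ∈ C → s j ∈ C → i = j) := by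
  have o1 : ∀ i, w i ∈ C → s (i + 1) ∈ C ∨ w (i + 1) ∈ C := fun i hi ↦
    orth_circuit hC (h.triad i) hi
  have o2 : ∀ i, s (i + 1) ∈ C → w i ∈ C ∨ w (i + 1) ∈ C := fun i hi ↦
    orth_circuit hC (by rw [swp12]; exact h.triad i) hi
  have o3 : ∀ i, w (i + 1) ∈ C → s (i + 1) ∈ C ∨ w i ∈ C := fun i hi ↦
    orth_circuit hC (by rw [swp]; exact h.triad i) hi
  have hw : ∃ i, w i ∈ C := by
    obtain ⟨a, ha⟩ := hC.nonempty
    have haE := hC.subset_ground ha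
    rw [h.ground] at haE
    rcases haE with ⟨i, rfl⟩ | ⟨i, rfl⟩
    · rcases o2 (i - 1) (by rwa [sub_add_cancel]) with h' | h'
      · exact ⟨_, h'⟩
      · exact ⟨_, h'⟩
    · exact ⟨i, ha⟩
  by_cases hW : Set.range w ⊆ C
  · by_cases h2 : ∀ i j, s i ∈ C → s j ∈ C → i = j
    · exact Or.inr ⟨hW, h2⟩
    · push Not at h2
      obtain ⟨i, j, hi, hj, hij⟩ := h2
      refine Or.inl ⟨i, j, hij, ?_⟩
      rintro x ((rfl | rfl) | ⟨c, -, rfl⟩)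
      · exact hi
      · exact hj
      · exact hW ⟨c, rfl⟩
  left
  -- the forward end of a maximal run of rim elements of `C`
  obtain ⟨j, hj, hj'⟩ : ∃ j, w j ∈ C ∧ w (j + 1) ∉ C := by
    by_contra! hcon
    obtain ⟨i, hi⟩ := hw
    have all : ∀ m : ℕ, w (i + m) ∈ C := by
      intro m
      induction m with
      | zero => simpa using hi
      | succ m ih =>
        rw [show i + ((m + 1 : ℕ) : ZMod k) = i + m + 1 by push_cast; ring]
        exact hcon _ ih
    refine hW ?_
    rintro _ ⟨l, rfl⟩
    have := all (l - i).val
    rwa [ZMod.natCast_zmod_val, add_sub_cancel] at this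
  have hsj : s (j + 1) ∈ C := (o1 j hj).resolve_right hj'
  have back : ∀ m : ℕ, (∀ t < m, s (j - t) ∉ C) → w (j - m) ∈ C := by
    intro m
    induction m with
    | zero => intro _; simpa using hj
    | succ m ih =>
      intro hm
      have h1 := ih fun t ht ↦ hm t (by omega)
      have h2 := hm m (by omega)
      have e : j - (m : ZMod k) = j - ((m + 1 : ℕ) : ZMod k) + 1 := by push_cast; ring
      rw [e] at h1 h2
      exact (o3 _ h1).resolve_left h2
  have hex : ∃ m : ℕ, s (j - m) ∈ C := by
    by_contra! hcon
    have := back (j - (j + 1)).val fun t _ ↦ hcon t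
    rw [ZMod.natCast_zmod_val, sub_sub_cancel] at this
    exact hj' this
  classical
  have hm := Nat.find_spec hex
  have hmin : ∀ t, t < Nat.find hex → s (j - t) ∉ C := fun t ht ↦ Nat.find_min hex ht
  generalize Nat.find hex = m at hm hmin
  have hwm : ∀ t ≤ m, w (j - t) ∈ C := fun t ht ↦ back t fun t' ht' ↦ hmin t' (by omega)
  refine ⟨j - m, j + 1, ?_, ?_⟩
  · intro h'
    exact hj' (h' ▸ hwm m le_rfl)
  · rintro x ((rfl | rfl) | ⟨c, ⟨t, ht, rfl⟩, rfl⟩)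
    · exact hm
    · exact hsj
    · have e : j + 1 - (j - (m : ZMod k)) = ((m + 1 : ℕ) : ZMod k) := by push_cast; ring
      rw [e, ZMod.val_natCast] at ht
      have := Nat.mod_le (m + 1) k
      have := hwm (m - t) (by omega)
      rw [Nat.cast_sub (by omega)] at this
      convert this using 2
      ring

lemma CycZ.arcSet_isCircuit [NeZero k] (h : CycZ M k s w) {i j : ZMod k} (hij : i ≠ j) :
    M.IsCircuit (arcSet s w i j) := by
  obtain ⟨C, hCA, hC⟩ := (h.arcSet_dep hij).exists_isCircuit_subset
  rcases h.circuit_cases hC with ⟨i', j', hij', hA⟩ | ⟨hW, -⟩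
  · have hi := h.s_mem_arcSet (hCA (hA (by simp [arcSet] : s i' ∈ arcSet s w i' j')))
    have hj := h.s_mem_arcSet (hCA (hA (by simp [arcSet] : s j' ∈ arcSet s w i' j')))
    have hw : w i' ∈ arcSet s w i' j' := Or.inr ⟨i', left_mem_cycArc hij', rfl⟩
    have hi' := h.w_mem_arcSet (hCA (hA hw))
    have : i' ≠ j := by rintro rfl; exact right_notMem_cycArc _ _ hi'
    obtain rfl : i' = i := by tauto
    obtain rfl : j' = j := by
      rcases hj with hj | hj
      · exact absurd hj.symm hij'
      · exact hj
    rwa [← subset_antisymm hCA hA]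
  · exact absurd (h.w_mem_arcSet (hCA (hW ⟨j, rfl⟩))) (right_notMem_cycArc _ _)

/-- The rank of a cyclic fan is at most the number of its spokes. -/
lemma CycZ.r_le [NeZero k] (h : CycZ M k s w) {X : Set α} (hX : X ⊆ M.E) : r M X ≤ k := by
  have hk : 0 < k := Nat.pos_of_ne_zero (NeZero.ne k)
  let B : Set α := {s 0} ∪ {a | ∃ m : ℕ, m < k - 1 ∧ a = w (0 + m)}
  have hs : ∀ i, s i ∈ M.closure B := by
    intro i
    have h1 := h.s_mem_closure 0 i.val
    rw [ZMod.natCast_zmod_val, zero_add] at h1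
    refine M.closure_subset_closure (Set.union_subset_union_right _ ?_) h1
    rintro _ ⟨m, hm, rfl⟩
    exact ⟨m, by have := ZMod.val_lt i; omega, rfl⟩
  have hE : M.E ⊆ M.closure B := by
    rw [h.ground]
    rintro _ (⟨i, rfl⟩ | ⟨i, rfl⟩)
    · exact hs i
    · have h1 := h.tri i
      rw [swp23] at h1
      refine M.closure_subset_closure_of_subset_closure ?_ (tri_mem_closure h1)
      rintro x (rfl | rfl)
      · exact hs _
      · exact hs _
  have hBi : {a | ∃ m : ℕ, m < k - 1 ∧ a = w (0 + m)} =
      (fun m : ℕ ↦ w (0 + m)) '' (Finset.range (k - 1) : Set ℕ) := by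
    ext a
    simp only [Set.mem_image, Finset.coe_range, Set.mem_Iio, Set.mem_ofPred_eq]
    exact ⟨fun ⟨m, hm, h⟩ ↦ ⟨m, hm, h.symm⟩, fun ⟨m, hm, h⟩ ↦ ⟨m, hm, h.symm⟩⟩
  have hBf : B.Finite := by
    refine (Set.finite_singleton _).union ?_
    rw [hBi]
    exact (Finset.finite_toSet _).image _
  have hBc : B.ncard ≤ k := by
    have h1 := Set.ncard_union_le {s 0} {a | ∃ m : ℕ, m < k - 1 ∧ a = w (0 + m)}
    have h2 := Set.ncard_image_le (f := fun m : ℕ ↦ w (0 + m))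
      (Finset.finite_toSet (Finset.range (k - 1)))
    rw [← hBi, Set.ncard_coe_finset, Finset.card_range] at h2
    rw [Set.ncard_singleton] at h1
    exact h1.trans (by omega)
  have h1 : M.eRk X ≤ M.eRk B := (M.eRk_mono (hX.trans hE)).trans_eq (M.eRk_closure_eq B)
  have h2 := h1.trans (M.eRk_le_encard B)
  rw [← hBf.cast_ncard_eq] at h2
  have h3 : M.eRk X ≤ (k : ℕ∞) := h2.trans (by exact_mod_cast hBc)
  unfold r
  exact ENat.toNat_le_of_le_natCast h3

lemma CycZ.wheel_or_whirl (hk : 2 ≤ k) (h : CycZ M k s w) : IsWheel M ∨ IsWhirl M := by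
  have : NeZero k := ⟨by omega⟩
  have hWE : Set.range w ⊆ M.E := h.ground ▸ subset_union_right
  by_cases hW : M.Dep (Set.range w)
  · left
    have hWC : M.IsCircuit (Set.range w) := by
      obtain ⟨C, hCW, hC⟩ := hW.exists_isCircuit_subset
      rcases h.circuit_cases hC with ⟨i, j, hij, hA⟩ | ⟨hWC, -⟩
      · obtain ⟨l, hl⟩ := hCW (hA (by simp [arcSet] : s i ∈ arcSet s w i j))
        exact absurd hl.symm (h.s_ne_w _ _)
      · rwa [← subset_antisymm hCW hWC]
    refine ⟨k, hk, s, w, h.inj, h.ground, fun C ↦ ?_⟩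
    rw [isCircuit_iff']
    constructor
    · intro hC
      rcases h.circuit_cases hC with ⟨i, j, hij, hA⟩ | ⟨hWC', -⟩
      · exact Or.inr ⟨i, j, hij, ((h.arcSet_isCircuit hij).eq_of_subset_isCircuit hC hA).symm⟩
      · exact Or.inl (hWC.eq_of_subset_isCircuit hC hWC').symm
    · rintro (rfl | ⟨i, j, hij, rfl⟩)
      · exact hWC
      · exact h.arcSet_isCircuit hij
  · right
    have hWI : M.Indep (Set.range w) := (not_dep_iff hWE).1 hW
    have hcase : ∀ {C : Set α}, M.IsCircuit C → (∀ i j, s i ∈ C → s j ∈ C → i = j) →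
        Set.range w ⊆ C → ∃ i, C = insert (s i) (Set.range w) := by
      intro C hC h1 h2
      obtain ⟨a, haC, haW⟩ : ∃ a ∈ C, a ∉ Set.range w := by
        by_contra! hcon
        exact hC.not_indep (hWI.subset hcon)
      have haE := hC.subset_ground haC
      rw [h.ground] at haE
      obtain ⟨i, rfl⟩ := haE.resolve_right haW
      refine ⟨i, subset_antisymm ?_ (Set.insert_subset haC h2)⟩
      intro x hx
      have hxE := hC.subset_ground hx
      rw [h.ground] at hxE
      rcases hxE with ⟨j, rfl⟩ | hxw
      · rw [h1 j i hx haC]; exact mem_insert _ _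
      · exact Or.inr hxw
    refine ⟨k, hk, s, w, h.inj, h.ground, fun C ↦ ?_⟩
    rw [isCircuit_iff']
    constructor
    · intro hC
      rcases h.circuit_cases hC with ⟨i, j, hij, hA⟩ | ⟨hWC', h1⟩
      · exact Or.inr ⟨i, j, hij, ((h.arcSet_isCircuit hij).eq_of_subset_isCircuit hC hA).symm⟩
      · exact Or.inl (hcase hC h1 hWC')
    · rintro (⟨i, rfl⟩ | ⟨i, j, hij, rfl⟩)
      · have hsub : insert (s i) (Set.range w) ⊆ M.E := Set.insert_subset (h.s_mem i) hWE
        have hfin : (Set.range w).Finite := Set.finite_range w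
        have hnot : s i ∉ Set.range w := fun ⟨l, hl⟩ ↦ h.s_ne_w _ _ hl.symm
        have hdep : M.Dep (insert (s i) (Set.range w)) := by
          rw [← not_indep_iff hsub, indep_iff_r _ (hfin.insert _),
            Set.ncard_insert_of_notMem hnot hfin]
          have h1 := h.r_le hsub
          have h2 : (Set.range w).ncard = k := by
            rw [← Set.image_univ, Set.ncard_image_of_injective _ (fun a b hab ↦ h.w_inj hab),
              Set.ncard_univ, Nat.card_zmod]
          omega
        obtain ⟨C, hCW, hC⟩ := hdep.exists_isCircuit_subset
        have hone : ∀ j, s j ∈ C → j = i := by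
          intro j hj
          rcases hCW hj with hj' | ⟨l, hl⟩
          · exact h.s_inj hj'
          · exact absurd hl.symm (h.s_ne_w _ _)
        rcases h.circuit_cases hC with ⟨i', j', hij, hA⟩ | ⟨hWC, h1⟩
        · have e1 := hone i' (hA (by simp [arcSet]))
          have e2 := hone j' (hA (by simp [arcSet]))
          exact absurd (e1.trans e2.symm) hij
        · obtain ⟨j, rfl⟩ := hcase hC h1 hWC
          have e1 := hone j (mem_insert _ _)
          rwa [e1] at hC
      · exact h.arcSet_isCircuit hij

end

lemma Cyc.wheel_or_whirl {M : Matroid α} (h : Cyc M) : IsWheel M ∨ IsWhirl M := by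
  obtain ⟨k, s, w, hk, h⟩ := h.exists_cycZ
  exact h.wheel_or_whirl hk

end FanProof

open FanProof

/-- Two fans of a 3-connected matroid (with at least four elements, and neither a wheel
nor a whirl) sharing at least three elements intersect in sets of consecutive elements
of each fan. -/
theorem statement15 (M : Matroid α) (hM3 : ThreeConn M) (hcard : 4 ≤ M.E.encard)
    (hW : ¬ IsWheel M) (hWh : ¬ IsWhirl M)
    (b₁ b₂ : Bool) (m n : ℕ) (f g : ℕ → α)
    (hfanf : IsFanFun M b₁ m f) (hfang : IsFanFun M b₂ n g)
    (hbig : 3 ≤ (fanSet m f ∩ fanSet n g).encard) :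
    ∃ x y x' y', 1 ≤ x ∧ x < y ∧ y ≤ m ∧ 1 ≤ x' ∧ x' < y' ∧ y' ≤ n ∧
      fanSet m f ∩ fanSet n g = f '' Set.Icc x y ∧
      fanSet m f ∩ fanSet n g = g '' Set.Icc x' y' := by
  have hG : Good M := good_of_threeConn hM3 hcard
  have hC : ¬ Cyc M := fun h ↦ h.wheel_or_whirl.elim hW hWh
  have h3 : 3 ≤ (fanSet m f ∩ fanSet n g).ncard := by
    rw [← ((fanSet_finite m f).subset inter_subset_left).cast_ncard_eq] at hbig
    exact_mod_cast hbig
  have hd := inter_Dle hG hC hfanf hfang h3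
  obtain ⟨x, y, hx, hxy, hy, hX⟩ :=
    interval_of_Dle hfanf (fan_not_Dle hG hC hfanf) inter_subset_left h3 hd
  obtain ⟨x', y', hx', hxy', hy', hX'⟩ :=
    interval_of_Dle hfang (fan_not_Dle hG hC hfang) inter_subset_right h3 hd
  exact ⟨x, y, x', y', hx, by omega, hy, hx', by omega, hy', hX, hX'⟩
end
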